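/- Topological Helly theorem in the plane: let S₀, S₁, ..., S_m (m ≥ 2) be finitely many simply connected compact subsets of the plane ℝ² such that the intersection of every three of them is nonempty and the intersection of every two of them is simply connected. Then the total intersection S₀ ∩ S₁ ∩ ... ∩ S_m is nonempty and simply connected. -/

import Mathlib

open Set Filter Topology Metric

namespace THelly

/-- Two logarithms of the same function on a preconnected set which agree at one point agree. -/
lemma log_unique {α : Type*} [TopologicalSpace α] {S : Set α} (hS : IsPreconnected S)
    {f g : α → ℂ} (hf : ContinuousOn f S)
    (hg : ContinuousOn g S) (hfg : ∀ x ∈ S, Complex.exp (f x) = Complex.exp (g x))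
    {x y : α} (hx : x ∈ S) (hy : y ∈ S) (hxy : f x = g x) : f y = g y := by
  have key := hS.induction₂ (fun a b => f a - g a = f b - g b) ?_ ?_ ?_ hx hy
  · have : f y - g y = 0 := by rw [← key, hxy, sub_self]
    exact sub_eq_zero.1 this
  · intro a ha
    have hc : ContinuousWithinAt (fun b => f b - g b) S a := (hf.sub hg) a ha
    have h1 : ∀ᶠ b in 𝓝[S] a, dist (f b - g b) (f a - g a) < 2 * Real.pi :=
      (Metric.tendsto_nhds.1 hc) _ (by positivity)
    filter_upwards [h1, self_mem_nhdsWithin] with b hb hbS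
    have e1 := hfg a ha
    have e2 := hfg b hbS
    rw [Complex.exp_eq_exp_iff_exists_int] at e1 e2
    obtain ⟨n, hn⟩ := e1
    obtain ⟨m, hm⟩ := e2
    have h2 : dist (f b - g b) (f a - g a) = |((m - n : ℤ) : ℝ)| * (2 * Real.pi) := by
      rw [dist_eq_norm, hn, hm]
      have : g b + m * (2 * Real.pi * Complex.I) - g b - (g a + n * (2 * Real.pi * Complex.I) - g a)
          = ((m - n : ℤ) : ℂ) * ((2 * Real.pi : ℝ) * Complex.I) := by push_cast; ring
      rw [this, norm_mul, Complex.norm_intCast, norm_mul, Complex.norm_I, Complex.norm_real,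
        mul_one, Real.norm_of_nonneg (by positivity)]
    rw [h2] at hb
    have h3 : |((m - n : ℤ) : ℝ)| < 1 := by
      by_contra h
      push Not at h
      nlinarith [Real.pi_pos]
    have h4 : m - n = 0 := by
      have : |m - n| < 1 := by exact_mod_cast h3
      exact Int.abs_lt_one_iff.1 this
    have h5 : m = n := by omega
    rw [hn, hm, h5]; ring
  · intro a b c _ _ _ h1 h2; exact h1.trans h2
  · intro a b _ _ h; exact h.symm

/-- Nonvanishing continuous functions on nice spaces have logarithms. -/
lemma exists_log {A : Type*} [TopologicalSpace A] [SimplyConnectedSpace A]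
    [LocallyPathConnectedSpace A] (f : A → ℂ) (hf : Continuous f) (h0 : ∀ a, f a ≠ 0) (a₀ : A)
    (e₀ : ℂ) (he : Complex.exp e₀ = f a₀) :
    ∃ g : A → ℂ, Continuous g ∧ (∀ a, Complex.exp (g a) = f a) ∧ g a₀ = e₀ := by
  obtain ⟨F, ⟨hF1, hF2⟩, -⟩ :=
    Complex.isCoveringMapOn_exp.existsUnique_continuousMap_lifts ⟨f, hf⟩ (a₀ := a₀) (e₀ := e₀) he
      (fun a => h0 a)
  exact ⟨F, F.continuous, fun a => congrFun hF2 a, hF1⟩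

lemma exists_log' {A : Type*} [TopologicalSpace A] [SimplyConnectedSpace A]
    [LocallyPathConnectedSpace A] (f : A → ℂ) (hf : Continuous f) (h0 : ∀ a, f a ≠ 0) :
    ∃ g : A → ℂ, Continuous g ∧ (∀ a, Complex.exp (g a) = f a) := by
  obtain ⟨a₀⟩ : Nonempty A := inferInstance
  obtain ⟨g, h1, h2, -⟩ := exists_log f hf h0 a₀ (Complex.log (f a₀)) (Complex.exp_log (h0 a₀))
  exact ⟨g, h1, h2⟩

lemma exterior_preconnected {R : ℝ} (hR : 0 ≤ R) : IsPreconnected {z : ℂ | R < ‖z‖} := by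
  have : {z : ℂ | R < ‖z‖} =
      (fun p : ℝ × ℝ => (p.1 : ℂ) * Complex.exp (p.2 * Complex.I)) '' (Ioi R ×ˢ univ) := by
    ext z
    constructor
    · intro hz
      refine ⟨(‖z‖, z.arg), ⟨hz, mem_univ _⟩, Complex.norm_mul_exp_arg_mul_I z⟩
    · rintro ⟨⟨r, θ⟩, ⟨hr, -⟩, rfl⟩
      have hr : R < r := hr
      simp only [mem_ofPred_eq, norm_mul, Complex.norm_real, Complex.norm_exp_ofReal_mul_I, mul_one]
      exact lt_of_lt_of_le hr (le_abs_self r)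
  rw [this]
  apply IsPreconnected.image
  · exact (isPreconnected_Ioi).prod isPreconnected_univ
  · fun_prop

/-- There is no nonvanishing continuous function on the plane of degree one at infinity. -/
lemma no_degree_one {F M : ℂ → ℂ} {a : ℂ} {R : ℝ} (hF : Continuous F) (h0 : ∀ z, F z ≠ 0)
    (hM : ContinuousOn M {z | R < ‖z‖}) (h : ∀ z, R < ‖z‖ → F z = (z - a) * Complex.exp (M z)) :
    False := by
  obtain ⟨g, hg, hgF⟩ := exists_log' F hF h0
  set r : ℝ := |R| + ‖a‖ + 1 with hr
  have hr0 : 0 < r := by positivity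
  have hc : ∀ t : ℝ, R < ‖a + r * Complex.exp (t * Complex.I)‖ := by
    intro t
    have h1 : ‖(r : ℂ) * Complex.exp (t * Complex.I)‖ = r := by
      simp [Complex.norm_exp_ofReal_mul_I, abs_of_pos hr0]
    have h2 := norm_sub_le (a + r * Complex.exp (t * Complex.I)) a
    rw [add_sub_cancel_left, h1] at h2
    have := le_abs_self R
    linarith
  have e := log_unique (isPreconnected_univ (α := ℝ))
    (f := fun t : ℝ => g (a + r * Complex.exp (t * Complex.I)) - M (a + r * Complex.exp (t * Complex.I)) - t * Complex.I)
    (g := fun _ => g (a + r) - M (a + r)) ?_ continuousOn_const ?_ (mem_univ 0)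
      (mem_univ (2 * Real.pi)) (by simp)
  · simp only [Complex.ofReal_mul, Complex.ofReal_ofNat, Complex.exp_two_pi_mul_I, mul_one] at e
    have h3 : (2 * Real.pi * Complex.I : ℂ) = 0 := by linear_combination -e
    simp [Real.pi_ne_zero] at h3
  · apply ContinuousOn.sub _ (by fun_prop)
    apply ContinuousOn.sub (by fun_prop)
    exact hM.comp (by fun_prop) (fun t _ => hc t)
  · intro t _
    have key : ∀ t : ℝ, Complex.exp (g (a + r * Complex.exp (t * Complex.I)) -
        M (a + r * Complex.exp (t * Complex.I)) - t * Complex.I) = r := by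
      intro t
      rw [Complex.exp_sub, Complex.exp_sub, hgF, h _ (hc t)]
      field_simp [Complex.exp_ne_zero]
      ring
    rw [key t]
    have := key 0
    simp at this
    rw [this]

/-! ### Filling a compact set -/

/-- The union of `P` and the bounded components of its complement. -/
def fill (P : Set ℂ) : Set ℂ := {z | Bornology.IsBounded (connectedComponentIn Pᶜ z)}

/-- Compact sets with connected complement. -/
structure NS (K : Set ℂ) : Prop where
  cpt : IsCompact K
  conn : IsPreconnected Kᶜ

lemma subset_fill (P : Set ℂ) : P ⊆ fill P := by
  intro z hz
  have : connectedComponentIn Pᶜ z = ∅ := connectedComponentIn_eq_empty (by simpa using hz)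
  simp [fill, this]

lemma not_mem_fill_of {P C : Set ℂ} {z : ℂ} (hC : IsPreconnected C) (hz : z ∈ C) (hCP : C ⊆ Pᶜ)
    (hb : ¬ Bornology.IsBounded C) : z ∉ fill P := fun h =>
  hb (Bornology.IsBounded.subset h (hC.subset_connectedComponentIn hz hCP))

lemma exterior_unbounded (R : ℝ) : ¬ Bornology.IsBounded {z : ℂ | R < ‖z‖} := by
  intro h
  obtain ⟨C, hC⟩ := h.exists_norm_le
  have := hC ((|R| + |C| + 1 : ℝ) : ℂ) (by
    simp only [mem_ofPred_eq, Complex.norm_real]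
    rw [Real.norm_of_nonneg (by positivity)]
    have := le_abs_self R; have := abs_nonneg C; linarith)
  rw [Complex.norm_real, Real.norm_of_nonneg (by positivity)] at this
  have := le_abs_self C; have := abs_nonneg R; linarith

lemma NS.compl_unbounded {K : Set ℂ} (hK : IsCompact K) : ¬ Bornology.IsBounded Kᶜ := by
  obtain ⟨R, hR⟩ := hK.isBounded.exists_norm_le
  intro h
  refine exterior_unbounded R (h.subset ?_)
  intro z hz hzK
  exact absurd (hR z hzK) (not_le.2 hz)

lemma fill_subset_of_NS {P K : Set ℂ} (hK : NS K) (h : P ⊆ K) : fill P ⊆ K := by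
  intro z hz
  by_contra hzK
  exact not_mem_fill_of hK.conn hzK (compl_subset_compl.2 h) (NS.compl_unbounded hK.cpt) hz

lemma fill_subset_ball {P : Set ℂ} {c : ℂ} {r : ℝ} (h : P ⊆ closedBall c r) :
    fill P ⊆ closedBall c r := by
  intro z hz
  by_contra hzK
  rw [mem_closedBall, not_le, dist_eq_norm] at hzK
  rcases lt_or_ge r 0 with hr | hr
  · have hP : P = ∅ := by
      rw [closedBall_eq_empty.2 hr] at h; exact subset_empty_iff.1 h
    refine not_mem_fill_of (C := univ) isPreconnected_univ (mem_univ z) (by simp [hP]) ?_ hz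
    intro h
    exact exterior_unbounded 0 (h.subset (subset_univ _))
  have h0 : 0 < ‖z - c‖ := hr.trans_lt hzK
  refine not_mem_fill_of (C := (fun t : ℝ => c + t * (z - c)) '' Ici 1) ?_ ?_ ?_ ?_ hz
  · exact isPreconnected_Ici.image _ (by fun_prop)
  · exact ⟨1, by simp, by simp⟩
  · rintro _ ⟨t, ht, rfl⟩ hP
    have := h hP
    have ht : 1 ≤ t := ht
    rw [mem_closedBall, dist_eq_norm, add_sub_cancel_left, norm_mul, Complex.norm_real,
      Real.norm_of_nonneg (by linarith)] at this
    nlinarith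
  · intro hb
    obtain ⟨C, hC⟩ := hb.exists_norm_le
    set t : ℝ := 1 + (|C| + ‖c‖ + 1) / ‖z - c‖ with ht
    have ht1 : 1 ≤ t := by rw [ht]; have : 0 ≤ (|C| + ‖c‖ + 1) / ‖z - c‖ := by positivity
                           linarith
    have h1 := hC _ ⟨t, ht1, rfl⟩
    have h2 : ‖(t : ℂ) * (z - c)‖ = ‖z - c‖ + (|C| + ‖c‖ + 1) := by
      rw [norm_mul, Complex.norm_real, Real.norm_of_nonneg (by linarith), ht]
      field_simp
    have h3 := norm_sub_le (c + t * (z - c)) c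
    rw [add_sub_cancel_left, h2] at h3
    simp only at h1
    have := le_abs_self C
    linarith

lemma compl_fill_open {P : Set ℂ} (hP : IsClosed P) : IsOpen (fill P)ᶜ := by
  rw [isOpen_iff_mem_nhds]
  intro z hz
  have hzP : z ∈ Pᶜ := fun h => hz (subset_fill P h)
  have ho : IsOpen (connectedComponentIn Pᶜ z) := hP.isOpen_compl.connectedComponentIn
  filter_upwards [ho.mem_nhds (mem_connectedComponentIn hzP)] with w hw
  intro hw'
  apply hz
  have : connectedComponentIn Pᶜ z = connectedComponentIn Pᶜ w := connectedComponentIn_eq hw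
  rw [fill, mem_ofPred_eq] at hw' ⊢
  rwa [this]

lemma fill_diff_open {P : Set ℂ} (hP : IsClosed P) : IsOpen (fill P \ P) := by
  rw [isOpen_iff_mem_nhds]
  intro z hz
  have hzP : z ∈ Pᶜ := hz.2
  have ho : IsOpen (connectedComponentIn Pᶜ z) := hP.isOpen_compl.connectedComponentIn
  filter_upwards [ho.mem_nhds (mem_connectedComponentIn hzP)] with w hw
  refine ⟨?_, connectedComponentIn_subset _ _ hw⟩
  have : connectedComponentIn Pᶜ z = connectedComponentIn Pᶜ w := connectedComponentIn_eq hw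
  have h := hz.1
  rw [fill, mem_ofPred_eq] at h ⊢
  rwa [← this]

lemma exterior_subset_compl_fill {P : Set ℂ} {R : ℝ} (hR : P ⊆ closedBall 0 R) :
    {z : ℂ | R < ‖z‖} ⊆ (fill P)ᶜ := by
  intro z hz h
  have := fill_subset_ball hR h
  rw [mem_closedBall, dist_zero_right] at this
  exact absurd this (not_le.2 hz)

lemma fill_NS {P : Set ℂ} (hP : IsCompact P) : NS (fill P) := by
  obtain ⟨R₀, hR₀⟩ := hP.isBounded.exists_norm_le
  obtain ⟨R, hR0, hR⟩ : ∃ R : ℝ, 0 ≤ R ∧ P ⊆ closedBall 0 R :=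
    ⟨max R₀ 0, le_max_right _ _, fun z hz => by
      rw [mem_closedBall, dist_zero_right]; exact (hR₀ z hz).trans (le_max_left _ _)⟩
  constructor
  · apply Metric.isCompact_of_isClosed_isBounded
    · exact ⟨compl_fill_open hP.isClosed⟩
    · exact isBounded_closedBall.subset (fill_subset_ball hR)
  · apply isPreconnected_of_forall_pair
    have aux : ∀ z ∈ (fill P)ᶜ, connectedComponentIn Pᶜ z ⊆ (fill P)ᶜ ∧
        {z : ℂ | R < ‖z‖} ⊆ connectedComponentIn Pᶜ z := by
      intro z hz
      constructor
      · intro w hw hw'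
        apply hz
        have : connectedComponentIn Pᶜ z = connectedComponentIn Pᶜ w := connectedComponentIn_eq hw
        rw [fill, mem_ofPred_eq] at hw' ⊢
        rwa [this]
      · have : ∃ w ∈ connectedComponentIn Pᶜ z, R < ‖w‖ := by
          by_contra hcon
          push Not at hcon
          apply hz
          rw [fill, mem_ofPred_eq]
          exact isBounded_closedBall.subset (fun w hw => by
            rw [mem_closedBall, dist_zero_right]; exact hcon w hw : _ ⊆ closedBall (0:ℂ) R)
        obtain ⟨w, hw, hwR⟩ := this
        rw [connectedComponentIn_eq hw]
        exact (exterior_preconnected hR0).subset_connectedComponentIn hwR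
          (fun v hv hvP => (exterior_subset_compl_fill hR hv) (subset_fill P hvP))
    intro x hx y hy
    obtain ⟨h1, h2⟩ := aux x hx
    obtain ⟨h3, h4⟩ := aux y hy
    refine ⟨connectedComponentIn Pᶜ x ∪ connectedComponentIn Pᶜ y, union_subset h1 h3,
      Or.inl (mem_connectedComponentIn fun h => hx (subset_fill P h)),
      Or.inr (mem_connectedComponentIn fun h => hy (subset_fill P h)), ?_⟩
    have hne : (((R + 1 : ℝ)) : ℂ) ∈ {z : ℂ | R < ‖z‖} := by
      simp only [mem_ofPred_eq, Complex.norm_real]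
      rw [Real.norm_of_nonneg (by linarith)]; linarith
    exact isPreconnected_connectedComponentIn.union _ (h2 hne) (h4 hne)
      isPreconnected_connectedComponentIn

/-- If `w - z` has a continuous logarithm on the compact set `P` then `z` is not in the filling. -/
lemma not_mem_fill_of_log {P : Set ℂ} (hP : IsCompact P) {z : ℂ} {l : ℂ → ℂ}
    (hl : ContinuousOn l P) (h : ∀ w ∈ P, Complex.exp (l w) = w - z) : z ∉ fill P := by
  intro hz
  have hzP : z ∉ P := by
    intro hzP
    have := h z hzP
    rw [sub_self] at this
    exact Complex.exp_ne_zero _ this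
  obtain ⟨g, hg⟩ := ContinuousMap.exists_restrict_eq hP.isClosed ⟨P.domRestrict l, hl.domRestrict⟩
  have hg' : ∀ w ∈ P, g w = l w := fun w hw => congrArg (fun f => f ⟨w, hw⟩) hg
  classical
  set B := connectedComponentIn Pᶜ z with hB
  have hBo : IsOpen B := hP.isClosed.isOpen_compl.connectedComponentIn
  have hfr : frontier B ⊆ P := by
    intro w hw
    by_contra hwP
    have ho : IsOpen (connectedComponentIn Pᶜ w) := hP.isClosed.isOpen_compl.connectedComponentIn
    have hw1 : w ∈ closure B := frontier_subset_closure hw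
    obtain ⟨v, hv1, hv2⟩ := mem_closure_iff.1 hw1 _ ho (mem_connectedComponentIn hwP)
    have e1 := connectedComponentIn_eq hv1
    have e2 : B = _ := connectedComponentIn_eq hv2
    have : w ∈ B := by rw [e2, ← e1]; exact mem_connectedComponentIn hwP
    rw [hBo.frontier_eq] at hw
    exact hw.2 this
  have hzB : z ∈ B := mem_connectedComponentIn hzP
  have hz' : Bornology.IsBounded B := by rw [fill, mem_ofPred_eq] at hz; exact hz
  obtain ⟨R, hR⟩ := hz'.exists_norm_le
  refine no_degree_one (F := fun w => if w ∈ B then Complex.exp (g w) else w - z) (M := fun _ => 0)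
    (a := z) (R := R) ?_ ?_ continuousOn_const ?_
  · apply Continuous.if
    · intro w hw
      have := hfr hw
      rw [hg' w this, h w this]
    · fun_prop
    · fun_prop
  · intro w
    split_ifs with hw
    · exact Complex.exp_ne_zero _
    · intro h0
      rw [sub_eq_zero.1 h0] at hw
      exact hw hzB
  · intro w hw
    rw [if_neg (fun hwB => absurd (hR w hwB) (not_le.2 hw))]
    simp

end THelly


open Set Filter Topology Metric

namespace THelly

lemma continuousOn_image_of_comp {α : Type*} [TopologicalSpace α] {s : Set α} (hs : IsCompact s)
    {γ : α → ℂ} {l : ℂ → ℂ} (hγ : ContinuousOn γ s)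
    (h : ContinuousOn (fun t => l (γ t)) s) : ContinuousOn l (γ '' s) := by
  rw [continuousOn_iff_isClosed]
  intro t ht
  refine ⟨γ '' (s ∩ (fun x => l (γ x)) ⁻¹' t), ?_, ?_⟩
  · rw [continuousOn_iff_isClosed] at h
    obtain ⟨u, hu, hu2⟩ := h t ht
    have : s ∩ (fun x => l (γ x)) ⁻¹' t = s ∩ u := by
      rw [inter_comm, hu2, inter_comm]
    rw [this]
    exact ((hs.inter_right hu).image_of_continuousOn (hγ.mono inter_subset_left)).isClosed
  · ext w
    constructor
    · rintro ⟨h1, x, hx, rfl⟩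
      exact ⟨⟨x, ⟨hx, h1⟩, rfl⟩, ⟨x, hx, rfl⟩⟩
    · rintro ⟨⟨x, ⟨hx, hx2⟩, rfl⟩, h2⟩
      exact ⟨hx2, h2⟩

/-- logs along homotopic paths -/
lemma log_end_eq {X : Set ℂ} [SimplyConnectedSpace X] {z : ℂ} (hz : z ∉ X) {x y : X}
    (p q : Path x y) {g g' : ℝ → ℂ} (hg : Continuous g) (hg' : Continuous g')
    (e : ∀ t, Complex.exp (g t) = (p.extend t : ℂ) - z)
    (e' : ∀ t, Complex.exp (g' t) = (q.extend t : ℂ) - z) (h0 : g 0 = g' 0) : g 1 = g' 1 := by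
  obtain ⟨F⟩ := SimplyConnectedSpace.paths_homotopic p q
  have hne : ∀ w : X, (w : ℂ) - z ≠ 0 := by
    intro w hw
    rw [sub_eq_zero] at hw
    exact hz (hw ▸ w.2)
  let pr : ℝ → unitInterval := projIcc 0 1 zero_le_one
  have hpr : Continuous pr := continuous_projIcc
  have pr0 : pr 0 = 0 := projIcc_left zero_le_one
  have pr1 : pr 1 = 1 := projIcc_right zero_le_one
  obtain ⟨G, hG, hGe, hG0⟩ := exists_log (A := ℝ × ℝ) (fun a => ((F (pr a.1, pr a.2) : X) : ℂ) - z)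
    (by fun_prop) (fun a => hne _) (0, 0) (g 0) (by
      rw [e]
      simp [pr0])
  have A1 : ∀ t, g t = G (0, t) := by
    intro t
    refine log_unique (isPreconnected_univ (α := ℝ)) (f := g) (g := fun t => G (0, t))
      hg.continuousOn (by fun_prop) ?_ (mem_univ 0) (mem_univ t) ?_
    · intro x _
      rw [hGe, e, pr0]
      simp [pr, Path.extend, IccExtend]
    · exact hG0.symm
  have A2 : ∀ s, G (s, 0) = G (0, 0) := by
    intro s
    refine log_unique (isPreconnected_univ (α := ℝ)) (f := fun s => G (s, 0)) (g := fun s => G (0, 0))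
      (by fun_prop) (by fun_prop) ?_ (mem_univ 0) (mem_univ s) rfl
    intro x _
    simp [hGe, pr0]
  have A3 : ∀ s, G (s, 1) = G (0, 1) := by
    intro s
    refine log_unique (isPreconnected_univ (α := ℝ)) (f := fun s => G (s, 1)) (g := fun s => G (0, 1))
      (by fun_prop) (by fun_prop) ?_ (mem_univ 0) (mem_univ s) rfl
    intro x _
    simp [hGe, pr1]
  have A4 : ∀ t, g' t = G (1, t) := by
    intro t
    refine log_unique (isPreconnected_univ (α := ℝ)) (f := g') (g := fun t => G (1, t))
      hg'.continuousOn (by fun_prop) ?_ (mem_univ 0) (mem_univ t) ?_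
    · intro x _
      rw [hGe, e', pr1]
      simp [pr, Path.extend, IccExtend]
    · rw [A2, ← h0]; exact hG0.symm
  rw [A1, A4, A3 1]

/-- On a simply connected set missing `z` there is a logarithm of `w - z` continuous along maps from
nice spaces. -/
lemma path_log {X : Set ℂ} (hX : IsSimplyConnected X) {z : ℂ} (hz : z ∉ X) {x₀ e₀ : ℂ}
    (hx₀ : x₀ ∈ X) (he₀ : Complex.exp e₀ = x₀ - z) :
    ∃ l : ℂ → ℂ, l x₀ = e₀ ∧ (∀ w ∈ X, Complex.exp (l w) = w - z) ∧
      ∀ γ : ℝ → ℂ, Continuous γ → (∀ t, γ t ∈ X) → Continuous (fun t => l (γ t)) := by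
  classical
  haveI : SimplyConnectedSpace X := hX
  have hne : ∀ w : X, (w : ℂ) - z ≠ 0 := by
    intro w hw
    rw [sub_eq_zero] at hw
    exact hz (hw ▸ w.2)
  let b : X := ⟨x₀, hx₀⟩
  have hlog : ∀ {x y : X} (p : Path x y) (e : ℂ), Complex.exp e = x - z → ∃ g : ℝ → ℂ, Continuous g ∧
      (∀ t, Complex.exp (g t) = (p.extend t : ℂ) - z) ∧ g 0 = e := by
    intro x y p e he
    exact exists_log (A := ℝ) (fun t => (p.extend t : ℂ) - z) (by fun_prop) (fun a => hne _) 0 e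
      (by rw [he]; simp)
  have hp : ∀ w : X, ∃ c : ℂ, ∀ (p : Path b w) (g : ℝ → ℂ), Continuous g →
      (∀ t, Complex.exp (g t) = (p.extend t : ℂ) - z) → g 0 = e₀ → g 1 = c := by
    intro w
    obtain ⟨p⟩ : Nonempty (Path b w) := PathConnectedSpace.joined b w
    obtain ⟨g, hg, hge, hg0⟩ := hlog p e₀ he₀
    refine ⟨g 1, fun q g' hg' hge' hg0' => ?_⟩
    exact log_end_eq hz q p hg' hg hge' hge (hg0'.trans hg0.symm)
  choose c hc using hp
  have hexp : ∀ w : X, Complex.exp (c w) = w - z := by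
    intro w
    obtain ⟨p⟩ : Nonempty (Path b w) := PathConnectedSpace.joined b w
    obtain ⟨g, hg, hge, hg0⟩ := hlog p e₀ he₀
    rw [← hc w p g hg hge hg0, hge]
    simp
  have hstep : ∀ {x y : X} (r : Path x y) (g : ℝ → ℂ), Continuous g →
      (∀ t, Complex.exp (g t) = (r.extend t : ℂ) - z) → g 0 = c x → g 1 = c y := by
    intro x y r g hg hge hg0
    obtain ⟨q⟩ : Nonempty (Path b x) := PathConnectedSpace.joined b x
    obtain ⟨k, hk, hke, hk0⟩ := hlog (q.trans r) e₀ he₀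
    obtain ⟨k', hk', hke', hk0'⟩ := hlog q e₀ he₀
    have h1 := hc x q k' hk' hke' hk0'
    have h2 := hc y _ k hk hke hk0
    have T1 : ∀ s ∈ Icc (0:ℝ) 1, (q.trans r).extend (s / 2) = q.extend s := by
      intro s hs
      have hs2 : s / 2 ∈ Icc (0:ℝ) 1 := ⟨by linarith [hs.1], by linarith [hs.2]⟩
      rw [Path.extend_apply _ hs2, Path.trans_apply, dif_pos (by simpa using by linarith [hs.2]),
        Path.extend_apply _ hs]
      congr 1
      ext
      simp only
      ring
    have T2 : ∀ s ∈ Icc (0:ℝ) 1, (q.trans r).extend ((1 + s) / 2) = r.extend s := by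
      intro s hs
      rcases eq_or_lt_of_le hs.1 with h0 | h0
      · rw [← h0]
        have hs2 : ((1 + 0) / 2 : ℝ) ∈ Icc (0:ℝ) 1 := by norm_num
        rw [Path.extend_apply _ hs2, Path.trans_apply, dif_pos (by norm_num)]
        simp
      have hs2 : (1 + s) / 2 ∈ Icc (0:ℝ) 1 := ⟨by linarith [hs.1], by linarith [hs.2]⟩
      rw [Path.extend_apply _ hs2, Path.trans_apply, dif_neg (by simp only [not_le]; linarith),
        Path.extend_apply _ hs]
      congr 1
      ext
      simp only
      ring
    have U1 : k (1 / 2) = k' 1 := by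
      refine log_unique (isPreconnected_Icc (a := (0:ℝ)) (b := 1)) (f := fun s => k (s / 2)) (g := k')
        (by fun_prop) (by fun_prop) ?_ (x := 0) (y := 1) (by simp) (by simp) (by simp [hk0, hk0'])
      intro s hs
      simp only [hke, hke', T1 s hs]
    have U2 : k ((1 + 1) / 2) = g 1 := by
      refine log_unique (isPreconnected_Icc (a := (0:ℝ)) (b := 1)) (f := fun s => k ((1 + s) / 2)) (g := g)
        (by fun_prop) (by fun_prop) ?_ (x := 0) (y := 1) (by simp) (by simp) ?_
      · intro s hs
        simp only [hke, hge, T2 s hs]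
      · simp only [add_zero]
        rw [U1, h1, hg0]
    rw [← U2, ← h2]; norm_num
  refine ⟨fun w => if hw : w ∈ X then c ⟨w, hw⟩ else 0, ?_, ?_, ?_⟩
  · beta_reduce
    rw [dif_pos hx₀]
    exact (hc b (Path.refl b) (fun _ => e₀) continuous_const (by intro t; rw [he₀]; simp [b]) rfl).symm
  · intro w hw
    beta_reduce
    rw [dif_pos hw]
    exact hexp ⟨w, hw⟩
  · intro γ hγ hγX
    have hs : ∀ t, (if hw : γ t ∈ X then c ⟨γ t, hw⟩ else 0) = c ⟨γ t, hγX t⟩ := fun t => dif_pos _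
    simp only [hs]
    obtain ⟨G, hG, hGe, hG0⟩ := exists_log (A := ℝ) (fun t => γ t - z) (by fun_prop)
      (fun a => hne ⟨γ a, hγX a⟩) 0 (c ⟨γ 0, hγX 0⟩) (hexp _)
    convert hG using 2 with t
    let r : Path (⟨γ 0, hγX 0⟩ : X) ⟨γ t, hγX t⟩ :=
      { toFun := fun s => ⟨γ (s * t), hγX _⟩
        continuous_toFun := by fun_prop
        source' := by simp
        target' := by simp }
    have := hstep r (fun s => G ((projIcc (0:ℝ) 1 zero_le_one s : ℝ) * t)) (by
      have : Continuous (projIcc (0:ℝ) 1 zero_le_one) := continuous_projIcc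
      fun_prop) ?_ ?_
    · rw [← this]; simp
    · intro s
      rw [hGe]
      rfl
    · simp [hG0]

lemma fill_path_subset {X : Set ℂ} (hX : IsSimplyConnected X) {γ : ℝ → ℂ} (hγ : Continuous γ)
    (h : ∀ t, γ t ∈ X) (a b : ℝ) : fill (γ '' Icc a b) ⊆ X := by
  intro z hz
  by_contra hzX
  have h0 : γ 0 - z ≠ 0 := by
    intro hw
    rw [sub_eq_zero] at hw
    exact hzX (hw ▸ h 0)
  obtain ⟨l, -, hl, hl2⟩ := path_log hX hzX (h 0) (Complex.exp_log h0)
  refine not_mem_fill_of_log (l := l) (isCompact_Icc.image hγ) ?_ ?_ hz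
  · exact continuousOn_image_of_comp isCompact_Icc hγ.continuousOn (hl2 γ hγ h).continuousOn
  · rintro _ ⟨t, _, rfl⟩
    exact hl _ (h t)

end THelly


open Set Filter Topology Metric

namespace THelly

lemma chain_log {C : Set ℂ} (hC : IsPreconnected C) {p q : ℂ} (hp : p ∈ C) (hq : q ∈ C) {ε : ℝ}
    (hε : 0 < ε) : ∃ L : ℂ → ℂ, ContinuousOn L {z | ∀ c ∈ C, ε ≤ dist z c} ∧
      ∀ z ∈ {z | ∀ c ∈ C, ε ≤ dist z c}, Complex.exp (L z) = (z - p) / (z - q) := by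
  have hne : ∀ z ∈ {z | ∀ c ∈ C, ε ≤ dist z c}, ∀ c ∈ C, z - c ≠ 0 := by
    intro z hz c hc h
    rw [sub_eq_zero] at h
    have h1 : ε ≤ dist z c := hz c hc
    rw [h, dist_self] at h1
    linarith
  refine hC.induction₂ (fun p q => ∃ L : ℂ → ℂ, ContinuousOn L {z | ∀ c ∈ C, ε ≤ dist z c} ∧
      ∀ z ∈ {z | ∀ c ∈ C, ε ≤ dist z c}, Complex.exp (L z) = (z - p) / (z - q)) ?_ ?_ ?_ hp hq
  · intro a ha
    have : ball a ε ∈ 𝓝[C] a := mem_nhdsWithin_of_mem_nhds (ball_mem_nhds a hε)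
    filter_upwards [this, self_mem_nhdsWithin] with b hb hbC
    have hs : ∀ z ∈ {z | ∀ c ∈ C, ε ≤ dist z c}, (z - a) / (z - b) ∈ Complex.slitPlane := by
      intro z hz
      have h1 := hne z hz b hbC
      have e : (z - a) / (z - b) = 1 + (b - a) / (z - b) := by field_simp; ring
      rw [e]
      left
      have h2 : ‖(b - a) / (z - b)‖ < 1 := by
        rw [norm_div, div_lt_one (norm_pos_iff.2 h1), ← dist_eq_norm, ← dist_eq_norm]
        exact lt_of_lt_of_le hb (hz b hbC)
      have h3 := (abs_le.1 (Complex.abs_re_le_norm ((b - a) / (z - b)))).1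
      rw [Complex.add_re, Complex.one_re]
      linarith
    refine ⟨fun z => Complex.log ((z - a) / (z - b)), ?_, ?_⟩
    · apply ContinuousOn.clog _ hs
      apply ContinuousOn.div (by fun_prop) (by fun_prop)
      exact fun z hz => hne z hz b hbC
    · intro z hz
      exact Complex.exp_log (Complex.slitPlane_ne_zero (hs z hz))
  · rintro a b c ha hb hc ⟨L1, h1, h1'⟩ ⟨L2, h2, h2'⟩
    refine ⟨fun z => L1 z + L2 z, h1.add h2, fun z hz => ?_⟩
    have := hne z hz b hb
    have := hne z hz c hc
    rw [Complex.exp_add, h1' z hz, h2' z hz]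
    field_simp
  · rintro a b ha hb ⟨L1, h1, h1'⟩
    refine ⟨fun z => - L1 z, h1.neg, fun z hz => ?_⟩
    rw [Complex.exp_neg, h1' z hz, inv_div]

lemma chain_log' {C : Set ℂ} (hC : IsPreconnected C) {p q : ℂ} (hp : p ∈ C) (hq : q ∈ C) {ε : ℝ}
    (hε : 0 < ε) {U : Set ℂ} (hU : ∀ z ∈ U, ∀ c ∈ C, ε ≤ dist z c) {z₀ e : ℂ} (hz₀ : z₀ ∈ U)
    (he : Complex.exp e = (z₀ - p) / (z₀ - q)) :
    ∃ L : ℂ → ℂ, ContinuousOn L U ∧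
      (∀ z ∈ U, Complex.exp (L z) = (z - p) / (z - q)) ∧ L z₀ = e := by
  obtain ⟨L, h1, h2⟩ := chain_log hC hp hq hε
  refine ⟨fun z => L z - L z₀ + e, ?_, ?_, by simp⟩
  · exact ((h1.mono hU).sub continuousOn_const).add continuousOn_const
  · intro z hz
    have h3 := h2 z₀ (hU z₀ hz₀)
    rw [Complex.exp_add, Complex.exp_sub, he, h3, h2 z (hU z hz)]
    rw [div_mul_cancel₀]
    rw [← h3]
    exact Complex.exp_ne_zero _

lemma fill_mono {P Q : Set ℂ} (h : P ⊆ Q) : fill P ⊆ fill Q := by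
  intro z hz
  rw [fill, mem_ofPred_eq] at hz ⊢
  exact hz.subset (connectedComponentIn_mono _ (compl_subset_compl.2 h))

lemma NS.exists_thick {A : Set ℂ} (hA : NS A) {z : ℂ} (hz : z ∉ A) :
    ∃ η > 0, z ∉ fill (cthickening η A) := by
  obtain ⟨R₀, hR₀⟩ := hA.cpt.isBounded.exists_norm_le
  set R := max R₀ 0 with hR
  have hRA : ∀ x ∈ A, ‖x‖ ≤ R := fun x hx => (hR₀ x hx).trans (le_max_left _ _)
  have hR0 : 0 ≤ R := le_max_right _ _
  let w : ℂ := ((R + 2 : ℝ) : ℂ)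
  have hw : ‖w‖ = R + 2 := by
    simp only [w]; rw [Complex.norm_real, Real.norm_of_nonneg (by linarith)]
  have hwA : w ∈ Aᶜ := fun h => by have := hRA w h; linarith
  have hpc : IsPathConnected Aᶜ :=
    (hA.cpt.isClosed.isOpen_compl.isConnected_iff_isPathConnected).1 ⟨⟨w, hwA⟩, hA.conn⟩
  obtain ⟨γ, hγ⟩ := hpc.joinedIn z hz w hwA
  have hT : IsCompact (range γ) := isCompact_range γ.continuous
  obtain ⟨δ, hδ, hd⟩ := Disjoint.exists_cthickenings (s := range γ) (t := A) (by
    rw [Set.disjoint_left]; rintro _ ⟨t, rfl⟩; exact hγ t) hT hA.cpt.isClosed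
  refine ⟨min δ 1, by positivity, ?_⟩
  refine not_mem_fill_of (C := range γ ∪ {z | R + 1 < ‖z‖}) ?_ (Or.inl ⟨0, by simp⟩) ?_ ?_
  · refine IsPreconnected.union w ⟨1, by simp⟩ ?_ ?_ ?_
    · show R + 1 < ‖w‖
      linarith
    · exact isPreconnected_range γ.continuous
    · exact exterior_preconnected (by linarith)
  · rintro x (hx | hx) hxA
    · exact Set.disjoint_left.1 hd (self_subset_cthickening _ hx)
        (cthickening_mono (min_le_left _ _) _ hxA)
    · have hx : R + 1 < ‖x‖ := hx
      have h1 := cthickening_mono (min_le_right δ 1) _ hxA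
      rw [hA.cpt.cthickening_eq_biUnion_closedBall zero_le_one] at h1
      simp only [mem_iUnion, mem_closedBall] at h1
      obtain ⟨y, hy, hxy⟩ := h1
      have := hRA y hy
      rw [dist_eq_norm] at hxy
      have := norm_sub_norm_le x y
      linarith
  · intro h
    exact exterior_unbounded (R + 1) (h.subset subset_union_right)

lemma exists_thick_compact {ι : Type*} {A : ι → Set ℂ} {K : Set ℂ} (hA : ∀ i, NS (A i))
    (hK : IsCompact K) (h : ∀ z ∈ K, ∃ i, z ∉ A i) :
    ∃ η > 0, η ≤ 1 ∧ ∀ z ∈ K, ∃ i, z ∉ fill (cthickening η (A i)) := by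
  refine hK.induction_on (p := fun s => ∃ η > 0, η ≤ 1 ∧ ∀ z ∈ s, ∃ i, z ∉ fill (cthickening η (A i)))
    ⟨1, one_pos, le_rfl, by simp⟩ ?_ ?_ ?_
  · rintro s t hst ⟨η, h1, h2, h3⟩
    exact ⟨η, h1, h2, fun z hz => h3 z (hst hz)⟩
  · rintro s t ⟨η, h1, h2, h3⟩ ⟨η', h1', h2', h3'⟩
    refine ⟨min η η', by positivity, (min_le_left _ _).trans h2, ?_⟩
    rintro z (hz | hz)
    · obtain ⟨i, hi⟩ := h3 z hz
      exact ⟨i, fun hh => hi (fill_mono (cthickening_mono (min_le_left _ _) _) hh)⟩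
    · obtain ⟨i, hi⟩ := h3' z hz
      exact ⟨i, fun hh => hi (fill_mono (cthickening_mono (min_le_right _ _) _) hh)⟩
  · intro z hz
    obtain ⟨i, hi⟩ := h z hz
    obtain ⟨η, h1, h2⟩ := (hA i).exists_thick hi
    have h3 : z ∉ fill (cthickening (min η 1) (A i)) :=
      fun hh => h2 (fill_mono (cthickening_mono (min_le_left _ _) _) hh)
    refine ⟨(fill (cthickening (min η 1) (A i)))ᶜ, ?_, min η 1, by positivity, min_le_right _ _,
      fun w hw => ⟨i, hw⟩⟩
    exact mem_nhdsWithin_of_mem_nhds ((compl_fill_open isClosed_cthickening).mem_nhds h3)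

lemma exists_split {X : Set ℂ} (hX : IsCompact X) {p q : ℂ} (hp : p ∈ X) (hq : q ∈ X)
    (h : q ∉ connectedComponentIn X p) : ∃ P Q : Set ℂ, IsClosed P ∧ IsClosed Q ∧ Disjoint P Q ∧
      X = P ∪ Q ∧ p ∈ P ∧ q ∈ Q := by
  haveI : CompactSpace X := isCompact_iff_compactSpace.1 hX
  rw [connectedComponentIn_eq_image hp, connectedComponent_eq_iInter_isClopen] at h
  have : (⟨q, hq⟩ : X) ∉ ⋂ s : { s : Set X // IsClopen s ∧ (⟨p, hp⟩ : X) ∈ s }, (s : Set X) :=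
    fun hh => h ⟨_, hh, rfl⟩
  rw [mem_iInter] at this
  push Not at this
  obtain ⟨⟨Z, hZ, hpZ⟩, hqZ⟩ := this
  have hcl : IsClosedEmbedding (Subtype.val : X → ℂ) := hX.isClosed.isClosedEmbedding_subtypeVal
  refine ⟨Subtype.val '' Z, Subtype.val '' Zᶜ, hcl.isClosedMap _ hZ.1, hcl.isClosedMap _ hZ.compl.1,
    ?_, ?_, ⟨_, hpZ, rfl⟩, ⟨_, hqZ, rfl⟩⟩
  · exact (disjoint_image_iff Subtype.val_injective).2 disjoint_compl_right
  · rw [← image_union, union_compl_self, image_univ, Subtype.range_coe]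

lemma same_component {A₀ A₁ A₂ C₀₁ C₁₂ C₀₂ : Set ℂ} {p q : ℂ} (h₀ : NS A₀) (h₁ : NS A₁) (h₂ : NS A₂)
    (c₀₁ : IsPreconnected C₀₁) (c₁₂ : IsPreconnected C₁₂) (c₀₂ : IsPreconnected C₀₂)
    (s₀₁ : C₀₁ ⊆ A₀ ∩ A₁) (s₁₂ : C₁₂ ⊆ A₁ ∩ A₂) (s₀₂ : C₀₂ ⊆ A₀ ∩ A₂)
    (p₀₁ : p ∈ C₀₁) (p₁₂ : p ∈ C₁₂) (p₀₂ : p ∈ C₀₂)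
    (q₀₁ : q ∈ C₀₁) (q₁₂ : q ∈ C₁₂) (q₀₂ : q ∈ C₀₂) :
    q ∈ connectedComponentIn (A₀ ∩ A₁ ∩ A₂) p := by
  classical
  by_contra hcon
  have hpX : p ∈ A₀ ∩ A₁ ∩ A₂ := ⟨s₀₁ p₀₁, (s₁₂ p₁₂).2⟩
  have hqX : q ∈ A₀ ∩ A₁ ∩ A₂ := ⟨s₀₁ q₀₁, (s₁₂ q₁₂).2⟩
  have hX : IsCompact (A₀ ∩ A₁ ∩ A₂) :=
    (h₀.cpt.inter_right h₁.cpt.isClosed).inter_right h₂.cpt.isClosed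
  obtain ⟨P, Q, hP, hQ, hPQ, hXPQ, hpP, hqQ⟩ := exists_split hX hpX hqX hcon
  obtain ⟨f, hf0, hf1, -⟩ := exists_continuous_zero_one_of_isClosed hP hQ hPQ
  have hfc : Continuous f := f.continuous
  -- the bounding radius
  obtain ⟨R₀, hR₀⟩ := (h₀.cpt.union (h₁.cpt.union h₂.cpt)).isBounded.exists_norm_le
  set R := max R₀ 0 with hR
  have hRA : ∀ x ∈ A₀ ∪ (A₁ ∪ A₂), ‖x‖ ≤ R := fun x hx => (hR₀ x hx).trans (le_max_left _ _)
  have hR0 : 0 ≤ R := le_max_right _ _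
  let A : Fin 3 → Set ℂ := ![A₀, A₁, A₂]
  have hA : ∀ i, NS (A i) := by intro i; fin_cases i <;> assumption
  have hAR : ∀ i, A i ⊆ closedBall 0 R := by
    intro i x hx
    rw [mem_closedBall, dist_zero_right]
    apply hRA
    fin_cases i
    · exact Or.inl hx
    · exact Or.inr (Or.inl hx)
    · exact Or.inr (Or.inr hx)
  let K : Set ℂ := closedBall 0 (R + 1) ∩ (f ⁻¹' Icc (1/3) (2/3))
  have hK : IsCompact K := (isCompact_closedBall _ _).inter_right (isClosed_Icc.preimage hfc)
  obtain ⟨η, hη, hη1, hηK⟩ := exists_thick_compact hA hK (by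
    intro z hz
    by_contra hcon2
    push Not at hcon2
    have : z ∈ P ∪ Q := by rw [← hXPQ]; exact ⟨⟨hcon2 0, hcon2 1⟩, hcon2 2⟩
    have h2 : f z ∈ Icc (1/3 : ℝ) (2/3) := hz.2
    rcases this with h | h
    · have := hf0 h
      simp only [Pi.zero_apply] at this
      rw [this] at h2; norm_num at h2
    · have := hf1 h
      simp only [Pi.one_apply] at this
      rw [this] at h2; norm_num at h2)
  let V : Fin 3 → Set ℂ := fun i => (fill (cthickening η (A i)))ᶜ
  have hVo : ∀ i, IsOpen (V i) := fun i => compl_fill_open isClosed_cthickening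
  have hVc : ∀ i, IsPreconnected (V i) := fun i => (fill_NS (hA i).cpt.cthickening).conn
  have hVext : ∀ i, {z : ℂ | R + 1 < ‖z‖} ⊆ V i := by
    intro i
    apply exterior_subset_compl_fill
    refine (cthickening_mono hη1 _).trans ((cthickening_subset_of_subset _ (hAR i)).trans ?_)
    rw [cthickening_closedBall zero_le_one hR0, add_comm]
  have hVd : ∀ i, ∀ z ∈ V i, ∀ c ∈ A i, η ≤ dist z c := by
    intro i z hz c hc
    by_contra hlt
    push Not at hlt
    exact hz (subset_fill _ (mem_cthickening_of_dist_le z c η _ hc hlt.le))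
  let z₀ : ℂ := ((R + 2 : ℝ) : ℂ)
  have hz₀ : R + 1 < ‖z₀‖ := by
    simp only [z₀]; rw [Complex.norm_real, Real.norm_of_nonneg (by linarith)]; linarith
  have hz₀V : ∀ i, z₀ ∈ V i := fun i => hVext i hz₀
  have hz₀p : z₀ - p ≠ 0 := by
    intro h
    have := hVd 0 z₀ (hz₀V 0) p hpX.1.1
    rw [dist_eq_norm, h, norm_zero] at this
    linarith
  have hz₀q : z₀ - q ≠ 0 := by
    intro h
    have := hVd 0 z₀ (hz₀V 0) q hqX.1.1
    rw [dist_eq_norm, h, norm_zero] at this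
    linarith
  have he := Complex.exp_log (div_ne_zero hz₀p hz₀q)
  obtain ⟨L01, a1, a2, a3⟩ := chain_log' c₀₁ p₀₁ q₀₁ hη (U := V 0 ∪ V 1) (by
    rintro z (hz | hz) c hc
    · exact hVd 0 z hz c (s₀₁ hc).1
    · exact hVd 1 z hz c (s₀₁ hc).2) (Or.inl (hz₀V 0)) he
  obtain ⟨L12, b1, b2, b3⟩ := chain_log' c₁₂ p₁₂ q₁₂ hη (U := V 1 ∪ V 2) (by
    rintro z (hz | hz) c hc
    · exact hVd 1 z hz c (s₁₂ hc).1
    · exact hVd 2 z hz c (s₁₂ hc).2) (Or.inl (hz₀V 1)) he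
  obtain ⟨L02, d1, d2, d3⟩ := chain_log' c₀₂ p₀₂ q₀₂ hη (U := V 0 ∪ V 2) (by
    rintro z (hz | hz) c hc
    · exact hVd 0 z hz c (s₀₂ hc).1
    · exact hVd 2 z hz c (s₀₂ hc).2) (Or.inl (hz₀V 0)) he
  have E0 : ∀ z ∈ V 0, L01 z = L02 z := by
    intro z hz
    refine log_unique (hVc 0) (a1.mono subset_union_left) (d1.mono subset_union_left) ?_ (hz₀V 0) hz
      (a3.trans d3.symm)
    intro x hx
    rw [a2 x (Or.inl hx), d2 x (Or.inl hx)]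
  have E1 : ∀ z ∈ V 1, L01 z = L12 z := by
    intro z hz
    refine log_unique (hVc 1) (a1.mono subset_union_right) (b1.mono subset_union_left) ?_ (hz₀V 1) hz
      (a3.trans b3.symm)
    intro x hx
    rw [a2 x (Or.inr hx), b2 x (Or.inl hx)]
  have E2 : ∀ z ∈ V 2, L02 z = L12 z := by
    intro z hz
    refine log_unique (hVc 2) (d1.mono subset_union_right) (b1.mono subset_union_right) ?_ (hz₀V 2) hz
      (d3.trans b3.symm)
    intro x hx
    rw [d2 x (Or.inr hx), b2 x (Or.inr hx)]
  let L : ℂ → ℂ := fun z => if z ∈ V 0 then L01 z else L12 z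
  have hL0 : ∀ z ∈ V 0, L z = L01 z := fun z hz => if_pos hz
  have hL12 : ∀ z ∈ V 1 ∪ V 2, L z = L12 z := by
    intro z hz
    by_cases h0 : z ∈ V 0
    · rw [hL0 z h0]
      rcases hz with hz | hz
      · exact E1 z hz
      · rw [E0 z h0, E2 z hz]
    · exact if_neg h0
  let W : Set ℂ := V 0 ∪ (V 1 ∪ V 2)
  have hWo : IsOpen W := (hVo 0).union ((hVo 1).union (hVo 2))
  have hLc : ContinuousOn L W := by
    apply ContinuousOn.union_of_isOpen _ _ (hVo 0) ((hVo 1).union (hVo 2))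
    · exact (a1.mono subset_union_left).congr hL0
    · exact b1.congr hL12
  have hLe : ∀ z ∈ W, Complex.exp (L z) = (z - p) / (z - q) := by
    rintro z (hz | hz)
    · rw [hL0 z hz, a2 z (Or.inl hz)]
    · rw [hL12 z hz, b2 z hz]
  have hWp : ∀ z ∈ W, z - p ≠ 0 := by
    intro z hz h
    have := hLe z hz
    rw [h, zero_div] at this
    exact Complex.exp_ne_zero _ this
  have hWq : ∀ z ∈ W, z - q ≠ 0 := by
    intro z hz h
    have := hLe z hz
    rw [h, div_zero] at this
    exact Complex.exp_ne_zero _ this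
  let χ : ℂ → ℝ := fun z => max 0 (min 1 (3 * f z - 1))
  have hχ : Continuous χ := by fun_prop
  have hχ0 : ∀ z, f z < 1/3 → χ z = 0 := by
    intro z hz
    exact max_eq_left ((min_le_right _ _).trans (by linarith))
  have hχ1 : ∀ z, 2/3 < f z → χ z = 1 := by
    intro z hz
    have : min 1 (3 * f z - 1) = 1 := min_eq_left (by linarith)
    simp only [χ, this]; norm_num
  let F : ℂ → ℂ := fun z => if z ∈ W then (z - q) * Complex.exp (χ z * L z) else
    if f z < 1/3 then z - q else z - p
  have F1 : ∀ z ∈ W, F z = (z - q) * Complex.exp (χ z * L z) := fun z hz => if_pos hz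
  have F2 : ∀ z, f z < 1/3 → F z = z - q := by
    intro z hz
    by_cases hW : z ∈ W
    · rw [F1 z hW, hχ0 z hz]; simp
    · simp only [F, if_neg hW, if_pos hz]
  have F3 : ∀ z, 2/3 < f z → F z = z - p := by
    intro z hz
    by_cases hW : z ∈ W
    · rw [F1 z hW, hχ1 z hz]
      simp only [Complex.ofReal_one, one_mul]
      rw [hLe z hW, mul_div_cancel₀ _ (hWq z hW)]
    · have : ¬ f z < 1/3 := by linarith
      simp only [F, if_neg hW, if_neg this]
  have hcover : ∀ z, z ∈ W ∨ f z < 1/3 ∨ 2/3 < f z := by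
    intro z
    by_cases h1 : R + 1 < ‖z‖
    · exact Or.inl (Or.inl (hVext 0 h1))
    by_cases h2 : f z < 1/3
    · exact Or.inr (Or.inl h2)
    by_cases h3 : 2/3 < f z
    · exact Or.inr (Or.inr h3)
    left
    obtain ⟨i, hi⟩ := hηK z ⟨by rw [mem_closedBall, dist_zero_right]; linarith,
      by show f z ∈ Icc _ _; exact ⟨by linarith, by linarith⟩⟩
    fin_cases i
    · exact Or.inl hi
    · exact Or.inr (Or.inl hi)
    · exact Or.inr (Or.inr hi)
  have hM : ContinuousOn (fun z => (χ z : ℂ) * L z) W :=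
    (Complex.continuous_ofReal.comp hχ).continuousOn.mul hLc
  refine no_degree_one (F := F) (M := fun z => χ z * L z) (a := q) (R := R + 1) ?_ ?_ ?_ ?_
  · rw [continuous_iff_continuousAt]
    intro z
    rcases hcover z with h | h | h
    · have : ContinuousOn (fun z => (z - q) * Complex.exp (χ z * L z)) W :=
        (by fun_prop : ContinuousOn (fun z : ℂ => z - q) W).mul hM.cexp
      refine (this.continuousAt (hWo.mem_nhds h)).congr ?_
      filter_upwards [hWo.mem_nhds h] with w hw using (F1 w hw).symm
    · refine (by fun_prop : ContinuousAt (fun z : ℂ => z - q) z).congr ?_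
      filter_upwards [(isOpen_Iio.preimage hfc).mem_nhds h] with w hw using (F2 w hw).symm
    · refine (by fun_prop : ContinuousAt (fun z : ℂ => z - p) z).congr ?_
      filter_upwards [(isOpen_Ioi.preimage hfc).mem_nhds h] with w hw using (F3 w hw).symm
  · intro z
    rcases hcover z with h | h | h
    · rw [F1 z h]
      exact mul_ne_zero (hWq z h) (Complex.exp_ne_zero _)
    · rw [F2 z h]
      intro h0
      rw [sub_eq_zero.1 h0, hf1 hqQ] at h
      norm_num at h
    · rw [F3 z h]
      intro h0
      rw [sub_eq_zero.1 h0, hf0 hpP] at h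
      norm_num at h
  · exact hM.mono fun z hz => Or.inl (hVext 0 hz)
  · intro z hz
    exact F1 z (Or.inl (hVext 0 hz))

end THelly


open Set Filter Topology Metric

namespace THelly

/-- Uniform local connectedness. -/
def ULC (K : Set ℂ) : Prop := ∀ ε > 0, ∃ δ > 0, ∀ x ∈ K, ∀ y ∈ K, dist x y < δ →
  ∃ T ⊆ K, IsPreconnected T ∧ x ∈ T ∧ y ∈ T ∧ T ⊆ closedBall x ε

lemma ULC_path {γ : ℝ → ℂ} (hγ : Continuous γ) (a b : ℝ) : ULC (γ '' Icc a b) := by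
  intro ε hε
  have key : ∃ δ > 0, ∀ p ∈ Icc a b ×ˢ Icc a b, p ∈ Icc a b ×ˢ Icc a b → dist (γ p.1) (γ p.2) < δ →
      ∃ T ⊆ γ '' Icc a b, IsPreconnected T ∧ γ p.1 ∈ T ∧ γ p.2 ∈ T ∧ T ⊆ closedBall (γ p.1) ε := by
    refine (isCompact_Icc.prod isCompact_Icc).induction_on (p := fun s => ∃ δ > 0, ∀ p ∈ s,
      p ∈ Icc a b ×ˢ Icc a b → dist (γ p.1) (γ p.2) < δ →
      ∃ T ⊆ γ '' Icc a b, IsPreconnected T ∧ γ p.1 ∈ T ∧ γ p.2 ∈ T ∧ T ⊆ closedBall (γ p.1) ε)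
      ⟨1, one_pos, by simp⟩ ?_ ?_ ?_
    · rintro s t hst ⟨δ, h1, h2⟩
      exact ⟨δ, h1, fun p hp => h2 p (hst hp)⟩
    · rintro s t ⟨δ, h1, h2⟩ ⟨δ', h1', h2'⟩
      refine ⟨min δ δ', by positivity, ?_⟩
      rintro p (hp | hp) hpI hd
      · exact h2 p hp hpI (hd.trans_le (min_le_left _ _))
      · exact h2' p hp hpI (hd.trans_le (min_le_right _ _))
    · rintro ⟨s, t⟩ ⟨hs, ht⟩
      by_cases hst : γ s = γ t
      · obtain ⟨r, hr, hr2⟩ := Metric.continuousAt_iff.1 (hγ.continuousAt (x := s)) (ε / 2) (by positivity)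
        obtain ⟨r', hr', hr2'⟩ := Metric.continuousAt_iff.1 (hγ.continuousAt (x := t)) (ε / 2) (by positivity)
        refine ⟨ball s r ×ˢ ball t r', mem_nhdsWithin_of_mem_nhds (prod_mem_nhds (ball_mem_nhds _ hr)
          (ball_mem_nhds _ hr')), 1, one_pos, ?_⟩
        rintro ⟨s', t'⟩ ⟨hs', ht'⟩ ⟨hs'', ht''⟩ -
        simp only at hs' ht' hs'' ht'' ⊢
        have hu1 : uIcc s' s ⊆ ball s r := (convex_ball s r).ordConnected.uIcc_subset hs' (mem_ball_self hr)
        have hu2 : uIcc t' t ⊆ ball t r' := (convex_ball t r').ordConnected.uIcc_subset ht' (mem_ball_self hr')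
        have hv1 : uIcc s' s ⊆ Icc a b := ordConnected_Icc.uIcc_subset hs'' hs
        have hv2 : uIcc t' t ⊆ Icc a b := ordConnected_Icc.uIcc_subset ht'' ht
        refine ⟨γ '' uIcc s' s ∪ γ '' uIcc t' t, union_subset (image_mono hv1) (image_mono hv2), ?_,
          Or.inl ⟨s', left_mem_uIcc, rfl⟩, Or.inr ⟨t', left_mem_uIcc, rfl⟩, ?_⟩
        · refine IsPreconnected.union (γ s) ⟨s, right_mem_uIcc, rfl⟩ ⟨t, right_mem_uIcc, hst.symm⟩
            (isPreconnected_uIcc.image _ hγ.continuousOn) (isPreconnected_uIcc.image _ hγ.continuousOn)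
        · have h0 := hr2 hs'
          rintro _ (⟨u, hu, rfl⟩ | ⟨u, hu, rfl⟩)
          · have h1 := hr2 (hu1 hu)
            rw [mem_closedBall]
            linarith [dist_triangle_right (γ u) (γ s') (γ s)]
          · have h1 := hr2' (hu2 hu)
            rw [← hst] at h1
            rw [mem_closedBall]
            linarith [dist_triangle_right (γ u) (γ s') (γ s)]
      · have hpos : 0 < dist (γ s) (γ t) := dist_pos.2 hst
        have hc : Continuous fun p : ℝ × ℝ => dist (γ p.1) (γ p.2) := by fun_prop
        refine ⟨{p | dist (γ s) (γ t) / 2 < dist (γ p.1) (γ p.2)}, mem_nhdsWithin_of_mem_nhds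
          ((isOpen_lt continuous_const hc).mem_nhds ?_), dist (γ s) (γ t) / 2, by positivity, ?_⟩
        · show dist (γ s) (γ t) / 2 < dist (γ s) (γ t)
          linarith
        · intro p hp _ h
          have hp : dist (γ s) (γ t) / 2 < dist (γ p.1) (γ p.2) := hp
          linarith
  obtain ⟨δ, hδ, h⟩ := key
  refine ⟨δ, hδ, ?_⟩
  rintro _ ⟨s, hs, rfl⟩ _ ⟨t, ht, rfl⟩ hd
  exact h (s, t) ⟨hs, ht⟩ ⟨hs, ht⟩ hd

lemma conn_subset_fill {P C : Set ℂ} (hC : IsPreconnected C) (hCP : C ⊆ Pᶜ) {x : ℂ} (hx : x ∈ C)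
    (hxf : x ∈ fill P) : C ⊆ fill P := by
  intro y hy
  have h1 : y ∈ connectedComponentIn Pᶜ x := hC.subset_connectedComponentIn hx hCP hy
  rw [fill, mem_ofPred_eq] at hxf ⊢
  rwa [← connectedComponentIn_eq h1]

/-- exit point of a segment -/
lemma exit_point {P : Set ℂ} (hP : IsClosed P) {x y : ℂ} (hx : x ∈ fill P)
    (hy : ∃ w ∈ segment ℝ x y, w ∉ fill P) :
    ∃ x' ∈ P, x' ∈ segment ℝ x y ∧ segment ℝ x x' ⊆ fill P := by
  let g : ℝ → ℂ := fun t => AffineMap.lineMap x y t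
  have hg : Continuous g := AffineMap.lineMap_continuous
  have hseg : segment ℝ x y = g '' Icc 0 1 := segment_eq_image_lineMap ℝ x y
  let S : Set ℝ := Icc 0 1 ∩ g ⁻¹' P
  have hS : IsCompact S := isCompact_Icc.inter_right (hP.preimage hg)
  have hSne : S.Nonempty := by
    by_contra hne
    obtain ⟨w, hw, hwf⟩ := hy
    apply hwf
    have hsub : segment ℝ x y ⊆ Pᶜ := by
      rw [hseg]
      rintro _ ⟨t, ht, rfl⟩ htP
      exact hne ⟨t, ht, htP⟩
    exact conn_subset_fill (convex_segment x y).isPreconnected hsub (left_mem_segment ℝ x y) hx hw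
  obtain ⟨s, hs, hmin⟩ := hS.exists_isLeast hSne
  refine ⟨g s, hs.2, by rw [hseg]; exact ⟨s, hs.1, rfl⟩, ?_⟩
  have hseg2 : segment ℝ x (g s) ⊆ g '' Icc 0 s := by
    have : segment ℝ x (g s) = g '' segment ℝ 0 s := by
      have e := image_segment ℝ (AffineMap.lineMap x y : ℝ →ᵃ[ℝ] ℂ) 0 s
      simp only [AffineMap.lineMap_apply_zero] at e
      exact e.symm
    rw [this, segment_eq_Icc hs.1.1]
  refine hseg2.trans ?_
  rintro _ ⟨t, ht, rfl⟩
  rcases eq_or_lt_of_le ht.2 with h | h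
  · rw [h]; exact subset_fill _ hs.2
  · refine conn_subset_fill (C := g '' Ico 0 s) (isPreconnected_Ico.image _ hg.continuousOn) ?_
      (x := x) ⟨0, ⟨le_rfl, ht.1.trans_lt h⟩, by simp [g]⟩ hx ⟨t, ⟨ht.1, h⟩, rfl⟩
    rintro _ ⟨u, hu, rfl⟩ huP
    exact absurd (hmin ⟨⟨hu.1, hu.2.le.trans hs.1.2⟩, huP⟩) (not_le.2 hu.2)

lemma ULC_fill {P : Set ℂ} (hP : IsCompact P) (h : ULC P) : ULC (fill P) := by
  intro ε hε
  obtain ⟨δ, hδ, hT⟩ := h (ε / 2) (by positivity)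
  refine ⟨min δ (ε / 2), by positivity, ?_⟩
  intro x hx y hy hxy
  have hsx : segment ℝ x y ⊆ closedBall x (ε / 2) := by
    apply (convex_closedBall x (ε / 2)).segment_subset (mem_closedBall_self (by positivity))
    rw [mem_closedBall, dist_comm]
    exact hxy.le.trans (min_le_right _ _)
  by_cases hs : segment ℝ x y ⊆ fill P
  · exact ⟨_, hs, (convex_segment x y).isPreconnected, left_mem_segment ℝ x y,
      right_mem_segment ℝ x y, hsx.trans (closedBall_subset_closedBall (by linarith))⟩
  · rw [Set.not_subset] at hs
    obtain ⟨x', h1, h2, h3⟩ := exit_point hP.isClosed hx hs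
    rw [segment_symm] at hs
    obtain ⟨y', h1', h2', h3'⟩ := exit_point hP.isClosed hy hs
    rw [segment_symm ℝ y x] at h2'
    have hd : dist x' y' ≤ dist x y := by
      have a1 : x' ∈ closedBall x (dist x y) :=
        (convex_closedBall x _).segment_subset (mem_closedBall_self dist_nonneg)
          (by rw [mem_closedBall, dist_comm]) h2
      have a2 : x' ∈ closedBall y (dist x y) :=
        (convex_closedBall y _).segment_subset (by rw [mem_closedBall])
          (mem_closedBall_self dist_nonneg) h2
      have a3 : y' ∈ closedBall x' (dist x y) := (convex_closedBall x' _).segment_subset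
        (by rw [mem_closedBall, dist_comm]; exact a1) (by rw [mem_closedBall, dist_comm]; exact a2) h2'
      rw [dist_comm]; exact a3
    obtain ⟨T, hTP, hTc, hx'T, hy'T, hTb⟩ := hT x' h1 y' h1' (hd.trans_lt (hxy.trans_le (min_le_left _ _)))
    refine ⟨segment ℝ x x' ∪ T ∪ segment ℝ y y', ?_, ?_, ?_, ?_, ?_⟩
    · exact union_subset (union_subset h3 (hTP.trans (subset_fill P))) h3'
    · refine IsPreconnected.union y' (Or.inr hy'T) (right_mem_segment _ _ _) ?_
        (convex_segment _ _).isPreconnected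
      exact IsPreconnected.union x' (right_mem_segment _ _ _) hx'T (convex_segment _ _).isPreconnected hTc
    · exact Or.inl (Or.inl (left_mem_segment _ _ _))
    · exact Or.inr (left_mem_segment _ _ _)
    · have hb : segment ℝ x y ⊆ closedBall x ε := hsx.trans (closedBall_subset_closedBall (by linarith))
      have hc := convex_closedBall x ε
      refine union_subset (union_subset ?_ ?_) ?_
      · exact hc.segment_subset (mem_closedBall_self hε.le) (hb h2)
      · intro w hw
        have e1 := hTb hw
        have e2 := hsx h2
        rw [mem_closedBall] at *
        linarith [dist_triangle w x' x]
      · exact hc.segment_subset (hb (right_mem_segment _ _ _)) (hb h2')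

lemma fill_conn {P : Set ℂ} (hP : IsCompact P) (hc : IsPreconnected P) : IsPreconnected (fill P) := by
  rcases (fill P).eq_empty_or_nonempty with h | ⟨x₀, hx₀⟩
  · rw [h]; exact isPreconnected_empty
  have hnf : ∃ y, y ∉ fill P := by
    by_contra hcon
    push Not at hcon
    exact NS.compl_unbounded (isCompact_empty) (by
      have := (fill_NS hP).cpt.isBounded
      exact this.subset fun x _ => hcon x)
  obtain ⟨y, hy⟩ := hnf
  have key : ∀ x ∈ fill P, ∃ x' ∈ P, segment ℝ x x' ⊆ fill P := by
    intro x hx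
    obtain ⟨x', h1, _, h3⟩ := exit_point hP.isClosed hx ⟨y, right_mem_segment _ _ _, hy⟩
    exact ⟨x', h1, h3⟩
  obtain ⟨p, hp, -⟩ := key x₀ hx₀
  refine isPreconnected_of_forall p ?_
  intro x hx
  obtain ⟨x', h1, h2⟩ := key x hx
  exact ⟨P ∪ segment ℝ x x', union_subset (subset_fill P) h2, Or.inl hp,
    Or.inr (left_mem_segment _ _ _), hc.union x' h1 (right_mem_segment _ _ _)
      (convex_segment _ _).isPreconnected⟩

lemma ULC_component {K L : Set ℂ} (hK : NS K) (hL : NS L) (uK : ULC K) (uL : ULC L) (a : ℂ) :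
    ULC (connectedComponentIn (K ∩ L) a) := by
  intro ε hε
  obtain ⟨δ, hδ, h⟩ := uK ε hε
  obtain ⟨δ', hδ', h'⟩ := uL ε hε
  refine ⟨min δ δ', by positivity, ?_⟩
  intro x hx y hy hxy
  have hxK := connectedComponentIn_subset _ _ hx
  have hyK := connectedComponentIn_subset _ _ hy
  obtain ⟨T, t1, t2, t3, t4, t5⟩ := h x hxK.1 y hyK.1 (hxy.trans_le (min_le_left _ _))
  obtain ⟨T', t1', t2', t3', t4', t5'⟩ := h' x hxK.2 y hyK.2 (hxy.trans_le (min_le_right _ _))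
  have hsub : closure (T ∪ T') ⊆ closedBall x ε :=
    closure_minimal (union_subset t5 t5') isClosed_closedBall
  have hcpt : IsCompact (closure (T ∪ T')) := (isCompact_closedBall x ε).of_isClosed_subset isClosed_closure hsub
  have hF := fill_NS hcpt
  have hTF : T ∪ T' ⊆ fill (closure (T ∪ T')) := subset_closure.trans (subset_fill _)
  have key := same_component hK hL hF (C₀₁ := connectedComponentIn (K ∩ L) a) (C₁₂ := T') (C₀₂ := T)
    isPreconnected_connectedComponentIn t2' t2 (connectedComponentIn_subset _ _)
    (subset_inter t1' (subset_union_right.trans hTF))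
    (subset_inter t1 (subset_union_left.trans hTF)) hx t3' t3 hy t4' t4
  have hxx : x ∈ K ∩ L ∩ fill (closure (T ∪ T')) := ⟨hxK, hTF (Or.inl t3)⟩
  refine ⟨_, ?_, isPreconnected_connectedComponentIn, mem_connectedComponentIn hxx, key, ?_⟩
  · rw [connectedComponentIn_eq hx]
    exact isPreconnected_connectedComponentIn.subset_connectedComponentIn (mem_connectedComponentIn hxx)
      ((connectedComponentIn_subset _ _).trans inter_subset_left)
  · exact ((connectedComponentIn_subset _ _).trans inter_subset_right).trans (fill_subset_ball hsub)

end THelly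


open Set Filter Topology Metric

namespace THelly

lemma exists_chain {T : Set ℂ} (hT : IsPreconnected T) {x y : ℂ} (hx : x ∈ T) (hy : y ∈ T) {δ : ℝ}
    (hδ : 0 < δ) : ∃ (N : ℕ) (c : ℕ → ℂ), (∀ k, c k ∈ T) ∧ c 0 = x ∧ (∀ k, N ≤ k → c k = y) ∧
      ∀ k, dist (c k) (c (k + 1)) < δ := by
  refine hT.induction₂ (fun x y => ∃ (N : ℕ) (c : ℕ → ℂ), (∀ k, c k ∈ T) ∧ c 0 = x ∧
    (∀ k, N ≤ k → c k = y) ∧ ∀ k, dist (c k) (c (k + 1)) < δ) ?_ ?_ ?_ hx hy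
  · intro a ha
    have : ball a δ ∈ 𝓝[T] a := mem_nhdsWithin_of_mem_nhds (ball_mem_nhds a hδ)
    filter_upwards [this, self_mem_nhdsWithin] with b hb hbT
    refine ⟨1, fun k => if k = 0 then a else b, ?_, by simp, ?_, ?_⟩
    · intro k; beta_reduce; split_ifs <;> assumption
    · intro k hk; beta_reduce; rw [if_neg (by omega)]
    · intro k
      rcases k with _ | k
      · simpa [dist_comm] using hb
      · simpa using hδ
  · rintro a b c - - - ⟨N, f, h1, h2, h3, h4⟩ ⟨N', f', h1', h2', h3', h4'⟩
    refine ⟨N + N', fun k => if k < N then f k else f' (k - N), ?_, ?_, ?_, ?_⟩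
    · intro k; beta_reduce; split_ifs
      · exact h1 _
      · exact h1' _
    · beta_reduce
      split_ifs with h
      · exact h2
      · have : N = 0 := by omega
        subst this
        rw [Nat.sub_zero, h2', ← h2, h3 0 le_rfl]
    · intro k hk
      beta_reduce
      rw [if_neg (by omega), h3' _ (by omega)]
    · intro k
      beta_reduce
      by_cases h : k + 1 < N
      · rw [if_pos h, if_pos (by omega)]; exact h4 k
      · by_cases h' : k < N
        · have : k + 1 = N := by omega
          rw [if_pos h', if_neg h, this, Nat.sub_self, h2', ← h3 N le_rfl, ← this]
          exact h4 k
        · rw [if_neg h', if_neg h]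
          have : k + 1 - N = (k - N) + 1 := by omega
          rw [this]; exact h4' _
  · rintro a b - - ⟨N, f, h1, h2, h3, h4⟩
    refine ⟨N, fun k => f (N - k), fun k => h1 _, by simpa using h3 N le_rfl, ?_, ?_⟩
    · intro k hk
      beta_reduce
      rw [Nat.sub_eq_zero_of_le hk, h2]
    · intro k
      beta_reduce
      by_cases h : k < N
      · have : N - k = (N - (k + 1)) + 1 := by omega
        rw [this, dist_comm]; exact h4 _
      · rw [Nat.sub_eq_zero_of_le (by omega), Nat.sub_eq_zero_of_le (by omega), dist_self]
        exact hδ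

/-- dependent iteration -/
lemma iterate_states {σ : Type*} (Ω : ℝ → σ → Prop) (hmono : ∀ δ δ' s, δ ≤ δ' → Ω δ s → Ω δ' s)
    (D : ℝ → σ → σ → Prop)
    (H : ∀ ε > 0, ∃ δ > 0, ∀ s, Ω δ s → ∀ δ' > 0, ∃ s', Ω δ' s' ∧ D ε s s')
    (I : σ → Prop) (init : ∀ δ > 0, ∃ s, Ω δ s ∧ I s) (e w : ℕ → ℝ) (he : ∀ n, 0 < e n)
    (hw : ∀ n, 0 < w n) :
    ∃ s : ℕ → σ, I (s 0) ∧ (∀ n, Ω (w n) (s n)) ∧ ∀ n, D (e n) (s n) (s (n + 1)) := by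
  choose! δ hδ hs using H
  let d : ℕ → ℝ := fun n => min (w n) (δ (e n))
  have hd : ∀ n, 0 < d n := fun n => lt_min (hw n) (hδ _ (he n))
  have hstep : ∀ n (s : {s // Ω (d n) s}), ∃ s' : {s // Ω (d (n + 1)) s}, D (e n) s.1 s'.1 := by
    rintro n ⟨s, h⟩
    obtain ⟨s', h1, h2⟩ := hs (e n) (he n) s (hmono _ _ _ (min_le_right _ _) h) (d (n + 1)) (hd _)
    exact ⟨⟨s', h1⟩, h2⟩
  choose F hF using hstep
  obtain ⟨s0, h0, hI⟩ := init (d 0) (hd 0)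
  let S : ∀ n, {s // Ω (d n) s} := fun n => Nat.rec (motive := fun n => {s // Ω (d n) s}) ⟨s0, h0⟩ F n
  refine ⟨fun n => (S n).1, hI, fun n => hmono _ _ _ (min_le_left _ _) (S n).2, fun n => hF n (S n)⟩

/-- Oscillation at most `ε`. -/
def Osc {α : Type*} [TopologicalSpace α] (f : α → ℂ) (S : Set α) (ε : ℝ) : Prop :=
  ∀ z ∈ S, ∀ᶠ z' in 𝓝[S] z, dist (f z') (f z) < ε

lemma Osc.mono {α : Type*} [TopologicalSpace α] {f : α → ℂ} {S : Set α} {ε ε' : ℝ} (h : Osc f S ε)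
    (hε : ε ≤ ε') : Osc f S ε' := fun z hz => (h z hz).mono fun _ h => h.trans_le hε

lemma osc_limit {α : Type*} [TopologicalSpace α] {S : Set α} {f : ℕ → α → ℂ} {C : ℝ} (hC : 0 < C)
    (h : ∀ n, ∀ z ∈ S, dist (f n z) (f (n + 1) z) ≤ C / 2 / 2 ^ n) (ho : ∀ n, Osc (f n) S (C / 2 ^ n)) :
    ∃ g : α → ℂ, ContinuousOn g S ∧ (∀ z ∈ S, Tendsto (fun n => f n z) atTop (𝓝 (g z))) ∧
      ∀ n, ∀ z ∈ S, dist (f n z) (g z) ≤ C / 2 ^ n := by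
  have hl : ∀ z, ∃ l, z ∈ S → Tendsto (fun n => f n z) atTop (𝓝 l) := by
    intro z
    by_cases hz : z ∈ S
    · obtain ⟨l, hl⟩ := cauchySeq_tendsto_of_complete
        (cauchySeq_of_le_geometric_two (f := fun n => f n z) (C := C) (fun n => h n z hz))
      exact ⟨l, fun _ => hl⟩
    · exact ⟨0, fun h => absurd h hz⟩
  choose g hg using hl
  have hd : ∀ n, ∀ z ∈ S, dist (f n z) (g z) ≤ C / 2 ^ n := fun n z hz =>
    dist_le_of_le_geometric_two_of_tendsto (f := fun n => f n z) (C := C) (fun n => h n z hz) (hg z hz) n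
  refine ⟨g, ?_, hg, hd⟩
  intro z hz
  rw [ContinuousWithinAt, Metric.tendsto_nhds]
  intro ε hε
  obtain ⟨n, hn⟩ : ∃ n : ℕ, C / 2 ^ n < ε / 3 := by
    obtain ⟨n, hn⟩ := exists_pow_lt_of_lt_one (show 0 < ε / 3 / C by positivity) (show (1/2 : ℝ) < 1 by norm_num)
    refine ⟨n, ?_⟩
    rw [lt_div_iff₀ hC] at hn
    rw [div_eq_mul_inv, ← inv_pow, mul_comm]
    simpa using hn
  filter_upwards [ho n z hz, self_mem_nhdsWithin] with w hw hwS
  have h1 := hd n z hz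
  have h2 := hd n w hwS
  have h3 := dist_triangle4 (g w) (f n w) (f n z) (g z)
  rw [dist_comm] at h2
  linarith

lemma refine_chain {K : Set ℂ} {a b : ℂ} {ε δ : ℝ} 
    (h : ∀ x ∈ K, ∀ y ∈ K, dist x y < δ → ∃ T ⊆ K, IsPreconnected T ∧ x ∈ T ∧ y ∈ T ∧ T ⊆ closedBall x ε)
    {N : ℕ} {x : ℕ → ℂ} (hxK : ∀ k, x k ∈ K) (hx0 : x 0 = a) (hxN : ∀ k, N ≤ k → x k = b)
    (hxd : ∀ k, dist (x k) (x (k + 1)) < δ) {δ' : ℝ} (hδ' : 0 < δ') :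
    ∃ M > 0, ∃ x' : ℕ → ℂ, (∀ k, x' k ∈ K) ∧ x' 0 = a ∧ (∀ k, N * M ≤ k → x' k = b) ∧
      (∀ k, dist (x' k) (x' (k + 1)) < δ') ∧ ∀ m, dist (x' m) (x (m / M)) ≤ ε := by
  have hch : ∀ k, ∃ (n : ℕ) (c : ℕ → ℂ), (∀ j, c j ∈ K ∧ dist (c j) (x k) ≤ ε) ∧ c 0 = x k ∧
      (∀ j, n ≤ j → c j = x (k + 1)) ∧ (∀ j, dist (c j) (c (j + 1)) < δ') ∧ (N ≤ k → n = 0) := by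
    intro k
    obtain ⟨T, t1, t2, t3, t4, t5⟩ := h _ (hxK k) _ (hxK (k + 1)) (hxd k)
    by_cases hk : N ≤ k
    · refine ⟨0, fun _ => x k, ?_, rfl, ?_, ?_, fun _ => rfl⟩
      · intro j; exact ⟨hxK k, t5 t3⟩
      · intro j _; rw [hxN k hk, hxN (k + 1) (by omega)]
      · intro j; simpa using hδ'
    · obtain ⟨n, c, h1, h2, h3, h4⟩ := exists_chain t2 t3 t4 hδ'
      exact ⟨n, c, fun j => ⟨t1 (h1 j), t5 (h1 j)⟩, h2, h3, h4, fun h => absurd h hk⟩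
  choose n c h1 h2 h3 h4 h5 using hch
  let M := (Finset.range N).sup n + 1
  have hM : ∀ k, n k ≤ M := by
    intro k
    by_cases hk : N ≤ k
    · rw [h5 k hk]; exact Nat.zero_le _
    · exact (Finset.le_sup (f := n) (Finset.mem_range.2 (by omega))).trans (Nat.le_succ _)
  have hM0 : 0 < M := Nat.succ_pos _
  refine ⟨M, hM0, fun m => c (m / M) (m % M), fun k => (h1 _ _).1, by simp [h2, hx0], ?_, ?_, ?_⟩
  · intro k hk
    have hk' : N ≤ k / M := (Nat.le_div_iff_mul_le hM0).2 hk
    beta_reduce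
    rw [h3 _ _ (by rw [h5 _ hk']; omega), hxN _ (by omega)]
  · intro k
    beta_reduce
    by_cases hk : k % M + 1 < M
    · have e1 : (k + 1) / M = k / M := by
        have := Nat.div_add_mod k M
        have e : k + 1 = (k % M + 1) + M * (k / M) := by omega
        rw [e, Nat.add_mul_div_left _ _ hM0, Nat.div_eq_of_lt hk, zero_add]
      have e2 : (k + 1) % M = k % M + 1 := by
        rw [Nat.add_mod, Nat.mod_eq_of_lt (a := k % M + 1 % M)]
        · rw [Nat.mod_eq_of_lt (a := 1) (by omega)]
        · rw [Nat.mod_eq_of_lt (a := 1) (by omega)]; exact hk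
      rw [e1, e2]; exact h4 _ _
    · have hlt := Nat.mod_lt k hM0
      have hk' : k % M + 1 = M := by omega
      have e : k + 1 = M * (k / M + 1) := by
        have := Nat.div_add_mod k M
        rw [mul_add]; omega
      rw [e, Nat.mul_div_cancel_left _ hM0, Nat.mul_mod_right, h2, ← h3 (k / M) M (hM _)]
      conv_lhs => rw [← hk']
      rw [hk']
      have := h4 (k / M) (k % M)
      rwa [hk'] at this
  · intro m
    exact (h1 _ _).2

lemma floor_close {a b : ℝ} (h : a < b + 1) : ⌊a⌋₊ ≤ ⌊b⌋₊ + 1 := by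
  rcases lt_or_ge a 0 with h0 | h0
  · rw [Nat.floor_of_nonpos h0.le]; omega
  · have h1 := Nat.floor_le h0
    have h2 := Nat.lt_floor_add_one b
    have : (⌊a⌋₊ : ℝ) < ⌊b⌋₊ + 1 + 1 := by linarith
    have : ⌊a⌋₊ < ⌊b⌋₊ + 1 + 1 := by exact_mod_cast this
    omega

lemma exists_path {K : Set ℂ} (hK : IsCompact K) (u : ULC K) {T : Set ℂ} (hTK : T ⊆ K)
    (hT : IsPreconnected T) {x y : ℂ} (hx : x ∈ T) (hy : y ∈ T) {η : ℝ} (hη : 0 < η) :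
    ∃ γ : ℝ → ℂ, Continuous γ ∧ γ 0 = x ∧ γ 1 = y ∧ (∀ t, γ t ∈ K) ∧ ∀ t, ∃ c ∈ T, dist (γ t) c ≤ η := by
  obtain ⟨s, hI, hΩ, hD⟩ := iterate_states (σ := ℕ × (ℕ → ℂ))
    (fun δ s => 0 < s.1 ∧ (∀ k, s.2 k ∈ K) ∧ s.2 0 = x ∧ (∀ k, s.1 ≤ k → s.2 k = y) ∧
      ∀ k, dist (s.2 k) (s.2 (k + 1)) < δ)
    (fun δ δ' s h ⟨h1, h2, h3, h4, h5⟩ => ⟨h1, h2, h3, h4, fun k => (h5 k).trans_le h⟩)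
    (fun ε s s' => ∃ M > 0, s'.1 = s.1 * M ∧ ∀ m, dist (s'.2 m) (s.2 (m / M)) ≤ ε)
    (by
      intro ε hε
      obtain ⟨δ, hδ, h⟩ := u ε hε
      refine ⟨δ, hδ, ?_⟩
      rintro ⟨N, z⟩ ⟨h1, h2, h3, h4, h5⟩ δ' hδ'
      obtain ⟨M, hM, x', g1, g2, g3, g4, g5⟩ := refine_chain h h2 h3 h4 h5 hδ'
      exact ⟨(N * M, x'), ⟨Nat.mul_pos h1 hM, g1, g2, g3, g4⟩, M, hM, rfl, g5⟩)
    (fun s => ∀ k, s.2 k ∈ T)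
    (by
      intro δ hδ
      obtain ⟨N, c, h1, h2, h3, h4⟩ := exists_chain hT hx hy hδ
      exact ⟨(N + 1, c), ⟨Nat.succ_pos _, fun k => hTK (h1 k), h2, fun k hk => h3 k (by
        have hk : N + 1 ≤ k := hk
        omega), h4⟩, h1⟩)
    (fun n => η / 2 / 2 ^ n) (fun n => η / 2 ^ n) (fun n => by positivity) (fun n => by positivity)
  let f : ℕ → ℝ → ℂ := fun n t => (s n).2 ⌊(s n).1 * t⌋₊
  obtain ⟨g, hg, hgl, hgd⟩ := osc_limit (S := univ) (f := f) hη (by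
    intro n t _
    obtain ⟨M, hM, hN, hd⟩ := hD n
    have := hd ⌊((s (n + 1)).1 : ℝ) * t⌋₊
    have e : ⌊((s (n + 1)).1 : ℝ) * t⌋₊ / M = ⌊((s n).1 : ℝ) * t⌋₊ := by
      rw [← Nat.floor_div_natCast, hN]
      congr 1
      push_cast
      have : (M : ℝ) ≠ 0 := by positivity
      field_simp
    rw [e] at this
    rw [dist_comm]
    exact this) (by
    intro n t _
    obtain ⟨h1, h2, h3, h4, h5⟩ := hΩ n
    have hpos : (0 : ℝ) < (s n).1 := by exact_mod_cast h1
    rw [nhdsWithin_univ]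
    filter_upwards [ball_mem_nhds t (show (0:ℝ) < 1 / (s n).1 by positivity)] with r hr
    rw [mem_ball, Real.dist_eq, lt_div_iff₀ hpos] at hr
    have u1 := le_abs_self (r - t)
    have u2 := neg_abs_le (r - t)
    have v1 : ⌊((s n).1 : ℝ) * r⌋₊ ≤ ⌊((s n).1 : ℝ) * t⌋₊ + 1 := floor_close (by nlinarith)
    have v2 : ⌊((s n).1 : ℝ) * t⌋₊ ≤ ⌊((s n).1 : ℝ) * r⌋₊ + 1 := floor_close (by nlinarith)
    show dist ((s n).2 ⌊((s n).1 : ℝ) * r⌋₊) ((s n).2 ⌊((s n).1 : ℝ) * t⌋₊) < η / 2 ^ n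
    rcases lt_trichotomy ⌊((s n).1 : ℝ) * r⌋₊ ⌊((s n).1 : ℝ) * t⌋₊ with h | h | h
    · have e : ⌊((s n).1 : ℝ) * t⌋₊ = ⌊((s n).1 : ℝ) * r⌋₊ + 1 := by omega
      rw [e]; exact h5 _
    · rw [h, dist_self]; positivity
    · have e : ⌊((s n).1 : ℝ) * r⌋₊ = ⌊((s n).1 : ℝ) * t⌋₊ + 1 := by omega
      rw [e, dist_comm]; exact h5 _)
  rw [continuousOn_univ] at hg
  refine ⟨g, hg, ?_, ?_, ?_, ?_⟩
  · refine tendsto_nhds_unique (hgl 0 (mem_univ _)) ?_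
    have : (fun n => f n 0) = fun _ => x := by
      ext1 n; simp [f, (hΩ n).2.2.1]
    rw [this]; exact tendsto_const_nhds
  · refine tendsto_nhds_unique (hgl 1 (mem_univ _)) ?_
    have : (fun n => f n 1) = fun _ => y := by
      ext1 n
      simp only [f, mul_one, Nat.floor_natCast]
      exact (hΩ n).2.2.2.1 _ le_rfl
    rw [this]; exact tendsto_const_nhds
  · intro t
    exact hK.isClosed.mem_of_tendsto (hgl t (mem_univ _)) (Eventually.of_forall fun n => (hΩ n).2.1 _)
  · intro t
    refine ⟨f 0 t, hI _, ?_⟩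
    have := hgd 0 t (mem_univ _)
    rw [dist_comm]
    simpa using this

/-- Path version of uniform local connectedness. -/
lemma ULC.paths {K : Set ℂ} (hK : IsCompact K) (u : ULC K) {ε : ℝ} (hε : 0 < ε) :
    ∃ δ > 0, ∀ x ∈ K, ∀ y ∈ K, dist x y < δ → ∃ γ : ℝ → ℂ, Continuous γ ∧ γ 0 = x ∧ γ 1 = y ∧
      (∀ t, γ t ∈ K) ∧ ∀ t, dist (γ t) x ≤ ε := by
  obtain ⟨δ, hδ, h⟩ := u (ε / 2) (by positivity)
  refine ⟨δ, hδ, fun x hx y hy hxy => ?_⟩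
  obtain ⟨T, t1, t2, t3, t4, t5⟩ := h x hx y hy hxy
  obtain ⟨γ, g1, g2, g3, g4, g5⟩ := exists_path hK u t1 t2 t3 t4 (show 0 < ε / 2 by positivity)
  refine ⟨γ, g1, g2, g3, g4, fun t => ?_⟩
  obtain ⟨c, hc, hd⟩ := g5 t
  have := t5 hc
  rw [mem_closedBall] at this
  linarith [dist_triangle (γ t) c x]

end THelly


open Set Filter Topology Metric

namespace THelly

lemma edge_paths {D : Set ℂ} (hD : IsCompact D) (u : ULC D) (hc : IsPreconnected D) {ε : ℝ}
    (hε : 0 < ε) : ∃ δ > 0, ∀ x ∈ D, ∀ y ∈ D, ∃ γ : ℝ → ℂ, Continuous γ ∧ γ 0 = x ∧ γ 1 = y ∧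
      (∀ t, γ t ∈ D) ∧ (dist x y < δ → ∀ t, dist (γ t) x ≤ ε) := by
  obtain ⟨δ, hδ, h⟩ := u.paths hD hε
  refine ⟨δ, hδ, fun x hx y hy => ?_⟩
  by_cases hxy : dist x y < δ
  · obtain ⟨γ, h1, h2, h3, h4, h5⟩ := h x hx y hy hxy
    exact ⟨γ, h1, h2, h3, h4, fun _ => h5⟩
  · obtain ⟨γ, h1, h2, h3, h4, -⟩ := exists_path hD u subset_rfl hc hx hy one_pos
    exact ⟨γ, h1, h2, h3, h4, fun h => absurd h hxy⟩

/-- The unit grid lines. -/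
def Grid : Set (ℝ × ℝ) := {p | Int.fract p.1 = 0 ∨ Int.fract p.2 = 0}

lemma grid_cases {p : ℝ × ℝ} (hp : p ∈ Grid) : ∃ (i j : ℤ) (τ : ℝ), τ ∈ Icc (0:ℝ) 1 ∧
    (p = ((i : ℝ) + τ, (j : ℝ)) ∨ p = ((i : ℝ), (j : ℝ) + τ)) := by
  rcases hp with hp | hp
  · refine ⟨⌊p.1⌋, ⌊p.2⌋, Int.fract p.2, ⟨Int.fract_nonneg _, (Int.fract_lt_one _).le⟩, Or.inr ?_⟩
    ext
    · simp only; have := Int.floor_add_fract p.1; rw [hp, add_zero] at this; exact this.symm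
    · simp only; rw [Int.floor_add_fract]
  · refine ⟨⌊p.1⌋, ⌊p.2⌋, Int.fract p.1, ⟨Int.fract_nonneg _, (Int.fract_lt_one _).le⟩, Or.inl ?_⟩
    ext
    · simp only; rw [Int.floor_add_fract]
    · simp only; have := Int.floor_add_fract p.2; rw [hp, add_zero] at this; exact this.symm

lemma grid_glue (y : ℤ → ℤ → ℂ) (H W : ℤ → ℤ → ℝ → ℂ)
    (hH : ∀ i j, ContinuousOn (H i j) (Icc 0 1)) (hW : ∀ i j, ContinuousOn (W i j) (Icc 0 1))
    (H0 : ∀ i j, H i j 0 = y i j) (H1 : ∀ i j, H i j 1 = y (i + 1) j)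
    (W0 : ∀ i j, W i j 0 = y i j) (W1 : ∀ i j, W i j 1 = y i (j + 1)) :
    ∃ e : ℝ × ℝ → ℂ, ContinuousOn e Grid ∧ ∀ (i j : ℤ), ∀ τ ∈ Icc (0:ℝ) 1,
      e ((i : ℝ) + τ, (j : ℝ)) = H i j τ ∧ e ((i : ℝ), (j : ℝ) + τ) = W i j τ := by
  classical
  let e : ℝ × ℝ → ℂ := fun p => if Int.fract p.2 = 0 then H ⌊p.1⌋ ⌊p.2⌋ (Int.fract p.1) else
    W ⌊p.1⌋ ⌊p.2⌋ (Int.fract p.2)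
  have hfl : ∀ (i : ℤ) (τ : ℝ), τ ∈ Icc (0:ℝ) 1 → τ ≠ 1 → ⌊(i : ℝ) + τ⌋ = i ∧ Int.fract ((i : ℝ) + τ) = τ := by
    intro i τ hτ h1
    have hlt : τ < 1 := lt_of_le_of_ne hτ.2 h1
    have h0 : ⌊τ⌋ = 0 := Int.floor_eq_zero_iff.2 ⟨hτ.1, hlt⟩
    refine ⟨by simp [h0], ?_⟩
    rw [Int.fract_intCast_add, Int.fract_eq_self.2 ⟨hτ.1, hlt⟩]
  have hvert : ∀ i j : ℤ, e ((i : ℝ), (j : ℝ)) = y i j := by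
    intro i j
    simp [e, H0]
  have he : ∀ (i j : ℤ), ∀ τ ∈ Icc (0:ℝ) 1,
      e ((i : ℝ) + τ, (j : ℝ)) = H i j τ ∧ e ((i : ℝ), (j : ℝ) + τ) = W i j τ := by
    intro i j τ hτ
    by_cases h1 : τ = 1
    · subst h1
      rw [H1, W1, ← hvert, ← hvert]
      push_cast
      exact ⟨rfl, rfl⟩
    · constructor
      · have := hfl i τ hτ h1
        simp only [e, this.1, this.2, Int.fract_intCast, Int.floor_intCast, if_true]
      · have := hfl j τ hτ h1
        by_cases h0 : τ = 0
        · subst h0; rw [add_zero, hvert, W0]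
        · simp only [e, this.1, this.2, Int.floor_intCast, h0, if_false]
  refine ⟨e, ?_, he⟩
  let E : (ℤ × ℤ) × Bool → Set (ℝ × ℝ) := fun q => if q.2 then
    Icc (q.1.1 : ℝ) (q.1.1 + 1) ×ˢ {(q.1.2 : ℝ)} else {(q.1.1 : ℝ)} ×ˢ Icc (q.1.2 : ℝ) (q.1.2 + 1)
  have hsub : Grid ⊆ ⋃ q, E q := by
    intro p hp
    obtain ⟨i, j, τ, hτ, h | h⟩ := grid_cases hp
    · rw [mem_iUnion]
      refine ⟨((i, j), true), ?_⟩
      simp only [E, if_true, h]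
      exact ⟨⟨by simpa using hτ.1, by simpa using hτ.2⟩, rfl⟩
    · rw [mem_iUnion]
      refine ⟨((i, j), false), ?_⟩
      simp only [E, h]
      exact ⟨rfl, ⟨by simpa using hτ.1, by simpa using hτ.2⟩⟩
  refine ContinuousOn.mono ?_ hsub
  apply LocallyFinite.continuousOn_iUnion
  · intro p
    refine ⟨Ioo (p.1 - 1) (p.1 + 1) ×ˢ Ioo (p.2 - 1) (p.2 + 1), prod_mem_nhds
      (Ioo_mem_nhds (by linarith) (by linarith)) (Ioo_mem_nhds (by linarith) (by linarith)), ?_⟩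
    apply (((finite_Icc (⌊p.1⌋ - 3) (⌊p.1⌋ + 3)).prod (finite_Icc (⌊p.2⌋ - 3) (⌊p.2⌋ + 3))).prod
      (finite_univ (α := Bool))).subset
    rintro ⟨⟨i, j⟩, b⟩ ⟨q, hq, hq1, hq2⟩
    have a1 := Int.floor_le p.1
    have a2 := Int.lt_floor_add_one p.1
    have a3 := Int.floor_le p.2
    have a4 := Int.lt_floor_add_one p.2
    have key : (i : ℝ) ≤ q.1 ∧ q.1 ≤ i + 1 ∧ (j : ℝ) ≤ q.2 ∧ q.2 ≤ j + 1 := by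
      rcases b with _ | _
      · obtain ⟨h1, h2⟩ : q ∈ {(i : ℝ)} ×ˢ Icc (j : ℝ) (j + 1) := hq
        rw [mem_singleton_iff] at h1
        exact ⟨h1.ge, by linarith, h2.1, h2.2⟩
      · obtain ⟨h1, h2⟩ : q ∈ Icc (i : ℝ) (i + 1) ×ˢ {(j : ℝ)} := hq
        rw [mem_singleton_iff] at h2
        exact ⟨h1.1, h1.2, h2.ge, by linarith⟩
    obtain ⟨k1, k2, k3, k4⟩ := key
    obtain ⟨m1, m2⟩ := hq1
    obtain ⟨m3, m4⟩ := hq2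
    refine ⟨⟨⟨?_, ?_⟩, ⟨?_, ?_⟩⟩, mem_univ _⟩
    · simp only; have : ((⌊p.1⌋ - 3 : ℤ) : ℝ) ≤ i := by push_cast; linarith
      exact_mod_cast this
    · simp only; have : (i : ℝ) ≤ ((⌊p.1⌋ + 3 : ℤ) : ℝ) := by push_cast; linarith
      exact_mod_cast this
    · simp only; have : ((⌊p.2⌋ - 3 : ℤ) : ℝ) ≤ j := by push_cast; linarith
      exact_mod_cast this
    · simp only; have : (j : ℝ) ≤ ((⌊p.2⌋ + 3 : ℤ) : ℝ) := by push_cast; linarith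
      exact_mod_cast this
  · rintro ⟨⟨i, j⟩, b⟩
    rcases b with _ | _
    · exact isClosed_singleton.prod isClosed_Icc
    · exact isClosed_Icc.prod isClosed_singleton
  · rintro ⟨⟨i, j⟩, b⟩
    rcases b with _ | _
    · show ContinuousOn e ({(i : ℝ)} ×ˢ Icc (j : ℝ) (j + 1))
      have hc : ContinuousOn (fun p : ℝ × ℝ => W i j (p.2 - j)) ({(i : ℝ)} ×ˢ Icc (j : ℝ) (j + 1)) := by
        refine (hW i j).comp (by fun_prop) ?_
        rintro p ⟨-, h2⟩
        exact ⟨by linarith [h2.1], by linarith [h2.2]⟩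
      refine hc.congr ?_
      rintro p ⟨h1, h2⟩
      rw [mem_singleton_iff] at h1
      have := (he i j (p.2 - j) ⟨by linarith [h2.1], by linarith [h2.2]⟩).2
      beta_reduce
      rw [← this, add_sub_cancel, ← h1]
    · show ContinuousOn e (Icc (i : ℝ) (i + 1) ×ˢ {(j : ℝ)})
      have hc : ContinuousOn (fun p : ℝ × ℝ => H i j (p.1 - i)) (Icc (i : ℝ) (i + 1) ×ˢ {(j : ℝ)}) := by
        refine (hH i j).comp (by fun_prop) ?_
        rintro p ⟨h2, -⟩
        exact ⟨by linarith [h2.1], by linarith [h2.2]⟩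
      refine hc.congr ?_
      rintro p ⟨h2, h1⟩
      rw [mem_singleton_iff] at h1
      have := (he i j (p.1 - i) ⟨by linarith [h2.1], by linarith [h2.2]⟩).1
      beta_reduce
      rw [← this, add_sub_cancel, ← h1]

end THelly


open Set Filter Topology Metric

namespace THelly

lemma NS.exists_thick_unif {D : Set ℂ} (hD : NS D) {δ : ℝ} (hδ : 0 < δ) :
    ∃ η > 0, ∀ z, δ ≤ infDist z D → z ∉ fill (cthickening η D) := by
  rcases D.eq_empty_or_nonempty with rfl | hne
  · refine ⟨1, one_pos, fun z hz => ?_⟩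
    rw [infDist_empty] at hz
    linarith
  obtain ⟨R₀, hR₀⟩ := hD.cpt.isBounded.exists_norm_le
  set R := max R₀ 0 with hR
  have hRD : D ⊆ closedBall 0 R := fun x hx => by
    rw [mem_closedBall, dist_zero_right]; exact (hR₀ x hx).trans (le_max_left _ _)
  have hR0 : 0 ≤ R := le_max_right _ _
  have hKc : IsClosed {z : ℂ | δ ≤ infDist z D} := isClosed_le continuous_const (continuous_infDist_pt D)
  obtain ⟨η, h1, h2, h3⟩ := exists_thick_compact (A := fun _ : Unit => D) (fun _ => hD)
    ((isCompact_closedBall (0:ℂ) (R + 1)).inter_right hKc) (by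
      intro z hz
      refine ⟨(), fun h => ?_⟩
      have hz2 : δ ≤ infDist z D := hz.2
      rw [infDist_zero_of_mem h] at hz2
      linarith)
  refine ⟨η, h1, fun z hz => ?_⟩
  by_cases hzR : R + 1 < ‖z‖
  · refine exterior_subset_compl_fill (R := R + 1) ?_ hzR
    refine (cthickening_mono h2 _).trans ((cthickening_subset_of_subset _ hRD).trans ?_)
    rw [cthickening_closedBall zero_le_one hR0, add_comm]
  · obtain ⟨_, hi⟩ := h3 z ⟨by rw [mem_closedBall, dist_zero_right]; linarith, hz⟩
    exact hi

/-- scaled coordinates -/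
noncomputable def kap (h : ℝ) (w : ℂ) : ℝ × ℝ := (w.re / h, w.im / h)

/-- inverse of scaled coordinates -/
noncomputable def kinv (h : ℝ) (p : ℝ × ℝ) : ℂ := ⟨h * p.1, h * p.2⟩

lemma kap_cont (h : ℝ) : Continuous (kap h) := by
  unfold kap
  exact (Complex.continuous_re.div_const h).prodMk (Complex.continuous_im.div_const h)

lemma kinv_cont (h : ℝ) : Continuous (kinv h) := by
  have : kinv h = fun p => ((h * p.1 : ℝ) : ℂ) + ((h * p.2 : ℝ) : ℂ) * Complex.I := by
    ext p; simp [kinv, Complex.mk_eq_add_mul_I]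
  rw [this]; fun_prop

lemma kinv_kap {h : ℝ} (hh : h ≠ 0) (w : ℂ) : kinv h (kap h w) = w := by
  apply Complex.ext <;> simp only [kinv, kap] <;> field_simp

lemma kap_kinv {h : ℝ} (hh : h ≠ 0) (p : ℝ × ℝ) : kap h (kinv h p) = p := by
  apply Prod.ext <;> simp only [kinv, kap] <;> field_simp

/-- open unit cell -/
def Cell (c : ℤ × ℤ) : Set (ℝ × ℝ) := Ioo (c.1 : ℝ) (c.1 + 1) ×ˢ Ioo (c.2 : ℝ) (c.2 + 1)

/-- center of a cell -/
noncomputable def ctr (c : ℤ × ℤ) : ℝ × ℝ := ((c.1 : ℝ) + 1 / 2, (c.2 : ℝ) + 1 / 2)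

/-- 3 by 3 block of cells -/
def Block (c : ℤ × ℤ) : Set (ℤ × ℤ) := {d | |d.1 - c.1| ≤ 1 ∧ |d.2 - c.2| ≤ 1}

/-- floor cell -/
noncomputable def fcell (p : ℝ × ℝ) : ℤ × ℤ := (⌊p.1⌋, ⌊p.2⌋)

lemma cell_disj_grid {c : ℤ × ℤ} {p : ℝ × ℝ} (hp : p ∈ Cell c) : p ∉ Grid := by
  have hf : ∀ (i : ℤ) (x : ℝ), (i : ℝ) < x → x < i + 1 → Int.fract x ≠ 0 := by
    intro i x h1 h2 h3
    have : ⌊x⌋ = i := Int.floor_eq_iff.2 ⟨h1.le, h2⟩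
    have h4 := Int.floor_add_fract x
    rw [h3, this] at h4
    linarith
  rintro (h | h)
  · exact hf _ _ hp.1.1 hp.1.2 h
  · exact hf _ _ hp.2.1 hp.2.2 h

lemma mem_fcell {p : ℝ × ℝ} (hp : p ∉ Grid) : p ∈ Cell (fcell p) := by
  have h1 : Int.fract p.1 ≠ 0 := fun h => hp (Or.inl h)
  have h2 : Int.fract p.2 ≠ 0 := fun h => hp (Or.inr h)
  have h1' := lt_of_le_of_ne (Int.fract_nonneg p.1) h1.symm
  have h2' := lt_of_le_of_ne (Int.fract_nonneg p.2) h2.symm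
  have e1 := Int.floor_add_fract p.1
  have e2 := Int.floor_add_fract p.2
  refine ⟨⟨?_, Int.lt_floor_add_one _⟩, ⟨?_, Int.lt_floor_add_one _⟩⟩
  · simp only [fcell]; linarith
  · simp only [fcell]; linarith

/-- radial push away from the center of a cell -/
noncomputable def pushOut (c p : ℝ × ℝ) : ℝ × ℝ := c + (max 1 ((3/2) / ‖p - c‖)) • (p - c)

lemma pushOut_cont (c : ℝ × ℝ) : ContinuousOn (pushOut c) {p | p ≠ c} := by
  unfold pushOut
  apply ContinuousOn.add continuousOn_const
  apply ContinuousOn.fun_smul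
  · refine ContinuousOn.sup continuousOn_const (g := fun p : ℝ × ℝ => (3/2) / ‖p - c‖) ?_
    apply ContinuousOn.div continuousOn_const (by fun_prop)
    intro p hp
    rw [norm_ne_zero_iff, sub_ne_zero]; exact hp
  · fun_prop

lemma pushOut_eq {c p : ℝ × ℝ} (h : 3/2 ≤ ‖p - c‖) : pushOut c p = p := by
  unfold pushOut
  rw [max_eq_left, one_smul, add_sub_cancel]
  rw [div_le_one (by linarith)]; exact h

lemma pushOut_norm {c p : ℝ × ℝ} (hp : p ≠ c) (h : ‖p - c‖ < 3/2) : ‖pushOut c p - c‖ = 3/2 := by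
  have h0 : 0 < ‖p - c‖ := norm_pos_iff.2 (sub_ne_zero.2 hp)
  unfold pushOut
  rw [add_sub_cancel_left, max_eq_right, norm_smul, Real.norm_of_nonneg (by positivity)]
  · field_simp
  · rw [le_div_iff₀ h0]; linarith

lemma grid_of_norm {c : ℤ × ℤ} {p : ℝ × ℝ} (h : ‖p - ctr c‖ = 3/2) : p ∈ Grid := by
  rw [Prod.norm_def, Real.norm_eq_abs, Real.norm_eq_abs] at h
  have hf : ∀ (i : ℤ) (x : ℝ), |x - (i + 1/2)| = 3/2 → Int.fract x = 0 := by
    intro i x hx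
    rcases (abs_eq (by norm_num)).1 hx with h | h
    · have : x = ((i + 2 : ℤ) : ℝ) := by push_cast; linarith
      rw [this, Int.fract_intCast]
    · have : x = ((i - 1 : ℤ) : ℝ) := by push_cast; linarith
      rw [this, Int.fract_intCast]
  rcases max_choice |(p - ctr c).1| |(p - ctr c).2| with h' | h'
  · left; rw [h'] at h; exact hf c.1 _ h
  · right; rw [h'] at h; exact hf c.2 _ h

lemma cell_block {c d : ℤ × ℤ} (hd : d ∈ Block c) {p : ℝ × ℝ} (hp : p ∈ Cell d) : ‖p - ctr c‖ < 3/2 := by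
  rw [Prod.norm_def, Real.norm_eq_abs, Real.norm_eq_abs]
  have hf : ∀ (i j : ℤ) (x : ℝ), |j - i| ≤ 1 → (j : ℝ) < x → x < j + 1 → |x - (i + 1/2)| < 3/2 := by
    intro i j x h1 h2 h3
    have h4 : |(j : ℝ) - i| ≤ 1 := by exact_mod_cast h1
    rw [abs_le] at h4
    rw [abs_lt]
    constructor <;> linarith
  exact max_lt (hf _ _ _ hd.1 hp.1.1 hp.1.2) (hf _ _ _ hd.2 hp.2.1 hp.2.2)

/-- The set `E` of cells can be avoided. -/
def Avoid (S B : Set (ℝ × ℝ)) (u : ℝ × ℝ → ℝ × ℝ) (E : Set (ℤ × ℤ)) : Prop :=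
  ∃ G : ℝ × ℝ → ℝ × ℝ, ContinuousOn G S ∧ EqOn G u B ∧ ∀ z ∈ S, ∀ c ∈ E, G z ∉ Cell c

lemma Avoid.step {S B : Set (ℝ × ℝ)} {u : ℝ × ℝ → ℝ × ℝ} {E : Set (ℤ × ℤ)} (h : Avoid S B u E)
    {c : ℤ × ℤ} (hc : c ∈ E) (hu : ∀ z ∈ B, 3/2 ≤ ‖u z - ctr c‖) : Avoid S B u (E ∪ Block c) := by
  obtain ⟨G, h1, h2, h3⟩ := h
  have hne : ∀ z ∈ S, G z ≠ ctr c := by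
    intro z hz h
    apply h3 z hz c hc
    rw [h]
    simp only [Cell, ctr, mem_prod, mem_Ioo]
    refine ⟨⟨?_, ?_⟩, ?_, ?_⟩ <;> linarith
  refine ⟨fun z => pushOut (ctr c) (G z), (pushOut_cont _).comp h1 hne, ?_, ?_⟩
  · intro z hz
    beta_reduce
    rw [h2 hz, pushOut_eq (hu z hz)]
  · intro z hz d hd hcell
    by_cases hn : ‖G z - ctr c‖ < 3/2
    · exact cell_disj_grid hcell (grid_of_norm (pushOut_norm (hne z hz) hn))
    · rw [not_lt] at hn
      beta_reduce at hcell
      rw [pushOut_eq hn] at hcell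
      rcases hd with hd | hd
      · exact h3 z hz d hd hcell
      · exact absurd (cell_block hd hcell) (not_lt.2 hn)

lemma Avoid.maximal {S B : Set (ℝ × ℝ)} {u : ℝ × ℝ → ℝ × ℝ} {E₀ : Set (ℤ × ℤ)} (h : Avoid S B u E₀)
    (hf : E₀ᶜ.Finite) : ∃ E, E₀ ⊆ E ∧ Avoid S B u E ∧
      ∀ c ∈ E, (∀ z ∈ B, 3/2 ≤ ‖u z - ctr c‖) → Block c ⊆ E := by
  classical
  have hex : ∃ n, ∃ E, E₀ ⊆ E ∧ Avoid S B u E ∧ Eᶜ.ncard = n := ⟨_, E₀, subset_rfl, h, rfl⟩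
  obtain ⟨E, h1, h2, h3⟩ := Nat.find_spec hex
  refine ⟨E, h1, h2, fun c hc hu => ?_⟩
  have hmin := Nat.find_min' hex ⟨E ∪ Block c, h1.trans subset_union_left, h2.step hc hu, rfl⟩
  rw [← h3] at hmin
  have : (E ∪ Block c)ᶜ = Eᶜ := Set.eq_of_subset_of_ncard_le
    (compl_subset_compl.2 subset_union_left) hmin (hf.subset (compl_subset_compl.2 h1))
  rw [compl_inj_iff] at this
  rw [← this]; exact subset_union_right

lemma kap_norm_le {h : ℝ} (hh : 0 < h) (v w : ℂ) : dist v w ≤ 2 * h * ‖kap h v - kap h w‖ := by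
  rw [dist_eq_norm]
  have h1 := Complex.norm_le_abs_re_add_abs_im (v - w)
  have h2 : |(v - w).re| = h * |(kap h v - kap h w).1| := by
    rw [← abs_of_pos hh, ← abs_mul, abs_of_pos hh]; congr 1; simp [kap]; field_simp
  have h3 : |(v - w).im| = h * |(kap h v - kap h w).2| := by
    rw [← abs_of_pos hh, ← abs_mul, abs_of_pos hh]; congr 1; simp [kap]; field_simp
  have h4 := norm_fst_le (kap h v - kap h w)
  have h5 := norm_snd_le (kap h v - kap h w)
  rw [Real.norm_eq_abs] at h4 h5
  nlinarith

lemma kap_norm_ge {h : ℝ} (hh : 0 < h) (v w : ℂ) : ‖kap h v - kap h w‖ ≤ dist v w / h := by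
  rw [dist_eq_norm, Prod.norm_def]
  have e1 : (kap h v - kap h w).1 = (v - w).re / h := by simp [kap]; ring
  have e2 : (kap h v - kap h w).2 = (v - w).im / h := by simp [kap]; ring
  rw [e1, e2, Real.norm_eq_abs, Real.norm_eq_abs, abs_div, abs_div, abs_of_pos hh]
  apply max_le
  · gcongr; exact Complex.abs_re_le_norm _
  · gcongr; exact Complex.abs_im_le_norm _

lemma floor_adj {x y : ℝ} (h : |x - y| < 1) : |⌊x⌋ - ⌊y⌋| ≤ 1 := by
  rw [abs_lt] at h
  have a1 := Int.floor_le x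
  have a2 := Int.lt_floor_add_one x
  have a3 := Int.floor_le y
  have a4 := Int.lt_floor_add_one y
  rw [abs_le]
  constructor
  · have : (⌊y⌋ : ℝ) < ⌊x⌋ + 2 := by linarith
    have : ⌊y⌋ < ⌊x⌋ + 2 := by exact_mod_cast this
    omega
  · have : (⌊x⌋ : ℝ) < ⌊y⌋ + 2 := by linarith
    have : ⌊x⌋ < ⌊y⌋ + 2 := by exact_mod_cast this
    omega

lemma fcell_dist (p : ℝ × ℝ) : ‖p - ctr (fcell p)‖ ≤ 1/2 := by
  rw [Prod.norm_def]
  have a1 := Int.floor_le p.1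
  have a2 := Int.lt_floor_add_one p.1
  have a3 := Int.floor_le p.2
  have a4 := Int.lt_floor_add_one p.2
  apply max_le
  · rw [Real.norm_eq_abs, abs_le]; simp only [Prod.fst_sub, ctr, fcell]; constructor <;> linarith
  · rw [Real.norm_eq_abs, abs_le]; simp only [Prod.snd_sub, ctr, fcell]; constructor <;> linarith

lemma push_lemma {D : Set ℂ} (hD : NS D) {S B : Set (ℝ × ℝ)} (hS : IsCompact S)
    {H : ℝ × ℝ → ℂ} (hH : ContinuousOn H S) (hB : ∀ z ∈ B, H z ∈ D) {δ : ℝ} (hδ : 0 < δ) :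
    ∃ h₀ > 0, ∀ h > 0, h ≤ h₀ → ∃ G : ℝ × ℝ → ℂ, ContinuousOn G S ∧ EqOn G H B ∧
      ∀ z ∈ S, infDist (G z) D < δ ∨ kap h (G z) ∈ Grid := by
  obtain ⟨η, hη, hV⟩ := hD.exists_thick_unif hδ
  refine ⟨η / 4, by positivity, fun h hh hh0 => ?_⟩
  have hh' : h ≠ 0 := hh.ne'
  have hGc : ContinuousOn (fun z => kap h (H z)) S := (kap_cont h).comp_continuousOn hH
  obtain ⟨n₀, hn₀⟩ := (hS.image_of_continuousOn hGc).isBounded.exists_norm_le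
  obtain ⟨n, hn⟩ := exists_nat_gt n₀
  let E₀ : Set (ℤ × ℤ) := (Icc (-(n:ℤ) - 1) n ×ˢ Icc (-(n:ℤ) - 1) n)ᶜ
  have hE₀ : E₀ᶜ.Finite := by
    simp only [E₀, compl_compl]; exact (finite_Icc _ _).prod (finite_Icc _ _)
  have hav : Avoid S B (fun z => kap h (H z)) E₀ := by
    refine ⟨_, hGc, fun z _ => rfl, ?_⟩
    intro z hz c hc hcell
    apply hc
    have hb := hn₀ _ ⟨z, hz, rfl⟩
    beta_reduce at hb hcell
    have hf : ∀ (i : ℤ) (x : ℝ), (i : ℝ) < x → x < i + 1 → |x| ≤ n₀ → i ∈ Icc (-(n:ℤ) - 1) n := by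
      intro i x h1 h2 h3
      rw [abs_le] at h3
      constructor
      · have : ((-(n:ℤ) - 1 : ℤ) : ℝ) ≤ i := by push_cast; linarith
        exact_mod_cast this
      · have : (i : ℝ) ≤ ((n : ℤ) : ℝ) := by push_cast; linarith
        exact_mod_cast this
    exact ⟨hf _ _ hcell.1.1 hcell.1.2 ((norm_fst_le _).trans hb),
      hf _ _ hcell.2.1 hcell.2.2 ((norm_snd_le _).trans hb)⟩
  obtain ⟨E, hE0, ⟨G, hG1, hG2, hG3⟩, hEb⟩ := hav.maximal hE₀
  let V : Set ℂ := (fill (cthickening η D))ᶜ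
  have hVc : IsPreconnected V := (fill_NS hD.cpt.cthickening).conn
  have hVd : ∀ w ∈ V, ∀ d ∈ D, η ≤ dist w d := by
    intro w hw d hd
    by_contra hlt
    push Not at hlt
    exact hw (subset_fill _ (mem_cthickening_of_dist_le w d η _ hd hlt.le))
  have hblock : ∀ w ∈ V, fcell (kap h w) ∈ E → Block (fcell (kap h w)) ⊆ E := by
    intro w hw hwE
    refine hEb _ hwE fun z hz => ?_
    beta_reduce
    have h1 := hVd w hw _ (hB z hz)
    have h2 := kap_norm_le hh w (H z)
    have h3 := fcell_dist (kap h w)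
    have h4 : (2:ℝ) ≤ ‖kap h w - kap h (H z)‖ := by
      by_contra hlt
      push Not at hlt
      nlinarith
    have h5 := norm_sub_le_norm_sub_add_norm_sub (kap h w) (ctr (fcell (kap h w))) (kap h (H z))
    rw [norm_sub_rev (ctr _)] at h5
    linarith
  have hspread : ∀ w ∈ V, ∀ w', dist w w' < h → fcell (kap h w) ∈ E → fcell (kap h w') ∈ E := by
    intro w hw w' hww hwE
    apply hblock w hw hwE
    have h1 := kap_norm_ge hh w' w
    have h2 : dist w' w / h < 1 := by rw [div_lt_one hh, dist_comm]; exact hww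
    have h3 := h1.trans_lt h2
    exact ⟨floor_adj ((norm_fst_le _).trans_lt h3), floor_adj ((norm_snd_le _).trans_lt h3)⟩
  -- far point
  obtain ⟨R₀, hR₀⟩ := (fill_NS (hD.cpt.cthickening (r := η))).cpt.isBounded.exists_norm_le
  let w₀ : ℂ := ((max R₀ 0 + h * (n + 2) + 1 : ℝ) : ℂ)
  have hmax0 : 0 ≤ max R₀ 0 := le_max_right _ _
  have hw₀V : w₀ ∈ V := by
    intro hw
    have := hR₀ _ hw
    simp only [w₀] at this
    rw [Complex.norm_real, Real.norm_of_nonneg (by positivity)] at this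
    have := le_max_left R₀ 0
    have : 0 < h * (n + 2) := by positivity
    linarith
  have hw₀E : fcell (kap h w₀) ∈ E := by
    apply hE0
    intro hmem
    have h1 : ⌊(max R₀ 0 + h * (n + 2) + 1) / h⌋ ≤ (n : ℤ) := hmem.1.2
    have h2 : ((n + 2 : ℤ) : ℝ) ≤ (max R₀ 0 + h * (n + 2) + 1) / h := by
      rw [le_div_iff₀ hh]; push_cast; nlinarith
    have := Int.le_floor.2 h2
    omega
  have hall : ∀ w ∈ V, fcell (kap h w) ∈ E := by
    intro w hw
    have key := hVc.induction₂ (fun a b => fcell (kap h a) ∈ E ↔ fcell (kap h b) ∈ E) ?_ ?_ ?_ hw₀V hw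
    · exact key.1 hw₀E
    · intro a ha
      filter_upwards [self_mem_nhdsWithin, mem_nhdsWithin_of_mem_nhds (ball_mem_nhds a hh)] with b hb hab
      rw [mem_ball] at hab
      exact ⟨hspread a ha b (by rwa [dist_comm]), hspread b hb a hab⟩
    · intro a b c _ _ _ h1 h2; exact h1.trans h2
    · intro a b _ _ h1; exact h1.symm
  refine ⟨fun z => kinv h (G z), (kinv_cont h).comp_continuousOn hG1, ?_, ?_⟩
  · intro z hz
    beta_reduce
    rw [hG2 hz, kinv_kap hh']
  · intro z hz
    beta_reduce
    by_cases hlt : infDist (kinv h (G z)) D < δ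
    · exact Or.inl hlt
    · right
      rw [not_lt] at hlt
      have h1 := hall _ (hV _ hlt)
      rw [kap_kinv hh'] at h1 ⊢
      by_contra hng
      exact hG3 z hz _ h1 (mem_fcell hng)

end THelly


open Set Filter Topology Metric

namespace THelly

/-- the unit square -/
def Sq : Set (ℝ × ℝ) := Icc 0 1 ×ˢ Icc 0 1

/-- its boundary -/
def bd : Set (ℝ × ℝ) := {p | p ∈ Sq ∧ (p.1 = 0 ∨ p.1 = 1 ∨ p.2 = 0 ∨ p.2 = 1)}

/-- clamping to the unit interval -/
noncomputable def cl (x : ℝ) : ℝ := max 0 (min 1 x)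

lemma cl_cont : Continuous cl := by unfold cl; fun_prop

lemma cl_mem (x : ℝ) : cl x ∈ Icc (0:ℝ) 1 :=
  ⟨le_max_left _ _, max_le zero_le_one (min_le_left _ _)⟩

lemma cl_eq {x : ℝ} (h : x ∈ Icc (0:ℝ) 1) : cl x = x := by
  unfold cl; rw [min_eq_right h.2, max_eq_right h.1]

lemma cl_of_le {x : ℝ} (h : x ≤ 0) : cl x = 0 := by
  unfold cl; rw [max_eq_left]; exact (min_le_right _ _).trans h

lemma cl_of_ge {x : ℝ} (h : 1 ≤ x) : cl x = 1 := by
  unfold cl; rw [min_eq_left h, max_eq_right zero_le_one]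

/-- the boundary path -/
noncomputable def bpath (t : ℝ) : ℝ × ℝ := (cl (min t (3 - t)), cl (min (t - 1) (4 - t)))

lemma bpath_cont : Continuous bpath := by
  unfold bpath
  exact (cl_cont.comp (by fun_prop)).prodMk (cl_cont.comp (by fun_prop))

lemma bpath_mem (t : ℝ) : bpath t ∈ bd := by
  refine ⟨⟨cl_mem _, cl_mem _⟩, ?_⟩
  simp only [bpath]
  rcases le_total t 1 with h | h
  · right; right; left; exact cl_of_le ((min_le_left _ _).trans (by linarith))
  rcases le_total t 2 with h2 | h2
  · right; left; exact cl_of_ge (le_min (by linarith) (by linarith))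
  rcases le_total t 3 with h3 | h3
  · right; right; right; exact cl_of_ge (le_min (by linarith) (by linarith))
  · left; exact cl_of_le ((min_le_right _ _).trans (by linarith))

lemma bpath_image : bpath '' Icc 0 4 = bd := by
  apply Subset.antisymm
  · rintro _ ⟨t, _, rfl⟩; exact bpath_mem t
  · rintro ⟨x, y⟩ ⟨⟨⟨hx0, hx1⟩, ⟨hy0, hy1⟩⟩, h⟩
    simp only at hx0 hx1 hy0 hy1 h
    rcases h with h | h | h | h
    · subst h
      refine ⟨4 - y, ⟨by linarith, by linarith⟩, ?_⟩
      simp only [bpath]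
      rw [cl_of_le ((min_le_right _ _).trans (by linarith)), min_eq_right (by linarith),
        cl_eq ⟨by linarith, by linarith⟩]
      ext <;> simp
    · subst h
      refine ⟨1 + y, ⟨by linarith, by linarith⟩, ?_⟩
      simp only [bpath]
      rw [cl_of_ge (le_min (by linarith) (by linarith)), min_eq_left (by linarith),
        cl_eq ⟨by linarith, by linarith⟩]
      ext <;> simp
    · subst h
      refine ⟨x, ⟨by linarith, by linarith⟩, ?_⟩
      simp only [bpath]
      rw [min_eq_left (by linarith), cl_eq ⟨hx0, hx1⟩, cl_of_le ((min_le_left _ _).trans (by linarith))]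
    · subst h
      refine ⟨3 - x, ⟨by linarith, by linarith⟩, ?_⟩
      simp only [bpath]
      rw [min_eq_right (by linarith), cl_eq ⟨by linarith, by linarith⟩,
        cl_of_ge (le_min (by linarith) (by linarith))]
      ext <;> simp

lemma bd_compact : IsCompact bd := by
  rw [← bpath_image]; exact isCompact_Icc.image bpath_cont

lemma Sq_compact : IsCompact Sq := isCompact_Icc.prod isCompact_Icc

lemma bd_subset : bd ⊆ Sq := fun _ h => h.1

lemma loop_cont {u : ℝ × ℝ → ℂ} (hu : ContinuousOn u bd) : Continuous (fun t => u (bpath t)) :=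
  hu.comp_continuous bpath_cont bpath_mem

lemma loop_image (u : ℝ × ℝ → ℂ) : u '' bd = (fun t => u (bpath t)) '' Icc 0 4 := by
  rw [← bpath_image, image_image]

lemma fill_loop {u : ℝ × ℝ → ℂ} (hu : ContinuousOn u bd) :
    NS (fill (u '' bd)) ∧ ULC (fill (u '' bd)) ∧ IsPreconnected (fill (u '' bd)) ∧
      (fill (u '' bd)).Nonempty := by
  have hc : IsCompact (u '' bd) := bd_compact.image_of_continuousOn hu
  refine ⟨fill_NS hc, ULC_fill hc ?_, fill_conn hc ?_, ?_⟩
  · rw [loop_image]; exact ULC_path (loop_cont hu) 0 4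
  · rw [loop_image]; exact isPreconnected_Icc.image _ (loop_cont hu).continuousOn
  · exact ⟨u (bpath 0), subset_fill _ ⟨_, bpath_mem 0, rfl⟩⟩

lemma kinv_dist {h : ℝ} (hh : 0 < h) (p : ℝ × ℝ) (w : ℂ) (hpw : ‖p - kap h w‖ ≤ 1) :
    dist (kinv h p) w ≤ 2 * h := by
  have := kap_norm_le hh (kinv h p) w
  rw [kap_kinv hh.ne'] at this
  nlinarith

lemma approx_fill {D : Set ℂ} (hD : NS D) (uD : ULC D) (cD : IsPreconnected D) (nD : D.Nonempty)
    {u : ℝ × ℝ → ℂ} (hu : ContinuousOn u bd) (huD : ∀ z ∈ bd, u z ∈ D) {ε : ℝ} (hε : 0 < ε) :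
    ∃ f : ℝ × ℝ → ℂ, (∀ z ∈ Sq, f z ∈ D) ∧ EqOn f u bd ∧ Osc f Sq ε := by
  classical
  obtain ⟨H, hH⟩ := ContinuousMap.exists_restrict_eq bd_compact.isClosed
    (⟨bd.restrict u, hu.restrict⟩ : C(bd, ℂ))
  have hHu : ∀ z ∈ bd, H z = u z := by
    intro z hz
    exact congrArg (fun g : C(bd, ℂ) => g ⟨z, hz⟩) hH
  obtain ⟨δ₁, hδ₁, hedge⟩ := edge_paths hD.cpt uD cD (ε := ε / 16) (by positivity)
  obtain ⟨δ, hδ0, hδ1, hδ2⟩ : ∃ δ > 0, δ ≤ δ₁ / 16 ∧ δ ≤ ε / 64 :=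
    ⟨min (δ₁ / 16) (ε / 64), lt_min (by positivity) (by positivity), min_le_left _ _, min_le_right _ _⟩
  obtain ⟨h₀, hh₀, hpush⟩ := push_lemma hD Sq_compact (B := bd) (H := H) H.continuous.continuousOn
    (fun z hz => by rw [hHu z hz]; exact huD z hz) hδ0
  obtain ⟨h, hh, hhh, hhδ⟩ : ∃ h > 0, h ≤ h₀ ∧ h ≤ δ :=
    ⟨min h₀ δ, lt_min hh₀ hδ0, min_le_left _ _, min_le_right _ _⟩
  obtain ⟨G, hG1, hG2, hG3⟩ := hpush h hh hhh
  have hnear : ∀ w, ∃ d ∈ D, infDist w D = dist w d := fun w => hD.cpt.exists_infDist_eq_dist nD w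
  choose nd hndD hnd using hnear
  have hP : ∀ x y, ∃ γ : ℝ → ℂ, x ∈ D → y ∈ D → Continuous γ ∧ γ 0 = x ∧ γ 1 = y ∧ (∀ t, γ t ∈ D) ∧
      (dist x y < δ₁ → ∀ t, dist (γ t) x ≤ ε / 16) := by
    intro x y
    by_cases hx : x ∈ D
    · by_cases hy : y ∈ D
      · obtain ⟨γ, h⟩ := hedge x hx y hy
        exact ⟨γ, fun _ _ => h⟩
      · exact ⟨fun _ => 0, fun _ h => absurd h hy⟩
    · exact ⟨fun _ => 0, fun h => absurd h hx⟩
  choose P hP using hP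
  let v : ℤ → ℤ → ℂ := fun i j => kinv h ((i:ℝ), (j:ℝ))
  let y : ℤ → ℤ → ℂ := fun i j => nd (v i j)
  have hyD : ∀ i j, y i j ∈ D := fun i j => hndD _
  obtain ⟨e, he1, he2⟩ := grid_glue y (fun i j => P (y i j) (y (i+1) j)) (fun i j => P (y i j) (y i (j+1)))
    (fun i j => (hP _ _ (hyD i j) (hyD _ _)).1.continuousOn)
    (fun i j => (hP _ _ (hyD i j) (hyD _ _)).1.continuousOn)
    (fun i j => (hP _ _ (hyD i j) (hyD _ _)).2.1)
    (fun i j => (hP _ _ (hyD i j) (hyD _ _)).2.2.1)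
    (fun i j => (hP _ _ (hyD i j) (hyD _ _)).2.1)
    (fun i j => (hP _ _ (hyD i j) (hyD _ _)).2.2.1)
  have heD : ∀ p ∈ Grid, e p ∈ D := by
    intro p hp
    obtain ⟨i, j, τ, hτ, rfl | rfl⟩ := grid_cases hp
    · rw [(he2 i j τ hτ).1]; exact (hP _ _ (hyD i j) (hyD _ _)).2.2.2.1 τ
    · rw [(he2 i j τ hτ).2]; exact (hP _ _ (hyD i j) (hyD _ _)).2.2.2.1 τ
  -- estimate
  have hvert : ∀ w, infDist w D < 2 * δ → ∀ i j : ℤ, ‖(((i:ℝ), (j:ℝ)) : ℝ × ℝ) - kap h w‖ ≤ 1 →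
      dist (y i j) w ≤ 6 * δ := by
    intro w hw i j hij
    have h1 := kinv_dist hh _ w hij
    have h2 : infDist (v i j) D ≤ infDist w D + dist (v i j) w := infDist_le_infDist_add_dist
    have h3 := hnd (v i j)
    have h4 := dist_triangle (nd (v i j)) (v i j) w
    rw [dist_comm (nd (v i j)) (v i j)] at h4
    change dist (nd (v i j)) w ≤ _
    change dist (v i j) w ≤ _ at h1
    linarith
  have hest : ∀ w, infDist w D < 2 * δ → kap h w ∈ Grid → dist (e (kap h w)) w < ε / 4 := by
    intro w hw hg
    have key : ∀ i j i' j' : ℤ, ∀ τ, ‖(((i:ℝ), (j:ℝ)) : ℝ × ℝ) - kap h w‖ ≤ 1 →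
        ‖(((i':ℝ), (j':ℝ)) : ℝ × ℝ) - kap h w‖ ≤ 1 → dist (P (y i j) (y i' j') τ) w < ε / 4 := by
      intro i j i' j' τ h1 h2
      have a1 := hvert w hw i j h1
      have a2 := hvert w hw i' j' h2
      have a3 := dist_triangle_right (y i j) (y i' j') w
      have a4 := (hP _ _ (hyD i j) (hyD i' j')).2.2.2.2 (by linarith) τ
      have a5 := dist_triangle (P (y i j) (y i' j') τ) (y i j) w
      linarith
    obtain ⟨i, j, τ, hτ, h1 | h1⟩ := grid_cases hg
    · rw [h1, (he2 i j τ hτ).1]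
      apply key <;> rw [h1] <;> simp [Prod.norm_def, abs_le] <;>
        (constructor <;> linarith [hτ.1, hτ.2])
    · rw [h1, (he2 i j τ hτ).2]
      apply key <;> rw [h1] <;> simp [Prod.norm_def, abs_le] <;>
        (constructor <;> linarith [hτ.1, hτ.2])
  let ρ : ℂ → ℂ := fun w => if kap h w ∈ Grid then e (kap h w) else nd w
  have hρ : ∀ w, infDist w D < 2 * δ → dist (ρ w) w < ε / 4 := by
    intro w hw
    by_cases hg : kap h w ∈ Grid
    · simp only [ρ, if_pos hg]; exact hest w hw hg
    · simp only [ρ, if_neg hg]; rw [dist_comm, ← hnd]; linarith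
  have hρD : ∀ w, ρ w ∈ D := by
    intro w
    by_cases hg : kap h w ∈ Grid
    · simp only [ρ, if_pos hg]; exact heD _ hg
    · simp only [ρ, if_neg hg]; exact hndD w
  let f : ℝ × ℝ → ℂ := fun z => if z ∈ bd then u z else ρ (G z)
  have hfG : ∀ z, infDist (G z) D < 2 * δ → dist (f z) (G z) < ε / 4 := by
    intro z hz
    by_cases hb : z ∈ bd
    · simp only [f, if_pos hb]; rw [hG2 hb, hHu z hb, dist_self]; positivity
    · simp only [f, if_neg hb]; exact hρ _ hz
  refine ⟨f, ?_, ?_, ?_⟩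
  · intro z hz
    by_cases hb : z ∈ bd
    · simp only [f, if_pos hb]; exact huD z hb
    · simp only [f, if_neg hb]; exact hρD _
  · intro z hb
    simp only [f, if_pos hb]
  · intro z hz
    have hcG : Tendsto G (𝓝[Sq] z) (𝓝 (G z)) := hG1 z hz
    have hci : Tendsto (fun z => infDist (G z) D) (𝓝[Sq] z) (𝓝 (infDist (G z) D)) :=
      ((continuous_infDist_pt D).tendsto _).comp hcG
    by_cases hlt : infDist (G z) D < 2 * δ
    · filter_upwards [hci.eventually (gt_mem_nhds hlt),
        hcG.eventually (ball_mem_nhds _ (show 0 < ε / 4 by positivity))] with z' h1 h2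
      have a1 := hfG z hlt
      have a2 := hfG z' h1
      have a3 := dist_triangle4 (f z') (G z') (G z) (f z)
      rw [dist_comm (G z) (f z)] at a3
      linarith
    · have hδlt : δ < infDist (G z) D := by linarith
      have hnb : ∀ z', δ < infDist (G z') D → z' ∉ bd := by
        intro z' h1 hb
        have : G z' ∈ D := by rw [hG2 hb, hHu z' hb]; exact huD z' hb
        rw [infDist_zero_of_mem this] at h1
        linarith
      have hform : ∀ z' ∈ Sq, δ < infDist (G z') D → kap h (G z') ∈ Grid ∧ f z' = e (kap h (G z')) := by
        intro z' hz' h1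
        have hg : kap h (G z') ∈ Grid := by
          rcases hG3 z' hz' with h | h
          · linarith
          · exact h
        refine ⟨hg, ?_⟩
        simp only [f, if_neg (hnb z' h1), ρ, if_pos hg]
      obtain ⟨hgz, hfz⟩ := hform z hz hδlt
      have hev := hci.eventually (lt_mem_nhds hδlt)
      have htk : Tendsto (fun z => kap h (G z)) (𝓝[Sq] z) (𝓝[Grid] (kap h (G z))) := by
        apply tendsto_nhdsWithin_of_tendsto_nhds_of_eventually_within
        · exact ((kap_cont h).tendsto _).comp hcG
        · filter_upwards [hev, self_mem_nhdsWithin] with z' h1 h2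
          exact (hform z' h2 h1).1
      have hte := (he1 _ hgz).tendsto.comp htk
      filter_upwards [hev, self_mem_nhdsWithin, hte.eventually (ball_mem_nhds _ hε)] with z' h1 h2 h3
      rw [(hform z' h2 h1).2, hfz]
      exact h3

end THelly


open Set Filter Topology Metric

namespace THelly

lemma Osc.uniform {f : ℝ × ℝ → ℂ} {δ : ℝ} (h : Osc f Sq δ) :
    ∃ r > 0, ∀ z ∈ Sq, ∀ z' ∈ Sq, dist z' z < r → dist (f z') (f z) < 2 * δ := by
  have h1 : ∀ z : Sq, ∃ r > 0, ∀ z' ∈ Sq, dist z' z.1 < r → dist (f z') (f z.1) < δ := by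
    rintro ⟨z, hz⟩
    have := h z hz
    rw [eventually_nhdsWithin_iff, Metric.eventually_nhds_iff] at this
    obtain ⟨r, hr, h2⟩ := this
    exact ⟨r, hr, fun z' hz' hd => h2 hd hz'⟩
  choose r hr hf using h1
  obtain ⟨s, hs, hcov⟩ := lebesgue_number_lemma_of_metric Sq_compact (c := fun z : Sq => ball z.1 (r z))
    (fun z => isOpen_ball) (fun z hz => mem_iUnion.2 ⟨⟨z, hz⟩, mem_ball_self (hr _)⟩)
  refine ⟨s, hs, fun z hz z' hz' hd => ?_⟩
  obtain ⟨i, hi⟩ := hcov z hz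
  have a1 := hf i z hz (hi (mem_ball_self hs))
  have a2 := hf i z' hz' (hi hd)
  have a3 := dist_triangle_right (f z') (f z) (f i.1)
  linarith

lemma floor_of_Ioo {i : ℤ} {s : ℝ} (h0 : 0 ≤ s) (h1 : s < 1) : ⌊(i:ℝ) + s⌋ = i ∧ Int.fract ((i:ℝ) + s) = s := by
  have : ⌊(i:ℝ) + s⌋ = i := Int.floor_eq_iff.2 ⟨by linarith, by linarith⟩
  refine ⟨this, ?_⟩
  have h := Int.floor_add_fract ((i:ℝ) + s)
  rw [this] at h
  linarith

lemma fract_mem (q : ℝ × ℝ) : (Int.fract q.1, Int.fract q.2) ∈ Sq :=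
  ⟨⟨Int.fract_nonneg _, (Int.fract_lt_one _).le⟩, ⟨Int.fract_nonneg _, (Int.fract_lt_one _).le⟩⟩

lemma bd_grid {i j : ℤ} {p : ℝ × ℝ} (hp : p ∈ bd) : ((i:ℝ) + p.1, (j:ℝ) + p.2) ∈ Grid := by
  rcases hp.2 with h | h | h | h
  · left; simp [h]
  · left; simp only [h]; exact_mod_cast Int.fract_intCast (R := ℝ) (i + 1)
  · right; simp [h]
  · right; simp only [h]; exact_mod_cast Int.fract_intCast (R := ℝ) (j + 1)

lemma glue_cells {e : ℝ × ℝ → ℂ} {F : ℤ → ℤ → ℝ × ℝ → ℂ} {ε : ℝ}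
    (h1 : ∀ i j, ∀ p ∈ bd, F i j p = e ((i:ℝ) + p.1, (j:ℝ) + p.2)) (h2 : ∀ i j, Osc (F i j) Sq ε) :
    ∃ f : ℝ × ℝ → ℂ, (∀ i j : ℤ, ∀ p ∈ Sq, f ((i:ℝ) + p.1, (j:ℝ) + p.2) = F i j p) ∧ Osc f univ ε := by
  let f : ℝ × ℝ → ℂ := fun q => F ⌊q.1⌋ ⌊q.2⌋ (Int.fract q.1, Int.fract q.2)
  have hfe : ∀ q ∈ Grid, f q = e q := by
    intro q hq
    have hb : (Int.fract q.1, Int.fract q.2) ∈ bd := by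
      refine ⟨fract_mem q, ?_⟩
      rcases hq with h | h
      · left; exact h
      · right; right; left; exact h
    simp only [f]
    rw [h1 _ _ _ hb]
    simp only [Int.floor_add_fract]
  have hf : ∀ i j : ℤ, ∀ p ∈ Sq, f ((i:ℝ) + p.1, (j:ℝ) + p.2) = F i j p := by
    intro i j p hp
    by_cases hb : p ∈ bd
    · rw [hfe _ (bd_grid hb), h1 i j p hb]
    · have n1 : p.1 ≠ 1 := fun h => hb ⟨hp, Or.inr (Or.inl h)⟩
      have n2 : p.2 ≠ 1 := fun h => hb ⟨hp, Or.inr (Or.inr (Or.inr h))⟩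
      obtain ⟨a1, a2⟩ := floor_of_Ioo (i := i) hp.1.1 (lt_of_le_of_ne hp.1.2 n1)
      obtain ⟨b1, b2⟩ := floor_of_Ioo (i := j) hp.2.1 (lt_of_le_of_ne hp.2.2 n2)
      simp only [f]
      rw [a1, a2, b1, b2]
  refine ⟨f, hf, fun z _ => ?_⟩
  rw [nhdsWithin_univ]
  have hB : (Block (fcell z)).Finite := by
    refine ((finite_Icc (⌊z.1⌋ - 1) (⌊z.1⌋ + 1)).prod (finite_Icc (⌊z.2⌋ - 1) (⌊z.2⌋ + 1))).subset ?_
    rintro ⟨a, b⟩ ⟨h1, h2⟩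
    simp only [fcell] at h1 h2
    rw [abs_le] at h1 h2
    refine ⟨⟨?_, ?_⟩, ?_, ?_⟩ <;> simp only <;> omega
  have hcell : ∀ c : ℤ × ℤ, ∀ᶠ z' : ℝ × ℝ in 𝓝 z, (z'.1 - (c.1:ℝ), z'.2 - (c.2:ℝ)) ∈ Sq → dist (f z') (f z) < ε := by
    intro c
    have hcont : Continuous (fun z' : ℝ × ℝ => (z'.1 - (c.1:ℝ), z'.2 - (c.2:ℝ))) := by fun_prop
    by_cases hz : (z.1 - (c.1:ℝ), z.2 - (c.2:ℝ)) ∈ Sq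
    · have ho := h2 c.1 c.2 _ hz
      rw [eventually_nhdsWithin_iff] at ho
      have := (hcont.tendsto z).eventually ho
      filter_upwards [this] with z' h3 h4
      have e1 := hf c.1 c.2 _ h4
      have e2 := hf c.1 c.2 _ hz
      simp only [add_sub_cancel, Prod.mk.eta] at e1 e2
      rw [e1, e2]
      exact h3 h4
    · have : ∀ᶠ z' : ℝ × ℝ in 𝓝 z, (z'.1 - (c.1:ℝ), z'.2 - (c.2:ℝ)) ∉ Sq :=
        (hcont.tendsto z).eventually (Sq_compact.isClosed.isOpen_compl.mem_nhds hz)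
      filter_upwards [this] with z' h3 h4 using absurd h4 h3
  have hall := (eventually_all_finite hB).2 (fun c _ => hcell c)
  filter_upwards [hall, ball_mem_nhds z one_pos] with z' h3 h4
  refine h3 (fcell z') ?_ ?_
  · rw [mem_ball, dist_eq_norm] at h4
    exact ⟨floor_adj ((norm_fst_le _).trans_lt h4), floor_adj ((norm_snd_le _).trans_lt h4)⟩
  · exact fract_mem z'

lemma cl_dist (x y : ℝ) : |cl x - cl y| ≤ |x - y| := by
  unfold cl
  refine (abs_max_sub_max_le_max _ _ _ _).trans ?_
  rw [sub_self, abs_zero]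
  refine max_le (abs_nonneg _) ((abs_min_sub_min_le_max _ _ _ _).trans ?_)
  rw [sub_self, abs_zero]
  exact max_le (abs_nonneg _) le_rfl

lemma fill_step {D : Set ℂ} (hD : NS D) (uD : ULC D) (cD : IsPreconnected D)
    {u : ℝ × ℝ → ℂ} (hu : ContinuousOn u bd) {ε : ℝ} (hε : 0 < ε) :
    ∃ δ > 0, ∀ f : ℝ × ℝ → ℂ, ((∀ z ∈ Sq, f z ∈ D) ∧ EqOn f u bd ∧ Osc f Sq δ) → ∀ δ' > 0,
      ∃ f' : ℝ × ℝ → ℂ, ((∀ z ∈ Sq, f' z ∈ D) ∧ EqOn f' u bd ∧ Osc f' Sq δ') ∧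
        ∀ z ∈ Sq, dist (f z) (f' z) ≤ ε := by
  classical
  obtain ⟨δ₁, hδ₁, hedge⟩ := edge_paths hD.cpt uD cD (ε := ε / 4) (by positivity)
  obtain ⟨δ, hδ0, hδ1, hδ2⟩ : ∃ δ > 0, δ ≤ δ₁ / 2 ∧ δ ≤ ε / 16 :=
    ⟨min (δ₁ / 2) (ε / 16), lt_min (by positivity) (by positivity), min_le_left _ _, min_le_right _ _⟩
  refine ⟨δ, hδ0, ?_⟩
  rintro f ⟨hfD, hfu, hosc⟩ δ' hδ'
  obtain ⟨r, hr, hunif⟩ := hosc.uniform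
  obtain ⟨n, hn⟩ := exists_nat_one_div_lt hr
  let N : ℤ := n + 1
  have hN0 : (0:ℝ) < N := by simp only [N]; push_cast; positivity
  have hNr : 1 / (N:ℝ) < r := by simp only [N]; push_cast; exact hn
  let c : ℝ × ℝ → ℝ × ℝ := fun q => (cl (q.1 / N), cl (q.2 / N))
  have hc_cont : Continuous c :=
    (cl_cont.comp (by fun_prop)).prodMk (cl_cont.comp (by fun_prop))
  have hcS : ∀ q, c q ∈ Sq := fun q => ⟨cl_mem _, cl_mem _⟩
  have hclose : ∀ q q', dist q' q ≤ 1 → dist (f (c q')) (f (c q)) < 2 * δ := by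
    intro q q' hq
    apply hunif _ (hcS q) _ (hcS q')
    refine lt_of_le_of_lt ?_ hNr
    rw [Prod.dist_eq, max_le_iff, Real.dist_eq, Real.dist_eq] at hq
    rw [Prod.dist_eq, max_le_iff, Real.dist_eq, Real.dist_eq]
    constructor
    · refine (cl_dist _ _).trans ?_
      rw [← sub_div, abs_div, abs_of_pos hN0]
      gcongr
      exact hq.1
    · refine (cl_dist _ _).trans ?_
      rw [← sub_div, abs_div, abs_of_pos hN0]
      gcongr
      exact hq.2
  have hP : ∀ x y, ∃ γ : ℝ → ℂ, x ∈ D → y ∈ D → Continuous γ ∧ γ 0 = x ∧ γ 1 = y ∧ (∀ t, γ t ∈ D) ∧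
      (dist x y < δ₁ → ∀ t, dist (γ t) x ≤ ε / 4) := by
    intro x y
    by_cases hx : x ∈ D
    · by_cases hy : y ∈ D
      · obtain ⟨γ, h⟩ := hedge x hx y hy
        exact ⟨γ, fun _ _ => h⟩
      · exact ⟨fun _ => 0, fun _ h => absurd h hy⟩
    · exact ⟨fun _ => 0, fun h => absurd h hx⟩
  choose P hP using hP
  let E : (ℝ → ℝ × ℝ) → ℝ → ℂ := fun a => if ∀ τ, c (a τ) ∈ bd then fun τ => u (c (a τ)) else
    P (f (c (a 0))) (f (c (a 1)))
  have hE : ∀ a : ℝ → ℝ × ℝ, Continuous a → (∀ τ ∈ Icc (0:ℝ) 1, dist (a τ) (a 0) ≤ 1) →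
      ContinuousOn (E a) (Icc 0 1) ∧ E a 0 = f (c (a 0)) ∧ E a 1 = f (c (a 1)) ∧
      (∀ τ ∈ Icc (0:ℝ) 1, E a τ ∈ D ∧ dist (E a τ) (f (c (a 0))) ≤ ε / 4) := by
    intro a ha had
    by_cases hb : ∀ τ, c (a τ) ∈ bd
    · simp only [E, if_pos hb]
      refine ⟨(hu.comp_continuous (hc_cont.comp ha) hb).continuousOn, (hfu (hb 0)).symm,
        (hfu (hb 1)).symm, fun τ hτ => ?_⟩
      rw [← hfu (hb τ)]
      exact ⟨hfD _ (hcS _), ((hclose _ _ (had τ hτ)).le.trans (by linarith))⟩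
    · simp only [E, if_neg hb]
      obtain ⟨p1, p2, p3, p4, p5⟩ := hP _ _ (hfD _ (hcS (a 0))) (hfD _ (hcS (a 1)))
      refine ⟨p1.continuousOn, p2, p3, fun τ hτ => ⟨p4 τ, p5 ?_ τ⟩⟩
      have := hclose _ _ (had 1 ⟨zero_le_one, le_rfl⟩)
      rw [dist_comm]
      linarith
  let aH : ℤ → ℤ → ℝ → ℝ × ℝ := fun i j τ => ((i:ℝ) + τ, (j:ℝ))
  let aW : ℤ → ℤ → ℝ → ℝ × ℝ := fun i j τ => ((i:ℝ), (j:ℝ) + τ)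
  have hH : ∀ i j, _ := fun i j => hE (aH i j) (by simp only [aH]; fun_prop) (by
    intro τ hτ
    simp only [aH, Prod.dist_eq, Real.dist_eq]
    rw [sub_self, abs_zero, max_le_iff]
    refine ⟨?_, zero_le_one⟩
    rw [abs_le]; constructor <;> linarith [hτ.1, hτ.2])
  have hW : ∀ i j, _ := fun i j => hE (aW i j) (by simp only [aW]; fun_prop) (by
    intro τ hτ
    simp only [aW, Prod.dist_eq, Real.dist_eq]
    rw [sub_self, abs_zero, max_le_iff]
    refine ⟨zero_le_one, ?_⟩
    rw [abs_le]; constructor <;> linarith [hτ.1, hτ.2])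
  let y : ℤ → ℤ → ℂ := fun i j => f (c ((i:ℝ), (j:ℝ)))
  have H0 : ∀ i j, E (aH i j) 0 = y i j := by
    intro i j; rw [(hH i j).2.1]; simp only [y, aH, add_zero]
  have H1 : ∀ i j, E (aH i j) 1 = y (i+1) j := by
    intro i j; rw [(hH i j).2.2.1]; simp only [y, aH]; push_cast; rfl
  have W0 : ∀ i j, E (aW i j) 0 = y i j := by
    intro i j; rw [(hW i j).2.1]; simp only [y, aW, add_zero]
  have W1 : ∀ i j, E (aW i j) 1 = y i (j+1) := by
    intro i j; rw [(hW i j).2.2.1]; simp only [y, aW]; push_cast; rfl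
  have HD : ∀ i j, ∀ τ ∈ Icc (0:ℝ) 1, E (aH i j) τ ∈ D ∧ dist (E (aH i j) τ) (y i j) ≤ ε / 4 := by
    intro i j τ hτ
    have := (hH i j).2.2.2 τ hτ
    simpa only [y, aH, add_zero] using this
  have WD : ∀ i j, ∀ τ ∈ Icc (0:ℝ) 1, E (aW i j) τ ∈ D ∧ dist (E (aW i j) τ) (y i j) ≤ ε / 4 := by
    intro i j τ hτ
    have := (hW i j).2.2.2 τ hτ
    simpa only [y, aW, add_zero] using this
  obtain ⟨e, he1, he2⟩ := grid_glue y (fun i j => E (aH i j)) (fun i j => E (aW i j))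
    (fun i j => (hH i j).1) (fun i j => (hW i j).1) H0 H1 W0 W1
  -- cells
  let U : ℤ → ℤ → ℝ × ℝ → ℂ := fun i j p => e ((i:ℝ) + p.1, (j:ℝ) + p.2)
  have hUc : ∀ i j, ContinuousOn (U i j) bd := by
    intro i j
    exact he1.comp (t := Grid) (by fun_prop) (fun p hp => bd_grid hp)
  have hUb : ∀ i j, ∀ p ∈ bd, U i j p ∈ D ∧ dist (U i j p) (y i j) ≤ ε / 2 := by
    intro i j p hp
    have hy1 : dist (y (i+1) j) (y i j) < 2 * δ := by
      apply hclose
      simp [Prod.dist_eq, Real.dist_eq]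
    have hy2 : dist (y i (j+1)) (y i j) < 2 * δ := by
      apply hclose
      simp [Prod.dist_eq, Real.dist_eq]
    obtain ⟨⟨hp1, hp2⟩, hh⟩ := hp
    rcases hh with h | h | h | h
    · have : U i j p = E (aW i j) p.2 := by
        simp only [U, h, add_zero]; exact (he2 i j _ hp2).2
      rw [this]
      exact ⟨(WD i j _ hp2).1, (WD i j _ hp2).2.trans (by linarith)⟩
    · have : U i j p = E (aW (i+1) j) p.2 := by
        have := (he2 (i+1) j _ hp2).2
        push_cast at this
        simp only [U, h]; exact this
      rw [this]
      refine ⟨(WD _ j _ hp2).1, ?_⟩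
      have := (WD (i+1) j _ hp2).2
      have := dist_triangle (E (aW (i+1) j) p.2) (y (i+1) j) (y i j)
      linarith
    · have : U i j p = E (aH i j) p.1 := by
        simp only [U, h, add_zero]; exact (he2 i j _ hp1).1
      rw [this]
      exact ⟨(HD i j _ hp1).1, (HD i j _ hp1).2.trans (by linarith)⟩
    · have : U i j p = E (aH i (j+1)) p.1 := by
        have := (he2 i (j+1) _ hp1).1
        push_cast at this
        simp only [U, h]; exact this
      rw [this]
      refine ⟨(HD i _ _ hp1).1, ?_⟩
      have := (HD i (j+1) _ hp1).2
      have := dist_triangle (E (aH i (j+1)) p.1) (y i (j+1)) (y i j)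
      linarith
  have hF : ∀ i j, ∃ F : ℝ × ℝ → ℂ, (∀ z ∈ Sq, F z ∈ D ∧ dist (F z) (y i j) ≤ ε / 2) ∧
      EqOn F (U i j) bd ∧ Osc F Sq δ' := by
    intro i j
    obtain ⟨l1, l2, l3, l4⟩ := fill_loop (hUc i j)
    obtain ⟨F, k1, k2, k3⟩ := approx_fill l1 l2 l3 l4 (hUc i j)
      (fun z hz => subset_fill _ ⟨z, hz, rfl⟩) hδ'
    refine ⟨F, fun z hz => ⟨?_, ?_⟩, k2, k3⟩
    · refine fill_subset_of_NS hD ?_ (k1 z hz)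
      rintro _ ⟨p, hp, rfl⟩; exact (hUb i j p hp).1
    · refine fill_subset_ball (c := y i j) (r := ε / 2) ?_ (k1 z hz)
      rintro _ ⟨p, hp, rfl⟩; exact (hUb i j p hp).2
  choose F hF1 hF2 hF3 using hF
  obtain ⟨g, hg1, hg2⟩ := glue_cells (e := e) (F := F) (fun i j p hp => hF2 i j hp) hF3
  have hgD : ∀ q, g q ∈ D ∧ dist (f (c q)) (g q) ≤ ε := by
    intro q
    have h1 := hg1 ⌊q.1⌋ ⌊q.2⌋ _ (fract_mem q)
    simp only [Int.floor_add_fract, Prod.mk.eta] at h1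
    have h2 := hF1 ⌊q.1⌋ ⌊q.2⌋ _ (fract_mem q)
    rw [← h1] at h2
    refine ⟨h2.1, ?_⟩
    have h3 : dist (f (c q)) (y ⌊q.1⌋ ⌊q.2⌋) < 2 * δ := by
      apply hclose
      simp only [Prod.dist_eq, Real.dist_eq, max_le_iff, Int.self_sub_floor, Int.abs_fract]
      exact ⟨(Int.fract_lt_one _).le, (Int.fract_lt_one _).le⟩
    have h4 := dist_triangle_right (f (c q)) (g q) (y ⌊q.1⌋ ⌊q.2⌋)
    linarith [h2.2]
  have hgW : ∀ i : ℤ, (cl ((i:ℝ) / N) = 0 ∨ cl ((i:ℝ) / N) = 1) → ∀ t, g ((i:ℝ), t) = u (c ((i:ℝ), t)) := by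
    intro i hi t
    have hτ : Int.fract t ∈ Icc (0:ℝ) 1 := ⟨Int.fract_nonneg _, (Int.fract_lt_one _).le⟩
    have hpb : ((0:ℝ), Int.fract t) ∈ bd := ⟨⟨⟨le_rfl, zero_le_one⟩, hτ⟩, Or.inl rfl⟩
    have h1 := hg1 i ⌊t⌋ _ hpb.1
    rw [hF2 _ _ hpb] at h1
    have h2 := (he2 i ⌊t⌋ _ hτ).2
    simp only [U, add_zero, Int.floor_add_fract] at h1 h2
    rw [h1, h2]
    have hb : ∀ τ, c (aW i ⌊t⌋ τ) ∈ bd := by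
      intro τ
      refine ⟨hcS _, ?_⟩
      rcases hi with h | h
      · left; exact h
      · right; left; exact h
    simp only [E, if_pos hb]
    simp only [aW, Int.floor_add_fract]
  have hgH : ∀ i : ℤ, (cl ((i:ℝ) / N) = 0 ∨ cl ((i:ℝ) / N) = 1) → ∀ t, g (t, (i:ℝ)) = u (c (t, (i:ℝ))) := by
    intro i hi t
    have hτ : Int.fract t ∈ Icc (0:ℝ) 1 := ⟨Int.fract_nonneg _, (Int.fract_lt_one _).le⟩
    have hpb : (Int.fract t, (0:ℝ)) ∈ bd :=
      ⟨⟨hτ, ⟨le_rfl, zero_le_one⟩⟩, Or.inr (Or.inr (Or.inl rfl))⟩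
    have h1 := hg1 ⌊t⌋ i _ hpb.1
    rw [hF2 _ _ hpb] at h1
    have h2 := (he2 ⌊t⌋ i _ hτ).1
    simp only [U, add_zero, Int.floor_add_fract] at h1 h2
    rw [h1, h2]
    have hb : ∀ τ, c (aH ⌊t⌋ i τ) ∈ bd := by
      intro τ
      refine ⟨hcS _, ?_⟩
      rcases hi with h | h
      · right; right; left; exact h
      · right; right; right; exact h
    simp only [E, if_pos hb]
    simp only [aH, Int.floor_add_fract]
  let m : ℝ × ℝ → ℝ × ℝ := fun z => ((N:ℝ) * z.1, (N:ℝ) * z.2)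
  have hm : Continuous m := by simp only [m]; fun_prop
  have hcm : ∀ z ∈ Sq, c (m z) = z := by
    intro z hz
    simp only [c, m]
    rw [mul_div_cancel_left₀ _ hN0.ne', mul_div_cancel_left₀ _ hN0.ne', cl_eq hz.1, cl_eq hz.2]
  have hN1 : cl ((N:ℝ) / N) = 1 := by rw [div_self hN0.ne']; exact cl_of_ge le_rfl
  have hN2 : cl (((0:ℤ):ℝ) / N) = 0 := by simp [cl_of_le]
  refine ⟨fun z => g (m z), ⟨fun z _ => (hgD _).1, ?_, ?_⟩, ?_⟩
  · intro z hz
    beta_reduce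
    rw [← hcm z hz.1]
    have : g (m z) = u (c (m z)) := by
      rcases hz.2 with h | h | h | h
      · have := hgW 0 (Or.inl hN2) (N * z.2)
        have e : m z = (((0:ℤ):ℝ), N * z.2) := by simp [m, h]
        rw [e]; exact this
      · have := hgW N (Or.inr hN1) (N * z.2)
        have e : m z = (((N:ℤ):ℝ), N * z.2) := by simp [m, h]
        rw [e]; exact this
      · have := hgH 0 (Or.inl hN2) (N * z.1)
        have e : m z = (N * z.1, ((0:ℤ):ℝ)) := by simp [m, h]
        rw [e]; exact this
      · have := hgH N (Or.inr hN1) (N * z.1)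
        have e : m z = (N * z.1, ((N:ℤ):ℝ)) := by simp [m, h]
        rw [e]; exact this
    rw [hcm z hz.1] at this ⊢
    exact this
  · intro z hz
    have := hg2 (m z) (mem_univ _)
    rw [nhdsWithin_univ] at this
    exact (hm.tendsto z).eventually this |>.filter_mono nhdsWithin_le_nhds
  · intro z hz
    have := (hgD (m z)).2
    rwa [hcm z hz] at this

/-- Filling theorem. -/
theorem filling {u : ℝ × ℝ → ℂ} (hu : ContinuousOn u bd) :
    ∃ f : ℝ × ℝ → ℂ, ContinuousOn f Sq ∧ EqOn f u bd ∧ ∀ z ∈ Sq, f z ∈ fill (u '' bd) := by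
  obtain ⟨l1, l2, l3, l4⟩ := fill_loop hu
  set D := fill (u '' bd) with hDdef
  obtain ⟨s, -, h2, h3⟩ := iterate_states
    (fun δ (f : ℝ × ℝ → ℂ) => (∀ z ∈ Sq, f z ∈ D) ∧ EqOn f u bd ∧ Osc f Sq δ)
    (fun δ δ' s h hs => ⟨hs.1, hs.2.1, hs.2.2.mono h⟩)
    (fun ε f f' => ∀ z ∈ Sq, dist (f z) (f' z) ≤ ε)
    (fun ε hε => fill_step l1 l2 l3 hu hε)
    (fun _ => True)
    (fun δ hδ => by
      obtain ⟨f, h⟩ := approx_fill l1 l2 l3 l4 hu (fun z hz => subset_fill _ ⟨z, hz, rfl⟩) hδ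
      exact ⟨f, h, trivial⟩)
    (fun n => 1 / 2 / 2 ^ n) (fun n => 1 / 2 ^ n) (fun n => by positivity) (fun n => by positivity)
  obtain ⟨g, g1, g2, -⟩ := osc_limit one_pos h3 (fun n => (h2 n).2.2)
  refine ⟨g, g1, ?_, ?_⟩
  · intro z hz
    refine tendsto_nhds_unique (g2 z (bd_subset hz)) ?_
    refine tendsto_const_nhds.congr fun n => ((h2 n).2.1 hz).symm
  · intro z hz
    exact l1.cpt.isClosed.mem_of_tendsto (g2 z hz) (Eventually.of_forall fun n => (h2 n).1 z hz)

end THelly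


open Set Filter Topology Metric

namespace THelly

/-- left inverse of the boundary path -/
noncomputable def binv (p : ℝ × ℝ) : ℝ := by
  classical
  exact if p.2 = 0 then p.1 else if p.1 = 1 then 1 + p.2 else if p.2 = 1 then 3 - p.1 else 4 - p.2

lemma binv_bpath {t : ℝ} (h0 : 0 ≤ t) (h4 : t < 4) : binv (bpath t) = t := by
  unfold binv
  rcases le_or_gt t 1 with h | h
  · have e : bpath t = (t, 0) := by
      simp only [bpath]
      rw [min_eq_left (by linarith), cl_eq ⟨h0, h⟩, cl_of_le ((min_le_left _ _).trans (by linarith))]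
    rw [e]; simp
  rcases le_or_gt t 2 with h2 | h2
  · have e : bpath t = (1, t - 1) := by
      simp only [bpath]
      rw [cl_of_ge (le_min (by linarith) (by linarith)), min_eq_left (by linarith),
        cl_eq ⟨by linarith, by linarith⟩]
    rw [e]; simp only; rw [if_neg (by linarith), if_pos trivial]; ring
  rcases le_or_gt t 3 with h3 | h3
  · have e : bpath t = (3 - t, 1) := by
      simp only [bpath]
      rw [min_eq_right (by linarith), cl_eq ⟨by linarith, by linarith⟩,
        cl_of_ge (le_min (by linarith) (by linarith))]
    rw [e]; simp only; rw [if_neg one_ne_zero, if_neg (by linarith), if_pos trivial]; ring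
  · have e : bpath t = (0, 4 - t) := by
      simp only [bpath]
      rw [cl_of_le ((min_le_right _ _).trans (by linarith)), min_eq_right (by linarith),
        cl_eq ⟨by linarith, by linarith⟩]
    rw [e]; simp only; rw [if_neg (by linarith), if_neg zero_ne_one, if_neg (by linarith)]; ring

lemma bpath_four : bpath 4 = bpath 0 := by
  simp only [bpath]
  rw [cl_of_le ((min_le_right _ _).trans (by norm_num)), cl_of_le ((min_le_right _ _).trans (by norm_num)),
    cl_of_le ((min_le_left _ _).trans (by norm_num)), cl_of_le ((min_le_left _ _).trans (by norm_num))]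

lemma continuousOn_image_of_comp' {α β : Type*} [TopologicalSpace α] [TopologicalSpace β] [T2Space β]
    {s : Set α} (hs : IsCompact s) {γ : α → β} {l : β → ℂ} (hγ : ContinuousOn γ s)
    (h : ContinuousOn (fun t => l (γ t)) s) : ContinuousOn l (γ '' s) := by
  rw [continuousOn_iff_isClosed]
  intro t ht
  refine ⟨γ '' (s ∩ (fun x => l (γ x)) ⁻¹' t), ?_, ?_⟩
  · rw [continuousOn_iff_isClosed] at h
    obtain ⟨u, hu, hu2⟩ := h t ht
    have : s ∩ (fun x => l (γ x)) ⁻¹' t = s ∩ u := by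
      rw [inter_comm, hu2, inter_comm]
    rw [this]
    exact ((hs.inter_right hu).image_of_continuousOn (hγ.mono inter_subset_left)).isClosed
  · ext w
    constructor
    · rintro ⟨h1, x, hx, rfl⟩
      exact ⟨⟨x, ⟨hx, h1⟩, rfl⟩, ⟨x, hx, rfl⟩⟩
    · rintro ⟨⟨x, ⟨hx, hx2⟩, rfl⟩, h2⟩
      exact ⟨hx2, h2⟩

/-- Filling theorem for loops parametrized by `[0,4]`. -/
lemma filling_loop {γ : ℝ → ℂ} (hγ : Continuous γ) (h : γ 0 = γ 4) :
    ∃ f : ℝ × ℝ → ℂ, ContinuousOn f Sq ∧ (∀ t ∈ Icc (0:ℝ) 4, f (bpath t) = γ t) ∧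
      ∀ z ∈ Sq, f z ∈ fill (γ '' Icc 0 4) := by
  have hb : ∀ t ∈ Icc (0:ℝ) 4, γ (binv (bpath t)) = γ t := by
    rintro t ⟨h0, h4⟩
    rcases h4.lt_or_eq with h4 | rfl
    · rw [binv_bpath h0 h4]
    · rw [bpath_four, binv_bpath le_rfl (by norm_num), h]
  have hu : ContinuousOn (fun p => γ (binv p)) bd := by
    rw [← bpath_image]
    apply continuousOn_image_of_comp' isCompact_Icc bpath_cont.continuousOn
    exact hγ.continuousOn.congr hb
  obtain ⟨f, h1, h2, h3⟩ := filling hu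
  have him : (fun p => γ (binv p)) '' bd = γ '' Icc 0 4 := by
    rw [← bpath_image, image_image]
    exact image_congr hb
  rw [him] at h3
  exact ⟨f, h1, fun t ht => by rw [h2 (bpath_mem t)]; exact hb t ht, h3⟩

lemma simply_connected_of_fill {X : Set ℂ} (hp : IsPathConnected X)
    (hf : ∀ γ : ℝ → ℂ, Continuous γ → (∀ t, γ t ∈ X) → ∀ a b, fill (γ '' Icc a b) ⊆ X) :
    IsSimplyConnected X := by
  rw [isSimplyConnected_iff_exists_homotopy_refl_forall_mem]
  refine ⟨hp, fun x p hpX => ?_⟩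
  let γ : ℝ → ℂ := fun t => p.extend (4 - t)
  have hγ : Continuous γ := p.continuous_extend.comp (by fun_prop)
  have hγX : ∀ t, γ t ∈ X := fun t => by
    have : γ t ∈ range p := by rw [← p.extend_range]; exact mem_range_self _
    obtain ⟨s, hs⟩ := this
    rw [← hs]; exact hpX s
  have hγ3 : ∀ t, t ≤ 3 → γ t = x := fun t ht => p.extend_of_one_le (by linarith)
  have hγ4 : γ 4 = x := by simp [γ]
  obtain ⟨f, f1, f2, f3⟩ := filling_loop hγ (by rw [hγ3 0 (by norm_num), hγ4])
  have hbp : ∀ q ∈ bd, ∃ t ∈ Icc (0:ℝ) 4, bpath t = q := by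
    intro q hq; rw [← bpath_image] at hq; exact hq
  have hleft : ∀ s ∈ Icc (0:ℝ) 1, f (0, s) = p.extend s := by
    intro s hs
    have := f2 (4 - s) ⟨by linarith [hs.2], by linarith [hs.1]⟩
    have e : bpath (4 - s) = (0, s) := by
      simp only [bpath]
      rw [cl_of_le ((min_le_right _ _).trans (by linarith [hs.2])), min_eq_right (by linarith [hs.2]),
        cl_eq ⟨by linarith [hs.1], by linarith [hs.2]⟩]
      ext <;> simp
    rw [e] at this
    rw [this]; simp [γ]
  have hrest : ∀ q ∈ bd, (q.1 ≠ 0 ∨ q.2 = 0 ∨ q.2 = 1) → f q = x := by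
    intro q hq hh
    by_cases h0 : q.1 = 0
    · have : q = (0, q.2) := by ext <;> simp [h0]
      rw [this, hleft _ hq.1.2]
      rcases hh with h | h | h
      · exact absurd h0 h
      · rw [h]; simp
      · rw [h]; simp
    · obtain ⟨t, ht, rfl⟩ := hbp q hq
      rw [f2 t ht]
      apply hγ3
      by_contra hlt
      push Not at hlt
      apply h0
      simp only [bpath]
      exact cl_of_le ((min_le_right _ _).trans (by linarith))
  have hmem : ∀ s t : unitInterval, ((s:ℝ), (t:ℝ)) ∈ Sq := fun s t => ⟨s.2, t.2⟩
  have hcont : Continuous (fun q : unitInterval × unitInterval => f ((q.1:ℝ), (q.2:ℝ))) :=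
    f1.comp_continuous (by fun_prop) (fun q => hmem _ _)
  refine ⟨⟨⟨⟨fun q => f ((q.1:ℝ), (q.2:ℝ)), hcont⟩, ?_, ?_⟩, ?_⟩, ?_⟩
  · intro t
    simp only [Icc.coe_zero]
    rw [hleft _ t.2]
    simp
  · intro t
    simp only [Icc.coe_one]
    exact hrest _ ⟨⟨⟨zero_le_one, le_rfl⟩, t.2⟩, Or.inr (Or.inl rfl)⟩ (Or.inl one_ne_zero)
  · intro s t ht
    simp only [mem_insert_iff, mem_singleton_iff] at ht
    rcases ht with rfl | rfl
    · simp only [Icc.coe_zero, ContinuousMap.coe_mk, Path.coe_toContinuousMap, Path.source]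
      exact hrest _ ⟨⟨s.2, ⟨le_rfl, zero_le_one⟩⟩, Or.inr (Or.inr (Or.inl rfl))⟩ (Or.inr (Or.inl rfl))
    · simp only [Icc.coe_one, ContinuousMap.coe_mk, Path.coe_toContinuousMap, Path.target]
      exact hrest _ ⟨⟨s.2, ⟨zero_le_one, le_rfl⟩⟩, Or.inr (Or.inr (Or.inr rfl))⟩ (Or.inr (Or.inr rfl))
  · intro q
    exact hf γ hγ hγX 0 4 (f3 _ (hmem _ _))

lemma get_path {X : Set ℂ} (hX : IsPathConnected X) {p q : ℂ} (hp : p ∈ X) (hq : q ∈ X) :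
    ∃ γ : ℝ → ℂ, Continuous γ ∧ (∀ t, t ≤ 0 → γ t = p) ∧ (∀ t, 1 ≤ t → γ t = q) ∧ ∀ t, γ t ∈ X := by
  have hj := hX.joinedIn p hp q hq
  refine ⟨hj.somePath.extend, hj.somePath.continuous_extend, fun t ht => hj.somePath.extend_of_le_zero ht,
    fun t ht => hj.somePath.extend_of_one_le ht, fun t => ?_⟩
  have : hj.somePath.extend t ∈ range hj.somePath := by
    rw [← hj.somePath.extend_range]; exact mem_range_self _
  obtain ⟨s, hs⟩ := this
  rw [← hs]; exact hj.somePath_mem s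

lemma two_paths {X : Set ℂ} (hX : IsSimplyConnected X) {α β : ℝ → ℂ} (hα : Continuous α)
    (hβ : Continuous β) (hαX : ∀ t, α t ∈ X) (hβX : ∀ t, β t ∈ X) (h1 : α 1 = β 1) :
    ∃ K, NS K ∧ ULC K ∧ K ⊆ X ∧ α '' Icc 0 1 ⊆ K ∧ β '' Icc 0 1 ⊆ K := by
  let l : ℝ → ℂ := fun t => if t ≤ 1 then α t else β (2 - t)
  have hl : Continuous l := by
    apply Continuous.if_le hα (hβ.comp (by fun_prop)) continuous_id continuous_const
    intro t ht
    have : t = 1 := ht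
    subst this
    rw [h1]; norm_num
  have hlX : ∀ t, l t ∈ X := by
    intro t; simp only [l]; split_ifs
    · exact hαX _
    · exact hβX _
  have hc : IsCompact (l '' Icc 0 2) := isCompact_Icc.image hl
  refine ⟨fill (l '' Icc 0 2), fill_NS hc, ULC_fill hc (ULC_path hl 0 2), fill_path_subset hX hl hlX 0 2, ?_, ?_⟩
  · rintro _ ⟨t, ht, rfl⟩
    apply subset_fill
    refine ⟨t, ⟨ht.1, by linarith [ht.2]⟩, ?_⟩
    simp only [l, if_pos ht.2]
  · rintro _ ⟨t, ht, rfl⟩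
    apply subset_fill
    refine ⟨2 - t, ⟨by linarith [ht.2], by linarith [ht.1]⟩, ?_⟩
    rcases ht.2.lt_or_eq with h | h
    · simp only [l]; rw [if_neg (by linarith)]; congr 1; ring
    · subst h; simp only [l]; rw [if_pos (by norm_num), ← h1]; norm_num

lemma comp_compact {F : Set ℂ} (hF : IsCompact F) (a : ℂ) : IsCompact (connectedComponentIn F a) := by
  refine hF.of_isClosed_subset ?_ (connectedComponentIn_subset _ _)
  by_cases ha : a ∈ F
  · apply isClosed_of_closure_subset
    apply isPreconnected_connectedComponentIn.closure.subset_connectedComponentIn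
      (subset_closure (mem_connectedComponentIn ha))
    exact closure_minimal (connectedComponentIn_subset _ _) hF.isClosed
  · rw [connectedComponentIn_eq_empty ha]; exact isClosed_empty

lemma tri_joined {X₀ X₁ X₂ : Set ℂ} (h₀ : IsSimplyConnected X₀) (h₁ : IsSimplyConnected X₁)
    (h₂ : IsSimplyConnected X₂) (h₀₁ : IsPathConnected (X₀ ∩ X₁)) (h₁₂ : IsPathConnected (X₁ ∩ X₂))
    (h₀₂ : IsPathConnected (X₀ ∩ X₂)) {p q : ℂ} (hp : p ∈ X₀ ∩ X₁ ∩ X₂) (hq : q ∈ X₀ ∩ X₁ ∩ X₂) :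
    JoinedIn (X₀ ∩ X₁ ∩ X₂) p q := by
  obtain ⟨⟨hp0, hp1⟩, hp2⟩ := hp
  obtain ⟨⟨hq0, hq1⟩, hq2⟩ := hq
  obtain ⟨α, a1, a2, a3, a4⟩ := get_path h₀₁ ⟨hp0, hp1⟩ ⟨hq0, hq1⟩
  obtain ⟨β, b1, b2, b3, b4⟩ := get_path h₁₂ ⟨hp1, hp2⟩ ⟨hq1, hq2⟩
  obtain ⟨γ, c1, c2, c3, c4⟩ := get_path h₀₂ ⟨hp0, hp2⟩ ⟨hq0, hq2⟩
  obtain ⟨K₀, n0, u0, s0, i0, j0⟩ := two_paths h₀ a1 c1 (fun t => (a4 t).1) (fun t => (c4 t).1)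
    (by rw [a3 1 le_rfl, c3 1 le_rfl])
  obtain ⟨K₁, n1, u1, s1, i1, j1⟩ := two_paths h₁ a1 b1 (fun t => (a4 t).2) (fun t => (b4 t).1)
    (by rw [a3 1 le_rfl, b3 1 le_rfl])
  obtain ⟨K₂, n2, u2, s2, i2, j2⟩ := two_paths h₂ b1 c1 (fun t => (b4 t).2) (fun t => (c4 t).2)
    (by rw [b3 1 le_rfl, c3 1 le_rfl])
  have m0 : (0:ℝ) ∈ Icc (0:ℝ) 1 := ⟨le_rfl, zero_le_one⟩
  have m1 : (1:ℝ) ∈ Icc (0:ℝ) 1 := ⟨zero_le_one, le_rfl⟩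
  have key : q ∈ connectedComponentIn (K₀ ∩ K₁ ∩ K₂) p :=
    same_component n0 n1 n2 (isPreconnected_Icc.image _ a1.continuousOn)
      (isPreconnected_Icc.image _ b1.continuousOn) (isPreconnected_Icc.image _ c1.continuousOn)
      (subset_inter i0 i1) (subset_inter j1 i2) (subset_inter j0 j2)
      ⟨0, m0, a2 0 le_rfl⟩ ⟨0, m0, b2 0 le_rfl⟩ ⟨0, m0, c2 0 le_rfl⟩
      ⟨1, m1, a3 1 le_rfl⟩ ⟨1, m1, b3 1 le_rfl⟩ ⟨1, m1, c3 1 le_rfl⟩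
  have hpK : p ∈ K₀ ∩ K₁ ∩ K₂ := by
    by_contra h
    rw [connectedComponentIn_eq_empty h] at key
    exact key
  set T := connectedComponentIn (K₀ ∩ K₁ ∩ K₂) p with hT
  have hTp : IsPreconnected T := isPreconnected_connectedComponentIn
  have hTs : T ⊆ K₀ ∩ K₁ ∩ K₂ := connectedComponentIn_subset _ _
  have hpT : p ∈ T := mem_connectedComponentIn hpK
  set C := connectedComponentIn (K₀ ∩ K₁) p with hC
  have hCc : IsCompact C := comp_compact (n0.cpt.inter n1.cpt) p
  have hCu : ULC C := ULC_component n0 n1 u0 u1 p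
  have hTC : T ⊆ C := hTp.subset_connectedComponentIn hpT (hTs.trans inter_subset_left)
  have hCs : C ⊆ K₀ ∩ K₁ := connectedComponentIn_subset _ _
  have hK0 : fill C ⊆ K₀ := fill_subset_of_NS n0 (hCs.trans inter_subset_left)
  have hK1 : fill C ⊆ K₁ := fill_subset_of_NS n1 (hCs.trans inter_subset_right)
  have nK := fill_NS hCc
  have uK := ULC_fill hCc hCu
  have hTM : T ⊆ fill C ∩ K₂ := fun x hx => ⟨subset_fill _ (hTC hx), (hTs hx).2⟩
  have hMc := comp_compact (nK.cpt.inter n2.cpt) p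
  have hMu := ULC_component nK n2 uK u2 p
  obtain ⟨g, g1, g2, g3, g4, -⟩ := exists_path hMc hMu
    (hTp.subset_connectedComponentIn hpT hTM) hTp hpT key one_pos
  refine JoinedIn.ofLine (f := g) g1.continuousOn g2 g3 ?_
  rintro _ ⟨t, _, rfl⟩
  have := connectedComponentIn_subset _ _ (g4 t)
  exact ⟨⟨s0 (hK0 this.1), s1 (hK1 this.1)⟩, s2 this.2⟩

lemma tri_simply {X₀ X₁ X₂ : Set ℂ} (h₀ : IsSimplyConnected X₀) (h₁ : IsSimplyConnected X₁)
    (h₂ : IsSimplyConnected X₂) (h₀₁ : IsPathConnected (X₀ ∩ X₁)) (h₁₂ : IsPathConnected (X₁ ∩ X₂))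
    (h₀₂ : IsPathConnected (X₀ ∩ X₂)) (hne : (X₀ ∩ X₁ ∩ X₂).Nonempty) :
    IsSimplyConnected (X₀ ∩ X₁ ∩ X₂) := by
  obtain ⟨p, hp⟩ := hne
  apply simply_connected_of_fill
  · exact ⟨p, hp, fun {q} hq => tri_joined h₀ h₁ h₂ h₀₁ h₁₂ h₀₂ hp hq⟩
  · intro γ hγ h a b
    exact subset_inter (subset_inter (fill_path_subset h₀ hγ (fun t => (h t).1.1) a b)
      (fill_path_subset h₁ hγ (fun t => (h t).1.2) a b)) (fill_path_subset h₂ hγ (fun t => (h t).2) a b)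

end THelly


open Set Filter Topology Metric

namespace THelly

/-- sixth root of unity -/
noncomputable def zt : ℂ := Complex.exp ((Real.pi / 3 : ℝ) * Complex.I)

lemma zt_ne : zt ≠ 0 := Complex.exp_ne_zero _

lemma zt_inv : zt⁻¹ = Complex.exp (-((Real.pi / 3 : ℝ) * Complex.I)) := (Complex.exp_neg _).symm

lemma zt_six : zt ^ 6 = 1 := by
  unfold zt
  rw [← Complex.exp_nat_mul, ← Complex.exp_two_pi_mul_I]
  congr 1
  push_cast
  ring

lemma zt_re : zt.re = 1 / 2 := by
  unfold zt
  rw [Complex.exp_ofReal_mul_I_re, Real.cos_pi_div_three]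

lemma zt_inv_re : (zt⁻¹).re = 1 / 2 := by
  have : zt⁻¹ = Complex.exp ((-(Real.pi / 3) : ℝ) * Complex.I) := by
    rw [zt_inv]; congr 1; push_cast; ring
  rw [this, Complex.exp_ofReal_mul_I_re, Real.cos_neg, Real.cos_pi_div_three]

lemma sector_re (x y : ℝ) : (((x:ℂ) + zt ^ 2 * y) / zt).re = (x + y) / 2 := by
  have : ((x:ℂ) + zt ^ 2 * y) / zt = x * zt⁻¹ + y * zt := by
    have := zt_ne
    field_simp
  rw [this, Complex.add_re, Complex.re_ofReal_mul, Complex.re_ofReal_mul, zt_re, zt_inv_re]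
  ring

lemma sector_zero {x y : ℝ} (hx : 0 ≤ x) (hy : 0 ≤ y) (h : (x:ℂ) + zt ^ 2 * y = 0) : x = 0 ∧ y = 0 := by
  have := sector_re x y
  rw [h, zero_div, Complex.zero_re] at this
  constructor <;> linarith

lemma arc {M : ℝ → ℂ} {x y : ℝ → ℝ} {k : ℂ} {a b : ℝ} (hab : a ≤ b) (hM : ContinuousOn M (Icc a b))
    (hx : ContinuousOn x (Icc a b)) (hy : ContinuousOn y (Icc a b)) (hx0 : ∀ t ∈ Icc a b, 0 ≤ x t)
    (hy0 : ∀ t ∈ Icc a b, 0 ≤ y t) (he : ∀ t ∈ Icc a b, Complex.exp (M t) = k * ((x t : ℂ) + zt ^ 2 * y t))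
    (ya : y a = 0) (xb : x b = 0) :
    M b - M a = Real.log (y b) - Real.log (x a) + (2 * Real.pi / 3 : ℝ) * Complex.I := by
  let q : ℝ → ℂ := fun t => ((x t : ℂ) + zt ^ 2 * y t) / zt
  have ha : a ∈ Icc a b := ⟨le_rfl, hab⟩
  have hb : b ∈ Icc a b := ⟨hab, le_rfl⟩
  have hpos : ∀ t ∈ Icc a b, 0 < (q t).re := by
    intro t ht
    simp only [q]
    rw [sector_re]
    by_contra hle
    have h1 := hx0 t ht
    have h2 := hy0 t ht
    have h3 : x t = 0 := by linarith
    have h4 : y t = 0 := by linarith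
    have := he t ht
    rw [h3, h4] at this
    simp at this
  have hq : ContinuousOn q (Icc a b) := by
    simp only [q]
    refine ContinuousOn.div_const (ContinuousOn.add ?_ (ContinuousOn.mul continuousOn_const ?_)) _
    · exact Complex.continuous_ofReal.comp_continuousOn hx
    · exact Complex.continuous_ofReal.comp_continuousOn hy
  have hne : ∀ t ∈ Icc a b, q t ≠ 0 := fun t ht h => by
    have := hpos t ht; rw [h] at this; simp at this
  have hlog : ContinuousOn (fun t => Complex.log (q t)) (Icc a b) :=
    hq.clog (fun t ht => Or.inl (hpos t ht))
  have hMq : ∀ t ∈ Icc a b, Complex.exp (M t) = k * zt * q t := by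
    intro t ht
    rw [he t ht]
    simp only [q]
    have := zt_ne
    field_simp
  have key := log_unique (isPreconnected_Icc (a := a) (b := b)) (f := fun t => M t - M a)
    (g := fun t => Complex.log (q t) - Complex.log (q a)) (hM.sub continuousOn_const)
    (hlog.sub continuousOn_const) (by
      intro t ht
      beta_reduce
      rw [Complex.exp_sub, Complex.exp_sub, Complex.exp_log (hne t ht), Complex.exp_log (hne a ha),
        hMq t ht, hMq a ha]
      have h1 : k * zt * q a ≠ 0 := by rw [← hMq a ha]; exact Complex.exp_ne_zero _
      have h2 := hne a ha
      rw [div_eq_div_iff h1 h2]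
      ring) ha hb (by simp)
  have hpi := Real.pi_pos
  have la : Complex.log (q a) = Real.log (x a) - (Real.pi / 3 : ℝ) * Complex.I := by
    have hxa : 0 < x a := by
      have := hpos a ha
      simp only [q] at this
      rw [sector_re, ya] at this
      linarith
    have : q a = Complex.exp (Real.log (x a) - (Real.pi / 3 : ℝ) * Complex.I) := by
      rw [sub_eq_add_neg, Complex.exp_add, ← zt_inv, ← Complex.ofReal_exp, Real.exp_log hxa]
      simp only [q]
      rw [ya]
      simp [div_eq_mul_inv]
    rw [this, Complex.log_exp]
    · simp only [Complex.sub_im, Complex.ofReal_im, Complex.re_ofReal_mul, Complex.im_ofReal_mul, Complex.I_im]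
      linarith
    · simp only [Complex.sub_im, Complex.ofReal_im, Complex.re_ofReal_mul, Complex.im_ofReal_mul, Complex.I_im]
      linarith
  have lb : Complex.log (q b) = Real.log (y b) + (Real.pi / 3 : ℝ) * Complex.I := by
    have hyb : 0 < y b := by
      have := hpos b hb
      simp only [q] at this
      rw [sector_re, xb] at this
      linarith
    have : q b = Complex.exp (Real.log (y b) + (Real.pi / 3 : ℝ) * Complex.I) := by
      rw [Complex.exp_add, ← Complex.ofReal_exp, Real.exp_log hyb]
      simp only [q]
      rw [xb]
      have := zt_ne
      change _ = (y b : ℂ) * zt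
      field_simp
      simp
    rw [this, Complex.log_exp]
    · simp only [Complex.add_im, Complex.ofReal_im, Complex.re_ofReal_mul, Complex.im_ofReal_mul, Complex.I_im]
      linarith
    · simp only [Complex.add_im, Complex.ofReal_im, Complex.re_ofReal_mul, Complex.im_ofReal_mul, Complex.I_im]
      linarith
  beta_reduce at key
  rw [key, la, lb]
  push_cast
  ring

lemma four_nonempty {A₀ A₁ A₂ A₃ : Set ℂ} (c₀ : IsClosed A₀) (c₁ : IsClosed A₁) (c₂ : IsClosed A₂)
    (h₀ : IsSimplyConnected A₀) (h₁ : IsSimplyConnected A₁) (h₂ : IsSimplyConnected A₂)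
    (h₃ : IsSimplyConnected A₃)
    (h₀₁ : IsPathConnected (A₀ ∩ A₁)) (h₁₂ : IsPathConnected (A₁ ∩ A₂)) (h₀₂ : IsPathConnected (A₀ ∩ A₂))
    (h₀₃ : IsPathConnected (A₀ ∩ A₃)) (h₁₃ : IsPathConnected (A₁ ∩ A₃)) (h₂₃ : IsPathConnected (A₂ ∩ A₃))
    (t₀ : (A₁ ∩ A₂ ∩ A₃).Nonempty) (t₁ : (A₀ ∩ A₂ ∩ A₃).Nonempty) (t₂ : (A₀ ∩ A₁ ∩ A₃).Nonempty)
    (t₃ : (A₀ ∩ A₁ ∩ A₂).Nonempty) : (A₀ ∩ A₁ ∩ A₂ ∩ A₃).Nonempty := by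
  classical
  by_contra hcon
  rw [not_nonempty_iff_eq_empty] at hcon
  have hemp : ∀ w, w ∈ A₀ → w ∈ A₁ → w ∈ A₂ → w ∈ A₃ → False := by
    intro w a b c d
    have : w ∈ A₀ ∩ A₁ ∩ A₂ ∩ A₃ := ⟨⟨⟨a, b⟩, c⟩, d⟩
    rw [hcon] at this; exact this
  obtain ⟨p₀, ⟨p01, p02⟩, p03⟩ := t₀
  obtain ⟨p₁, ⟨p10, p12⟩, p13⟩ := t₁
  obtain ⟨p₂, ⟨p20, p21⟩, p23⟩ := t₂
  obtain ⟨p₃, ⟨p30, p31⟩, p32⟩ := t₃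
  obtain ⟨α, a1, a2, a3, a4⟩ := get_path h₂₃ ⟨p02, p03⟩ ⟨p12, p13⟩
  obtain ⟨β, b1, b2, b3, b4⟩ := get_path h₀₃ ⟨p10, p13⟩ ⟨p20, p23⟩
  obtain ⟨γ, g1, g2, g3, g4⟩ := get_path h₁₃ ⟨p21, p23⟩ ⟨p01, p03⟩
  let Λ : ℝ → ℂ := fun t => α t + (β (t - 1) - p₁) + (γ (t - 2) - p₂)
  have hΛ : Continuous Λ := by simp only [Λ]; fun_prop
  have hΛ1 : ∀ t, t ≤ 1 → Λ t = α t := by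
    intro t ht; simp only [Λ]; rw [b2 _ (by linarith), g2 _ (by linarith)]; ring
  have hΛ2 : ∀ t, 1 ≤ t → t ≤ 2 → Λ t = β (t - 1) := by
    intro t ht ht2; simp only [Λ]; rw [a3 _ (by linarith), g2 _ (by linarith)]; ring
  have hΛ3 : ∀ t, 2 ≤ t → Λ t = γ (t - 2) := by
    intro t ht; simp only [Λ]; rw [a3 _ (by linarith), b3 _ (by linarith)]; ring
  have hΛA1 : ∀ t, t ≤ 1 → Λ t ∈ A₂ ∩ A₃ := fun t ht => by rw [hΛ1 t ht]; exact a4 t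
  have hΛA2 : ∀ t, 1 ≤ t → t ≤ 2 → Λ t ∈ A₀ ∩ A₃ := fun t ht h => by rw [hΛ2 t ht h]; exact b4 _
  have hΛA3 : ∀ t, 2 ≤ t → Λ t ∈ A₁ ∩ A₃ := fun t ht => by rw [hΛ3 t ht]; exact g4 _
  have e0 : Λ 0 = p₀ := by rw [hΛ1 0 zero_le_one, a2 0 le_rfl]
  have e1 : Λ 1 = p₁ := by rw [hΛ1 1 le_rfl, a3 1 le_rfl]
  have e2 : Λ 2 = p₂ := by rw [hΛ3 2 le_rfl, g2 _ (by norm_num)]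
  have e4 : Λ 4 = p₀ := by rw [hΛ3 4 (by norm_num), g3 _ (by norm_num)]
  have hΛ3' : ∀ t, Λ t ∈ A₃ := by
    intro t
    rcases le_total t 1 with h | h
    · exact (hΛA1 t h).2
    rcases le_total t 2 with h' | h'
    · exact (hΛA2 t h h').2
    · exact (hΛA3 t h').2
  set D := fill (Λ '' Icc 0 4) with hD
  have hD3 : D ⊆ A₃ := fill_path_subset h₃ hΛ hΛ3' 0 4
  have hDU : ∀ z ∈ D, z ∈ A₀ ∨ z ∈ A₁ ∨ z ∈ A₂ := by
    intro z hz
    by_contra hno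
    push Not at hno
    obtain ⟨n0, n1, n2⟩ := hno
    have hne : p₃ - z ≠ 0 := by
      intro h; rw [sub_eq_zero] at h; exact n0 (h ▸ p30)
    obtain ⟨l₀, l01, l02, l03⟩ := path_log h₀ n0 p30 (Complex.exp_log hne)
    obtain ⟨l₁, l11, l12, l13⟩ := path_log h₁ n1 p31 (Complex.exp_log hne)
    obtain ⟨l₂, l21, l22, l23⟩ := path_log h₂ n2 p32 (Complex.exp_log hne)
    have agree : ∀ {X Y : Set ℂ} {l l' : ℂ → ℂ}, IsPathConnected (X ∩ Y) → p₃ ∈ X ∩ Y → l p₃ = l' p₃ →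
        (∀ w ∈ X, Complex.exp (l w) = w - z) → (∀ w ∈ Y, Complex.exp (l' w) = w - z) →
        (∀ γ : ℝ → ℂ, Continuous γ → (∀ t, γ t ∈ X) → Continuous (fun t => l (γ t))) →
        (∀ γ : ℝ → ℂ, Continuous γ → (∀ t, γ t ∈ Y) → Continuous (fun t => l' (γ t))) →
        ∀ w ∈ X ∩ Y, l w = l' w := by
      intro X Y l l' hXY hp hl hX hY cX cY w hw
      obtain ⟨σ, s1, s2, s3, s4⟩ := get_path hXY hp hw
      have := log_unique (S := univ) isPreconnected_univ (f := fun t => l (σ t)) (g := fun t => l' (σ t))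
        (cX σ s1 fun t => (s4 t).1).continuousOn (cY σ s1 fun t => (s4 t).2).continuousOn
        (fun t _ => by beta_reduce; rw [hX _ (s4 t).1, hY _ (s4 t).2]) (mem_univ 0) (mem_univ 1)
        (by beta_reduce; rw [s2 0 le_rfl, hl])
      beta_reduce at this
      rwa [s3 1 le_rfl] at this
    have ag01 := agree h₀₁ ⟨p30, p31⟩ (l01.trans l11.symm) l02 l12 l03 l13
    have ag02 := agree h₀₂ ⟨p30, p32⟩ (l01.trans l21.symm) l02 l22 l03 l23
    have ag12 := agree h₁₂ ⟨p31, p32⟩ (l11.trans l21.symm) l12 l22 l13 l23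
    let l : ℂ → ℂ := fun w => if w ∈ A₀ then l₀ w else if w ∈ A₁ then l₁ w else l₂ w
    have q0 : ∀ w ∈ A₀, l w = l₀ w := fun w hw => by simp only [l, if_pos hw]
    have q1 : ∀ w ∈ A₁, l w = l₁ w := fun w hw => by
      by_cases h : w ∈ A₀
      · rw [q0 w h]; exact ag01 w ⟨h, hw⟩
      · simp only [l, if_neg h, if_pos hw]
    have q2 : ∀ w ∈ A₂, l w = l₂ w := fun w hw => by
      by_cases h : w ∈ A₀
      · rw [q0 w h]; exact ag02 w ⟨h, hw⟩
      · by_cases h' : w ∈ A₁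
        · rw [q1 w h']; exact ag12 w ⟨h', hw⟩
        · simp only [l, if_neg h, if_neg h']
    have hlc : Continuous (fun t => l (Λ t)) := by
      have hform : (fun t => l (Λ t)) = fun t => l₂ (α t) + (l₀ (β (t - 1)) - l p₁) +
          (l₁ (γ (t - 2)) - l p₂) := by
        funext t
        rcases le_total t 1 with h | h
        · rw [b2 _ (by linarith : t - 1 ≤ 0), g2 _ (by linarith : t - 2 ≤ 0), hΛ1 t h, q0 _ p10, q1 _ p21,
            q2 _ (a4 t).1]
          ring
        rcases le_total t 2 with h' | h'
        · rw [a3 _ h, g2 _ (by linarith : t - 2 ≤ 0), hΛ2 t h h', q2 _ p12, q1 _ p21, q0 _ (b4 _).1]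
          ring
        · rw [a3 _ h, b3 _ (by linarith : 1 ≤ t - 1), hΛ3 t h', q2 _ p12, q0 _ p20, q1 _ (g4 _).1]
          ring
      rw [hform]
      have k1 := l23 α a1 (fun t => (a4 t).1)
      have k2 := l03 (fun t => β (t - 1)) (by fun_prop) (fun t => (b4 _).1)
      have k3 := l13 (fun t => γ (t - 2)) (by fun_prop) (fun t => (g4 _).1)
      exact (k1.add (k2.sub continuous_const)).add (k3.sub continuous_const)
    refine not_mem_fill_of_log (l := l) (isCompact_Icc.image hΛ)
      (continuousOn_image_of_comp isCompact_Icc hΛ.continuousOn hlc.continuousOn) ?_ hz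
    rintro _ ⟨t, _, rfl⟩
    rcases le_total t 1 with h | h
    · rw [q2 _ (hΛA1 t h).1, l22 _ (hΛA1 t h).1]
    rcases le_total t 2 with h' | h'
    · rw [q0 _ (hΛA2 t h h').1, l02 _ (hΛA2 t h h').1]
    · rw [q1 _ (hΛA3 t h').1, l12 _ (hΛA3 t h').1]
  obtain ⟨Φ, f1, f2, f3⟩ := filling_loop hΛ (by rw [e0, e4])
  let d₀ : ℂ → ℝ := fun w => infDist w A₀
  let d₁ : ℂ → ℝ := fun w => infDist w A₁
  let d₂ : ℂ → ℝ := fun w => infDist w A₂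
  have D0 : Continuous d₀ := continuous_infDist_pt _
  have D1 : Continuous d₁ := continuous_infDist_pt _
  have D2 : Continuous d₂ := continuous_infDist_pt _
  have N0 : ∀ w, 0 ≤ d₀ w := fun w => infDist_nonneg
  have N1 : ∀ w, 0 ≤ d₁ w := fun w => infDist_nonneg
  have N2 : ∀ w, 0 ≤ d₂ w := fun w => infDist_nonneg
  have Z0 : ∀ w ∈ A₀, d₀ w = 0 := fun w hw => infDist_zero_of_mem hw
  have Z1 : ∀ w ∈ A₁, d₁ w = 0 := fun w hw => infDist_zero_of_mem hw
  have Z2 : ∀ w ∈ A₂, d₂ w = 0 := fun w hw => infDist_zero_of_mem hw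
  have M0 : ∀ w, d₀ w = 0 → w ∈ A₀ := fun w hw => (c₀.mem_iff_infDist_zero ⟨_, p10⟩).2 hw
  have M1 : ∀ w, d₁ w = 0 → w ∈ A₁ := fun w hw => (c₁.mem_iff_infDist_zero ⟨_, p01⟩).2 hw
  have M2 : ∀ w, d₂ w = 0 → w ∈ A₂ := fun w hw => (c₂.mem_iff_infDist_zero ⟨_, p02⟩).2 hw
  let G : ℂ → ℂ := fun w => d₀ w + zt ^ 2 * d₁ w + zt ^ 4 * d₂ w
  have hG : Continuous G := by simp only [G]; fun_prop
  have G2 : ∀ w ∈ A₂, G w = 1 * ((d₀ w : ℂ) + zt ^ 2 * d₁ w) := by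
    intro w hw; simp only [G]; rw [Z2 w hw]; simp
  have G0 : ∀ w ∈ A₀, G w = zt ^ 2 * ((d₁ w : ℂ) + zt ^ 2 * d₂ w) := by
    intro w hw; simp only [G]; rw [Z0 w hw]; simp; ring
  have G1 : ∀ w ∈ A₁, G w = zt ^ 4 * ((d₂ w : ℂ) + zt ^ 2 * d₀ w) := by
    intro w hw; simp only [G]; rw [Z1 w hw, Complex.ofReal_zero]
    have := zt_six
    linear_combination (-(d₀ w : ℂ)) * this
  have hGne : ∀ w ∈ D, G w ≠ 0 := by
    intro w hw h0
    have h3 := hD3 hw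
    rcases hDU w hw with h | h | h
    · rw [G0 w h] at h0
      have := sector_zero (N1 w) (N2 w) ((mul_eq_zero.1 h0).resolve_left (pow_ne_zero _ zt_ne))
      exact hemp w h (M1 w this.1) (M2 w this.2) h3
    · rw [G1 w h] at h0
      have := sector_zero (N2 w) (N0 w) ((mul_eq_zero.1 h0).resolve_left (pow_ne_zero _ zt_ne))
      exact hemp w (M0 w this.2) h (M2 w this.1) h3
    · rw [G2 w h] at h0
      have := sector_zero (N0 w) (N1 w) ((mul_eq_zero.1 h0).resolve_left one_ne_zero)
      exact hemp w (M0 w this.1) (M1 w this.2) h h3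
  let r : ℝ × ℝ → ℝ × ℝ := fun q => (cl q.1, cl q.2)
  have hr : Continuous r := (cl_cont.comp continuous_fst).prodMk (cl_cont.comp continuous_snd)
  have hrS : ∀ q, r q ∈ Sq := fun q => ⟨cl_mem _, cl_mem _⟩
  haveI : SimplyConnectedSpace (ℝ × ℝ) := inferInstance
  obtain ⟨L, L1, L2⟩ := exists_log' (fun q => G (Φ (r q)))
    (hG.comp (f1.comp_continuous hr hrS)) (fun q => hGne _ (f3 _ (hrS q)))
  let M : ℝ → ℂ := fun t => L (bpath t)
  have hM : Continuous M := L1.comp bpath_cont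
  have hMe : ∀ t ∈ Icc (0:ℝ) 4, Complex.exp (M t) = G (Λ t) := by
    intro t ht
    simp only [M]
    have hrb : r (bpath t) = bpath t := by
      have := (bpath_mem t).1
      simp only [r]; rw [cl_eq this.1, cl_eq this.2]
    rw [L2, hrb, f2 t ht]
  have hM04 : M 4 = M 0 := by simp only [M]; rw [bpath_four]
  have r1 := arc (M := M) (x := fun t => d₀ (Λ t)) (y := fun t => d₁ (Λ t)) (k := 1) (a := 0) (b := 1)
    zero_le_one hM.continuousOn (D0.comp hΛ).continuousOn (D1.comp hΛ).continuousOn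
    (fun t _ => N0 _) (fun t _ => N1 _)
    (fun t ht => by rw [hMe t ⟨ht.1, by linarith [ht.2]⟩, G2 _ (hΛA1 t ht.2).1])
    (by beta_reduce; rw [e0]; exact Z1 _ p01) (by beta_reduce; rw [e1]; exact Z0 _ p10)
  have r2 := arc (M := M) (x := fun t => d₁ (Λ t)) (y := fun t => d₂ (Λ t)) (k := zt ^ 2) (a := 1) (b := 2)
    one_le_two hM.continuousOn (D1.comp hΛ).continuousOn (D2.comp hΛ).continuousOn
    (fun t _ => N1 _) (fun t _ => N2 _)
    (fun t ht => by rw [hMe t ⟨by linarith [ht.1], by linarith [ht.2]⟩, G0 _ (hΛA2 t ht.1 ht.2).1])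
    (by beta_reduce; rw [e1]; exact Z2 _ p12) (by beta_reduce; rw [e2]; exact Z1 _ p21)
  have r3 := arc (M := M) (x := fun t => d₂ (Λ t)) (y := fun t => d₀ (Λ t)) (k := zt ^ 4) (a := 2) (b := 4)
    (by norm_num) hM.continuousOn (D2.comp hΛ).continuousOn (D0.comp hΛ).continuousOn
    (fun t _ => N2 _) (fun t _ => N0 _)
    (fun t ht => by rw [hMe t ⟨by linarith [ht.1], by linarith [ht.2]⟩, G1 _ (hΛA3 t ht.1).1])
    (by beta_reduce; rw [e2]; exact Z0 _ p20) (by beta_reduce; rw [e4]; exact Z2 _ p02)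
  beta_reduce at r1 r2 r3
  rw [e0, e1] at r1
  rw [e1, e2] at r2
  rw [e2, e4, hM04] at r3
  have htot : (3 : ℂ) * ((2 * Real.pi / 3 : ℝ) * Complex.I) = 0 := by
    linear_combination -r1 - r2 - r3
  simp [Real.pi_ne_zero, Complex.I_ne_zero] at htot

theorem helly_complex (m : ℕ) (hm : 2 ≤ m) (S : Fin (m + 1) → Set ℂ)
    (hcpt : ∀ i, IsCompact (S i)) (hsc : ∀ i, IsSimplyConnected (S i))
    (h3 : ∀ i j k : Fin (m + 1), i ≠ j → j ≠ k → i ≠ k → (S i ∩ S j ∩ S k).Nonempty)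
    (h2 : ∀ i j : Fin (m + 1), i ≠ j → IsSimplyConnected (S i ∩ S j)) :
    IsSimplyConnected (⋂ i, S i) := by
  induction m, hm using Nat.le_induction with
  | base =>
    have : (⋂ i, S i) = S 0 ∩ S 1 ∩ S 2 := by
      ext x
      simp only [mem_iInter, mem_inter_iff]
      refine ⟨fun h => ⟨⟨h 0, h 1⟩, h 2⟩, fun h i => ?_⟩
      fin_cases i
      · exact h.1.1
      · exact h.1.2
      · exact h.2
    rw [this]
    exact tri_simply (hsc 0) (hsc 1) (hsc 2) (h2 0 1 (by decide)).isPathConnected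
      (h2 1 2 (by decide)).isPathConnected (h2 0 2 (by decide)).isPathConnected
      (h3 0 1 2 (by decide) (by decide) (by decide))
  | succ m hm ih =>
    let z := Fin.last (m + 1)
    have hz : ∀ i : Fin (m + 1), i.castSucc ≠ z := fun i => (Fin.castSucc_lt_last i).ne
    have hinj : ∀ {i j : Fin (m + 1)}, i ≠ j → i.castSucc ≠ j.castSucc :=
      fun h h' => h (Fin.castSucc_injective _ h')
    have pc : ∀ i j, i ≠ j → IsPathConnected (S i ∩ S j) := fun i j h => (h2 i j h).isPathConnected
    have key := ih (fun i => S i.castSucc ∩ S z) (fun i => (hcpt _).inter (hcpt _))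
      (fun i => h2 _ _ (hz i))
      (fun i j k hij hjk hik => by
        have hh := four_nonempty (hcpt i.castSucc).isClosed (hcpt j.castSucc).isClosed
          (hcpt k.castSucc).isClosed (hsc _) (hsc _) (hsc _) (hsc z)
          (pc _ _ (hinj hij)) (pc _ _ (hinj hjk)) (pc _ _ (hinj hik)) (pc _ _ (hz i)) (pc _ _ (hz j))
          (pc _ _ (hz k)) (h3 _ _ _ (hinj hjk) (hz k) (hz j)) (h3 _ _ _ (hinj hik) (hz k) (hz i))
          (h3 _ _ _ (hinj hij) (hz j) (hz i)) (h3 _ _ _ (hinj hij) (hinj hjk) (hinj hik))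
        obtain ⟨w, ⟨⟨a, b⟩, c⟩, d⟩ := hh
        exact ⟨w, ⟨⟨a, d⟩, ⟨b, d⟩⟩, ⟨c, d⟩⟩)
      (fun i j hij => by
        have := tri_simply (hsc i.castSucc) (hsc j.castSucc) (hsc z) (pc _ _ (hinj hij)) (pc _ _ (hz j))
          (pc _ _ (hz i)) (h3 _ _ _ (hinj hij) (hz j) (hz i))
        have e : S i.castSucc ∩ S z ∩ (S j.castSucc ∩ S z) = S i.castSucc ∩ S j.castSucc ∩ S z := by
          ext x; simp only [mem_inter_iff]; tauto
        rw [e]; exact this)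
    have e : (⋂ i, S i) = ⋂ i : Fin (m + 1), S i.castSucc ∩ S z := by
      ext x
      simp only [mem_iInter, mem_inter_iff]
      constructor
      · exact fun h i => ⟨h _, h _⟩
      · intro h i
        rcases Fin.eq_castSucc_or_eq_last i with ⟨j, rfl⟩ | rfl
        · exact (h j).1
        · exact (h 0).2
    rw [e]; exact key

end THelly

theorem topological_helly_plane
    (m : ℕ) (hm : 2 ≤ m) (S : Fin (m + 1) → Set (EuclideanSpace ℝ (Fin 2)))
    (hcpt : ∀ i, IsCompact (S i))
    (hsc : ∀ i, SimplyConnectedSpace (S i))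
    (h3 : ∀ i j k : Fin (m + 1), i ≠ j → j ≠ k → i ≠ k → (S i ∩ S j ∩ S k).Nonempty)
    (h2 : ∀ i j : Fin (m + 1), i ≠ j → SimplyConnectedSpace ↥(S i ∩ S j)) :
    (⋂ i, S i).Nonempty ∧ SimplyConnectedSpace ↥(⋂ i, S i) := by
  let e : ℂ ≃ₜ EuclideanSpace ℝ (Fin 2) := Complex.orthonormalBasisOneI.repr.toHomeomorph
  have key : IsSimplyConnected (⋂ i, e ⁻¹' (S i)) := by
    apply THelly.helly_complex m hm
    · intro i
      exact e.isCompact_preimage.2 (hcpt i)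
    · intro i
      exact e.isSimplyConnected_preimage.2 (hsc i)
    · intro i j k hij hjk hik
      rw [← Set.preimage_inter, ← Set.preimage_inter]
      exact (h3 i j k hij hjk hik).preimage e.surjective
    · intro i j hij
      rw [← Set.preimage_inter]
      exact e.isSimplyConnected_preimage.2 (h2 i j hij)
  rw [← Set.preimage_iInter, e.isSimplyConnected_preimage] at key
  exact ⟨key.isPathConnected.nonempty, key⟩
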